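/- Let P1 and P2 be n×n skew-symmetric matrix pencils such that orbᶜ(P1) covers orbᶜ(P2). Then r_0(P2) − r_0(P1) equals either 0 or 2; equivalently, nrk(P1) − nrk(P2) equals either 0 or 2. -/

import Mathlib

/-!
Basic framework: a complex `m × n` matrix pencil `A - λ B` is formalized as the
pair `(A, B)` of matrices.  We define strict equivalence, congruence,
skew-symmetry, orbits, direct sums, and the cover relations for the orbit
closure hierarchies (in the Euclidean topology).
-/

open Matrix

noncomputable section

/-- An `m × n` complex matrix pencil `A - λ B`, formalized as the pair `(A, B)`. -/
abbrev Pencil (m n : ℕ) : Type :=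
  Matrix (Fin m) (Fin n) ℂ × Matrix (Fin m) (Fin n) ℂ

namespace Pencil

/-- Strict equivalence of matrix pencils: `Q⁻¹ * A * R = C` and `Q⁻¹ * B * R = D`
for some invertible `Q`, `R`. -/
def StrictEquiv {m n : ℕ} (P Q : Pencil m n) : Prop :=
  ∃ (S : Matrix (Fin m) (Fin m) ℂ) (R : Matrix (Fin n) (Fin n) ℂ),
    IsUnit S ∧ IsUnit R ∧ S⁻¹ * P.1 * R = Q.1 ∧ S⁻¹ * P.2 * R = Q.2

/-- The strict-equivalence orbit of a pencil. -/
def orbE {m n : ℕ} (P : Pencil m n) : Set (Pencil m n) :=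
  {Q | StrictEquiv P Q}

/-- A pencil `A - λ B` is skew-symmetric if `Aᵀ = -A` and `Bᵀ = -B`. -/
def IsSkew {n : ℕ} (P : Pencil n n) : Prop :=
  P.1ᵀ = -P.1 ∧ P.2ᵀ = -P.2

/-- Congruence of (square) matrix pencils: `Sᵀ * A * S = C` and `Sᵀ * B * S = D`
for some invertible `S`. -/
def Congruent {n : ℕ} (P Q : Pencil n n) : Prop :=
  ∃ S : Matrix (Fin n) (Fin n) ℂ,
    IsUnit S ∧ Sᵀ * P.1 * S = Q.1 ∧ Sᵀ * P.2 * S = Q.2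

/-- The congruence orbit of a pencil. -/
def orbC {n : ℕ} (P : Pencil n n) : Set (Pencil n n) :=
  {Q | Congruent P Q}

/-- Direct (block-diagonal) sum of two pencils. -/
def dsum {m n p q : ℕ} (P : Pencil m n) (Q : Pencil p q) : Pencil (m + p) (n + q) :=
  ((fromBlocks P.1 0 0 Q.1).submatrix finSumFinEquiv.symm finSumFinEquiv.symm,
   (fromBlocks P.2 0 0 Q.2).submatrix finSumFinEquiv.symm finSumFinEquiv.symm)

/-- Transport a pencil along equalities of its dimensions. -/
def cast {m n m' n' : ℕ} (hm : m = m') (hn : n = n') (P : Pencil m n) : Pencil m' n' :=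
  (P.1.submatrix (finCongr hm.symm) (finCongr hn.symm),
   P.2.submatrix (finCongr hm.symm) (finCongr hn.symm))

/-- `orbE P1` covers `orbE P2` in the closure hierarchy of strict-equivalence
orbits: `P1` is not strictly equivalent to `P2`, `orbE P2 ⊆ closure (orbE P1)`,
and there is no intermediate orbit strictly between them. -/
def CoversE {m n : ℕ} (P1 P2 : Pencil m n) : Prop :=
  ¬ StrictEquiv P1 P2 ∧ orbE P2 ⊆ closure (orbE P1) ∧
    ¬ ∃ P : Pencil m n, ¬ StrictEquiv P P1 ∧ ¬ StrictEquiv P P2 ∧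
        orbE P ⊆ closure (orbE P1) ∧ orbE P2 ⊆ closure (orbE P)

/-- `orbC P1` covers `orbC P2` in the closure hierarchy of congruence orbits of
skew-symmetric pencils: `P1` is not congruent to `P2`,
`orbC P2 ⊆ closure (orbC P1)`, and there is no congruence orbit of a
skew-symmetric pencil strictly between them. -/
def CoversC {n : ℕ} (P1 P2 : Pencil n n) : Prop :=
  ¬ Congruent P1 P2 ∧ orbC P2 ⊆ closure (orbC P1) ∧
    ¬ ∃ P : Pencil n n, IsSkew P ∧ ¬ Congruent P P1 ∧ ¬ Congruent P P2 ∧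
        orbC P ⊆ closure (orbC P1) ∧ orbC P2 ⊆ closure (orbC P)

end Pencil

/-! Normal rank. -/

/-- The pencil `A - λ B` as a matrix over the field `ℂ(λ)` of rational
functions. -/
def toRatFuncMatrix {m n : ℕ} (P : Pencil m n) : Matrix (Fin m) (Fin n) (RatFunc ℂ) :=
  Matrix.of fun i j => RatFunc.C (P.1 i j) - RatFunc.X * RatFunc.C (P.2 i j)

/-- The normal rank of a pencil: the rank over `ℂ(λ)` of the matrix with
entries `A i j - λ * B i j`. -/
def nrk {m n : ℕ} (P : Pencil m n) : ℕ :=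
  (toRatFuncMatrix P).rank

namespace SkewPencil

open Filter Topology

/-! ### Degenerations of rectangular pencils and of pencils of bilinear forms -/

/-- A pencil `A - λ B` indexed by arbitrary types, as the pair `(A, B)`. -/
abbrev Pen (m n : Type) : Type := Matrix m n ℂ × Matrix m n ℂ

variable {m n m' n' p q p' q' ι κ ι' κ' τ : Type}

/-- The pencil `F (A - λ B) G`. -/
def act [Fintype m] [Fintype n] (F : Matrix p m ℂ) (G : Matrix n q ℂ) (X : Pen m n) : Pen p q :=
  (F * X.1 * G, F * X.2 * G)

/-- `Y` is a limit of pencils `F X G`, with arbitrary `F` and `G`. -/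
def KDeg [Fintype m] [Fintype n] (X : Pen m n) (Y : Pen p q) : Prop :=
  Y ∈ closure (Set.range fun FG : Matrix p m ℂ × Matrix n q ℂ => act FG.1 FG.2 X)

/-- `Q` is a limit of pencils `Sᵀ P S`, with arbitrary `S`. -/
def Deg [Fintype ι] (P : Pen ι ι) (Q : Pen κ κ) : Prop :=
  Q ∈ closure (Set.range fun S : Matrix ι κ ℂ => act Sᵀ S P)

theorem act_act [Fintype m] [Fintype n] [Fintype p] [Fintype q] (F : Matrix p m ℂ)
    (G : Matrix n q ℂ) (F' : Matrix p' p ℂ) (G' : Matrix q q' ℂ) (X : Pen m n) :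
    act F' G' (act F G X) = act (F' * F) (G * G') X := by
  simp [act, Matrix.mul_assoc]

theorem continuous_act [Fintype m] [Fintype n] (F : Matrix p m ℂ) (G : Matrix n q ℂ) :
    Continuous (act F G) := by
  unfold act; fun_prop

theorem KDeg.of_eq [Fintype m] [Fintype n] {X : Pen m n} {Y : Pen p q} (F : Matrix p m ℂ)
    (G : Matrix n q ℂ) (h : act F G X = Y) : KDeg X Y :=
  subset_closure ⟨(F, G), h⟩

theorem Deg.of_eq [Fintype ι] {P : Pen ι ι} {Q : Pen κ κ} (S : Matrix ι κ ℂ)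
    (h : act Sᵀ S P = Q) : Deg P Q :=
  subset_closure ⟨S, h⟩

theorem KDeg.of_tendsto [Fintype m] [Fintype n] {X : Pen m n} {Y : Pen p q} {α : Type}
    {l : Filter α} [l.NeBot] (F : α → Matrix p m ℂ) (G : α → Matrix n q ℂ)
    (h : Tendsto (fun a => act (F a) (G a) X) l (𝓝 Y)) : KDeg X Y :=
  mem_closure_of_tendsto h (Eventually.of_forall fun a => ⟨(F a, G a), rfl⟩)

theorem KDeg.refl [Fintype m] [Fintype n] (X : Pen m n) : KDeg X X := by
  classical exact KDeg.of_eq 1 1 (by simp [act])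

theorem Deg.refl [Fintype ι] (P : Pen ι ι) : Deg P P := by
  classical exact Deg.of_eq 1 (by simp [act])

theorem KDeg.trans [Fintype m] [Fintype n] [Fintype p] [Fintype q] {X : Pen m n} {Y : Pen p q}
    {Z : Pen p' q'} (h : KDeg X Y) (h' : KDeg Y Z) : KDeg X Z := by
  refine closure_minimal ?_ isClosed_closure h'
  rintro _ ⟨⟨F, G⟩, rfl⟩
  refine map_mem_closure (continuous_act F G) h ?_
  rintro _ ⟨⟨F', G'⟩, rfl⟩
  exact ⟨(F * F', G' * G), (act_act ..).symm⟩

theorem Deg.trans [Fintype ι] [Fintype κ] {P : Pen ι ι} {Q : Pen κ κ} {R : Pen τ τ}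
    (h : Deg P Q) (h' : Deg Q R) : Deg P R := by
  refine closure_minimal ?_ isClosed_closure h'
  rintro _ ⟨S, rfl⟩
  refine map_mem_closure (continuous_act Sᵀ S) h ?_
  rintro _ ⟨S', rfl⟩
  exact ⟨S' * S, by simp only [transpose_mul]; exact (act_act ..).symm⟩

/-- Change of basis in the pencil parameter. -/
def mob (a b c d : ℂ) (X : Pen m n) : Pen m n := (a • X.1 + b • X.2, c • X.1 + d • X.2)

theorem continuous_mob (a b c d : ℂ) : Continuous (mob a b c d : Pen m n → Pen m n) := by
  unfold mob; fun_prop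

theorem act_mob [Fintype m] [Fintype n] (a b c d : ℂ) (F : Matrix p m ℂ) (G : Matrix n q ℂ)
    (X : Pen m n) : act F G (mob a b c d X) = mob a b c d (act F G X) := by
  simp [act, mob, Matrix.mul_add, Matrix.add_mul]

theorem KDeg.mob [Fintype m] [Fintype n] {X : Pen m n} {Y : Pen p q} (h : KDeg X Y)
    (a b c d : ℂ) : KDeg (mob a b c d X) (mob a b c d Y) := by
  refine map_mem_closure (continuous_mob a b c d) h ?_
  rintro _ ⟨⟨F, G⟩, rfl⟩
  exact ⟨(F, G), act_mob ..⟩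

theorem Deg.mob [Fintype ι] {P : Pen ι ι} {Q : Pen κ κ} (h : Deg P Q)
    (a b c d : ℂ) : Deg (mob a b c d P) (mob a b c d Q) := by
  refine map_mem_closure (continuous_mob a b c d) h ?_
  rintro _ ⟨S, rfl⟩
  exact ⟨S, act_mob ..⟩

theorem mob_mob (a b c d a' b' c' d' : ℂ) (X : Pen m n) :
    mob a b c d (mob a' b' c' d' X) =
      mob (a * a' + b * c') (a * b' + b * d') (c * a' + d * c') (c * b' + d * d') X := by
  ext <;> simp [mob] <;> ring

theorem mob_id (X : Pen m n) : mob 1 0 0 1 X = X := by simp [mob]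

/-- Restriction of a pencil to a choice of rows and columns. -/
def sub (f : p → m) (g : q → n) (X : Pen m n) : Pen p q := (X.1.submatrix f g, X.2.submatrix f g)

theorem Deg.sub [Fintype ι] (P : Pen ι ι) (f : κ → ι) : Deg P (sub f f P) := by
  classical
  refine Deg.of_eq ((1 : Matrix ι ι ℂ).submatrix id f) ?_
  ext i j <;> simp [act, SkewPencil.sub, Matrix.mul_apply, Matrix.one_apply]

theorem KDeg.sub [Fintype m] [Fintype n] (X : Pen m n) (f : p → m) (g : q → n) :
    KDeg X (sub f g X) := by
  classical
  refine KDeg.of_eq ((1 : Matrix m m ℂ).submatrix f id) ((1 : Matrix n n ℂ).submatrix id g) ?_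
  ext i j <;> simp [act, SkewPencil.sub, Matrix.mul_apply, Matrix.one_apply]

/-- Direct sum of pencils. -/
def oplus (X : Pen m n) (Y : Pen p q) : Pen (m ⊕ p) (n ⊕ q) :=
  (fromBlocks X.1 0 0 Y.1, fromBlocks X.2 0 0 Y.2)

theorem act_oplus [Fintype m] [Fintype n] [Fintype p] [Fintype q] (X : Pen m n) (Y : Pen p q)
    (F : Matrix m' m ℂ) (F' : Matrix p' p ℂ) (G : Matrix n n' ℂ) (G' : Matrix q q' ℂ) :
    act (fromBlocks F 0 0 F') (fromBlocks G 0 0 G') (oplus X Y) =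
      oplus (act F G X) (act F' G' Y) := by
  simp [act, oplus, fromBlocks_multiply]

theorem continuous_oplus :
    Continuous fun XY : Pen m n × Pen p q => oplus XY.1 XY.2 := by
  unfold oplus; fun_prop

theorem KDeg.oplus [Fintype m] [Fintype n] [Fintype m'] [Fintype n'] {X : Pen m n} {Y : Pen p q}
    {X' : Pen m' n'} {Y' : Pen p' q'} (h : KDeg X Y) (h' : KDeg X' Y') :
    KDeg (oplus X X') (oplus Y Y') := by
  have := map_mem_closure (f := fun XY : Pen p q × Pen p' q' => SkewPencil.oplus XY.1 XY.2)
    (x := (Y, Y')) continuous_oplus (by rw [closure_prod_eq]; exact ⟨h, h'⟩)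
    (t := Set.range fun FG : Matrix (p ⊕ p') (m ⊕ m') ℂ × Matrix (n ⊕ n') (q ⊕ q') ℂ =>
      act FG.1 FG.2 (SkewPencil.oplus X X')) ?_
  · exact this
  rintro _ ⟨⟨⟨F, G⟩, hF⟩, ⟨⟨F', G'⟩, hF'⟩⟩
  refine ⟨(fromBlocks F 0 0 F', fromBlocks G 0 0 G'), ?_⟩
  simp only [act_oplus]
  rw [← hF, ← hF']

theorem Deg.oplus [Fintype ι] [Fintype ι'] {P : Pen ι ι} {Q : Pen κ κ}
    {P' : Pen ι' ι'} {Q' : Pen κ' κ'} (h : Deg P Q) (h' : Deg P' Q') :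
    Deg (oplus P P') (oplus Q Q') := by
  have := map_mem_closure (f := fun XY : Pen κ κ × Pen κ' κ' => SkewPencil.oplus XY.1 XY.2)
    (x := (Q, Q')) continuous_oplus (by rw [closure_prod_eq]; exact ⟨h, h'⟩)
    (t := Set.range fun S : Matrix (ι ⊕ ι') (κ ⊕ κ') ℂ => act Sᵀ S (SkewPencil.oplus P P')) ?_
  · exact this
  rintro _ ⟨⟨S, hF⟩, ⟨S', hF'⟩⟩
  refine ⟨fromBlocks S 0 0 S', ?_⟩
  simp only [fromBlocks_transpose, transpose_zero, act_oplus]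
  rw [← hF, ← hF']

theorem Deg.oplus_comm [Fintype ι] [Fintype κ] (P : Pen ι ι) (Q : Pen κ κ) :
    Deg (SkewPencil.oplus P Q) (SkewPencil.oplus Q P) := by
  convert Deg.sub (SkewPencil.oplus P Q) Sum.swap using 1
  ext (i | i) (j | j) <;> rfl

theorem Deg.oplus_assoc [Fintype ι] [Fintype κ] [Fintype τ] (P : Pen ι ι) (Q : Pen κ κ)
    (R : Pen τ τ) : Deg (SkewPencil.oplus (SkewPencil.oplus P Q) R)
      (SkewPencil.oplus P (SkewPencil.oplus Q R)) := by
  convert Deg.sub (SkewPencil.oplus (SkewPencil.oplus P Q) R) (Equiv.sumAssoc ι κ τ).symm using 1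
  ext (i | i | i) (j | j | j) <;> rfl

theorem Deg.oplus_assoc' [Fintype ι] [Fintype κ] [Fintype τ] (P : Pen ι ι) (Q : Pen κ κ)
    (R : Pen τ τ) : Deg (SkewPencil.oplus P (SkewPencil.oplus Q R))
      (SkewPencil.oplus (SkewPencil.oplus P Q) R) := by
  convert Deg.sub (SkewPencil.oplus P (SkewPencil.oplus Q R)) (Equiv.sumAssoc ι κ τ) using 1
  ext ((i | i) | i) ((j | j) | j) <;> rfl

/-- The skew-symmetric pencil with off-diagonal blocks `X` and `-Xᵀ`. -/
def hyp (X : Pen m n) : Pen (m ⊕ n) (m ⊕ n) :=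
  (fromBlocks 0 X.1 (-X.1ᵀ) 0, fromBlocks 0 X.2 (-X.2ᵀ) 0)

/-- The transposed pencil. -/
def tr (X : Pen m n) : Pen n m := (X.1ᵀ, X.2ᵀ)

theorem continuous_hyp : Continuous (hyp : Pen m n → _) := by
  unfold hyp; fun_prop

theorem act_hyp [Fintype m] [Fintype n] (X : Pen m n) (F : Matrix p m ℂ) (G : Matrix n q ℂ) :
    act (fromBlocks Fᵀ 0 0 G)ᵀ (fromBlocks Fᵀ 0 0 G) (hyp X) = hyp (act F G X) := by
  simp [act, hyp, fromBlocks_multiply, fromBlocks_transpose, Matrix.mul_assoc]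

theorem KDeg.hyp [Fintype m] [Fintype n] {X : Pen m n} {Y : Pen p q} (h : KDeg X Y) :
    Deg (hyp X) (hyp Y) := by
  refine map_mem_closure continuous_hyp h ?_
  rintro _ ⟨⟨F, G⟩, rfl⟩
  exact ⟨_, act_hyp ..⟩

theorem deg_hyp_tr [Fintype m] [Fintype n] (X : Pen m n) : Deg (hyp X) (hyp (tr X)) := by
  classical
  refine Deg.of_eq (fromBlocks 0 (-1) 1 0) ?_
  simp [act, hyp, tr, fromBlocks_multiply, fromBlocks_transpose]

theorem deg_hyp_oplus [Fintype m] [Fintype n] [Fintype p] [Fintype q] (X : Pen m n) (Y : Pen p q) :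
    Deg (hyp (oplus X Y)) (oplus (hyp X) (hyp Y)) := by
  convert Deg.sub (hyp (oplus X Y)) (Equiv.sumSumSumComm m n p q) using 1
  ext ((i | i) | (i | i)) ((j | j) | (j | j)) <;> simp [oplus, hyp, SkewPencil.sub]

theorem deg_oplus_hyp [Fintype m] [Fintype n] [Fintype p] [Fintype q] (X : Pen m n) (Y : Pen p q) :
    Deg (oplus (hyp X) (hyp Y)) (hyp (oplus X Y)) := by
  convert Deg.sub (oplus (hyp X) (hyp Y)) (Equiv.sumSumSumComm m p n q) using 1
  ext ((i | i) | (i | i)) ((j | j) | (j | j)) <;> simp [oplus, hyp, SkewPencil.sub]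

end SkewPencil

namespace SkewPencil

open Filter Topology

variable {m n m' n' p q p' q' ι κ ι' κ' τ : Type}

/-! ### Shift pencils and their degenerations -/

/-- A matrix given by a function of the numerical values of its indices. -/
def nm (p q : ℕ) (g : ℕ → ℕ → ℂ) : Matrix (Fin p) (Fin q) ℂ := Matrix.of fun i j => g i j

/-- The `q × p` pencil with ones on the superdiagonal of `A` and on the diagonal of `B`. -/
def shiftPen (q p : ℕ) : Pen (Fin q) (Fin p) :=
  (nm q p fun i j => if j = i + 1 then 1 else 0, nm q p fun i j => if j = i then 1 else 0)

theorem nm_add (p q : ℕ) (g h : ℕ → ℕ → ℂ) : nm p q g + nm p q h = nm p q (g + h) := rfl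

theorem nm_smul (p q : ℕ) (c : ℂ) (g : ℕ → ℕ → ℂ) : c • nm p q g = nm p q (c • g) := rfl

theorem nm_zero (p q : ℕ) : (0 : Matrix (Fin p) (Fin q) ℂ) = nm p q 0 := rfl

theorem nm_up_mul (q p r c : ℕ) (h : ℕ → ℕ → ℂ) :
    nm q p (fun i j => if j = i + c then 1 else 0) * nm p r h =
      nm q r fun i j => if i + c < p then h (i + c) j else 0 := by
  ext i j
  simp only [nm, Matrix.mul_apply, of_apply, ite_mul, one_mul, zero_mul]
  rw [Fin.sum_univ_eq_sum_range (fun k => if k = (i : ℕ) + c then h k j else 0) p]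
  simp

theorem nm_diag_mul (q p r : ℕ) (h : ℕ → ℕ → ℂ) :
    nm q p (fun i j => if j = i then 1 else 0) * nm p r h =
      nm q r fun i j => if i < p then h i j else 0 :=
  nm_up_mul q p r 0 h

theorem nm_down_mul (q p r : ℕ) (h : ℕ → ℕ → ℂ) :
    nm q p (fun i j => if i = j + 1 then 1 else 0) * nm p r h =
      nm q r fun i j => if 1 ≤ i ∧ i ≤ p then h (i - 1) j else 0 := by
  ext i j
  simp only [nm, Matrix.mul_apply, of_apply, ite_mul, one_mul, zero_mul]
  rw [Fin.sum_univ_eq_sum_range (fun k => if (i : ℕ) = k + 1 then h k j else 0) p]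
  obtain h0 | ⟨l, hl⟩ : (i : ℕ) = 0 ∨ ∃ l, (i : ℕ) = l + 1 := by
    rcases (i : ℕ) with _ | l <;> simp
  · simp [h0]
  · simp only [hl, Nat.add_right_cancel_iff]
    rw [Finset.sum_ite_eq (Finset.range p) l fun k => h k j]
    simp only [Finset.mem_range]
    congr 1
    simp

theorem nm_corner_mul (q p r : ℕ) (h : ℕ → ℕ → ℂ) :
    nm q p (fun i j => if i = 0 ∧ j = 0 then 1 else 0) * nm p r h =
      nm q r fun i j => if i = 0 ∧ 0 < p then h 0 j else 0 := by
  ext i j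
  by_cases h0 : (i : ℕ) = 0
  · simp only [nm, Matrix.mul_apply, of_apply, ite_mul, one_mul, zero_mul, h0, true_and]
    rw [Fin.sum_univ_eq_sum_range (fun k => if k = 0 then h k j else 0) p]
    simp
  · simp [nm, Matrix.mul_apply, h0]

theorem act_shiftPen (q₁ p₁ q₂ p₂ : ℕ) (hq : q₁ ≤ p₁) (hp : 1 ≤ p₁) (hqp : p₂ ≤ q₂ + 1)
    (h₁ : ∀ i < p₂, i < q₁ → i < q₂) (h₂ : ∀ i < p₂, i ≤ q₁ → i < p₁) (ε : ℂ) (hε : ε ≠ 0) :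
    act
      (fromBlocks (nm q₁ (q₁ + 1) fun i j => if j = i + 1 then 1 else 0)
        ((-ε⁻¹) • nm q₁ q₂ fun i j => if j = i then 1 else 0)
        (ε • nm (q₂ + 1) (q₁ + 1) fun i j => if i = 0 ∧ j = 0 then 1 else 0)
        (nm (q₂ + 1) q₂ fun i j => if i = j + 1 then 1 else 0))
      (fromBlocks (nm (p₁ + 1) p₁ fun i j => if i = j + 1 then 1 else 0)
        (ε⁻¹ • nm (p₁ + 1) (p₂ + 1) fun i j => if j = i then 1 else 0)
        0
        (nm p₂ (p₂ + 1) fun i j => if j = i + 1 then 1 else 0))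
      (oplus (shiftPen (q₁ + 1) (p₁ + 1)) (shiftPen q₂ p₂)) =
    ((oplus (shiftPen q₁ p₁) (shiftPen (q₂ + 1) (p₂ + 1))).1 +
      ε • fromBlocks 0 0 (nm (q₂ + 1) p₁ fun i j => if i = 0 ∧ j = 0 then 1 else 0) 0,
     (oplus (shiftPen q₁ p₁) (shiftPen (q₂ + 1) (p₂ + 1))).2) := by
  unfold act oplus shiftPen
  simp only [Matrix.mul_assoc]
  simp only [fromBlocks_multiply, Matrix.mul_smul, Matrix.smul_mul, nm_up_mul, nm_diag_mul,
    Matrix.mul_zero, Matrix.zero_mul, add_zero]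
  simp only [nm_smul, nm_zero, nm_diag_mul, nm_down_mul, nm_corner_mul, nm_add,
    fromBlocks_smul, fromBlocks_add]
  refine Prod.ext ?_ ?_
  all_goals
    refine Matrix.ext ?_
    rintro (⟨i, hi⟩ | ⟨i, hi⟩) (⟨j, hj⟩ | ⟨j, hj⟩)
  all_goals
    have := h₁ i; have := h₂ i; have := h₁ (i + 1); have := h₂ (i + 1)
    simp only [fromBlocks_apply₁₁, fromBlocks_apply₁₂, fromBlocks_apply₂₁, fromBlocks_apply₂₂,
      nm, of_apply, Pi.add_apply, Pi.smul_apply, Pi.zero_apply, smul_eq_mul]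
    split_ifs <;> first | (exfalso; omega) | simp [hε]

theorem kdeg_shiftPen (q₁ p₁ q₂ p₂ : ℕ) (hq : q₁ ≤ p₁) (hp : 1 ≤ p₁) (hqp : p₂ ≤ q₂ + 1)
    (h₁ : ∀ i < p₂, i < q₁ → i < q₂) (h₂ : ∀ i < p₂, i ≤ q₁ → i < p₁) :
    KDeg (oplus (shiftPen (q₁ + 1) (p₁ + 1)) (shiftPen q₂ p₂))
      (oplus (shiftPen q₁ p₁) (shiftPen (q₂ + 1) (p₂ + 1))) := by
  refine KDeg.of_tendsto (l := 𝓝[≠] (0 : ℂ)) _ _ (Tendsto.congr' (Filter.mem_of_superset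
    self_mem_nhdsWithin fun ε hε => (act_shiftPen q₁ p₁ q₂ p₂ hq hp hqp h₁ h₂ ε hε).symm) ?_)
  refine tendsto_nhdsWithin_of_tendsto_nhds ?_
  convert Continuous.tendsto (x := (0 : ℂ)) ?_ using 2
  · simp
  · fun_prop

theorem mob_oplus (a b c d : ℂ) (X : Pen m n) (Y : Pen p q) :
    mob a b c d (oplus X Y) = oplus (mob a b c d X) (mob a b c d Y) := by
  simp [mob, oplus, fromBlocks_smul, fromBlocks_add]

theorem kdeg_shift_shiftPen (k : ℕ) (μ : ℂ) :
    KDeg (mob 1 (-μ) 0 1 (shiftPen k (k + 1))) (shiftPen k (k + 1)) := by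
  set W : Matrix (Fin k) (Fin k) ℂ := nm k k fun i j => i.choose j * μ ^ (i - j) with hW
  have hdet : IsUnit W.det := by
    rw [Matrix.det_of_isLowerTriangular]
    · simp [hW, nm]
    · intro i j hij
      have : (i : ℕ) < j := hij
      simp [hW, nm, Nat.choose_eq_zero_of_lt this]
  have h2 : (shiftPen k (k + 1)).2 * nm (k + 1) (k + 1) (fun i j => i.choose j * μ ^ (i - j)) =
      W * (shiftPen k (k + 1)).2 := by
    rw [shiftPen, nm_diag_mul]
    ext i j
    simp only [nm, of_apply, Matrix.mul_apply, hW, mul_ite, mul_one, mul_zero]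
    rw [Fin.sum_univ_eq_sum_range
      (fun l => if (j : ℕ) = l then ((i : ℕ).choose l : ℂ) * μ ^ ((i : ℕ) - l) else 0) k]
    rw [Finset.sum_ite_eq]
    have hi := i.2
    have hj := j.2
    rw [if_pos (by omega)]
    split_ifs with h
    · rfl
    · have : k = j := by simp at h; omega
      rw [← this, Nat.choose_eq_zero_of_lt hi]; simp
  have h1 : (shiftPen k (k + 1)).1 * nm (k + 1) (k + 1) (fun i j => i.choose j * μ ^ (i - j)) =
      μ • (W * (shiftPen k (k + 1)).2) + W * (shiftPen k (k + 1)).1 := by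
    rw [← h2, shiftPen, nm_up_mul, nm_diag_mul]
    ext i j
    obtain ⟨i, hi⟩ := i
    obtain ⟨j, hj⟩ := j
    simp only [nm, of_apply, Matrix.mul_apply, hW, mul_ite, mul_one, mul_zero, Matrix.add_apply,
      Matrix.smul_apply, smul_eq_mul]
    rw [Fin.sum_univ_eq_sum_range
      (fun l => if j = l + 1 then (i.choose l : ℂ) * μ ^ (i - l) else 0) k]
    rw [if_pos (by omega), if_pos (by omega)]
    rcases j with _ | j
    · simp [pow_succ']
    · simp only [Nat.add_right_cancel_iff, Finset.sum_ite_eq]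
      rw [if_pos (by simp; omega), Nat.choose_succ_succ, Nat.succ_sub_succ]
      push_cast
      rcases lt_or_ge i (j + 1) with h | h
      · simp [Nat.choose_eq_zero_of_lt h]
      · obtain ⟨t, rfl⟩ := Nat.exists_eq_add_of_le h
        rw [show j + 1 + t - j = t + 1 by omega, show j + 1 + t - (j + 1) = t by omega]
        ring
  refine KDeg.of_eq W⁻¹ (nm (k + 1) (k + 1) fun i j => i.choose j * μ ^ (i - j)) ?_
  refine Prod.ext ?_ ?_
  · simp [act, mob, Matrix.mul_add, Matrix.add_mul, Matrix.mul_assoc, h1, h2,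
      Matrix.nonsing_inv_mul_cancel_left _ _ hdet]
  · simp [act, mob, Matrix.mul_assoc, h2, Matrix.nonsing_inv_mul_cancel_left _ _ hdet]

theorem kdeg_shiftPen_mob (k : ℕ) (μ : ℂ) :
    KDeg (shiftPen k (k + 1)) (mob 1 μ 0 1 (shiftPen k (k + 1))) := by
  have := (kdeg_shift_shiftPen k μ).mob 1 μ 0 1
  rwa [mob_mob, show mob (1 * 1 + μ * 0) (1 * -μ + μ * 1) (0 * 1 + 1 * 0) (0 * -μ + 1 * 1)
    (shiftPen k (k + 1)) = shiftPen k (k + 1) by convert mob_id _ using 2 <;> ring] at this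

theorem kdeg_mob_shiftPen (k : ℕ) (μ : ℂ) :
    KDeg (mob 1 μ 0 1 (shiftPen k (k + 1))) (shiftPen k (k + 1)) := by
  simpa using kdeg_shift_shiftPen k (-μ)

/-- A cyclic matrix degenerates to the sum of a right and a left shift pencil. -/
theorem kdeg_cyclic [Fintype ι] [DecidableEq ι] (a b : ℕ) (T : Matrix ι ι ℂ) (c : ℕ → ι → ℂ)
    (φ : ι → ℂ) (hT : ∀ i, T *ᵥ c i = c (i + 1)) (h0 : ∀ i < a + b, φ ⬝ᵥ c i = 0)
    (h1 : φ ⬝ᵥ c (a + b) = 1) :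
    KDeg ((T, 1) : Pen ι ι) (oplus (shiftPen b (b + 1)) (tr (shiftPen a (a + 1)))) := by
  have hc : ∀ i j, T ^ j *ᵥ c i = c (i + j) := by
    intro i j
    induction j with
    | zero => simp
    | succ j ih => rw [pow_succ', ← mulVec_mulVec, ih, hT]; rfl
  let C : Matrix ι (Fin (a + b + 1)) ℂ := Matrix.of fun x i => c i x
  let Φ : Matrix (Fin (a + b + 1)) ι ℂ := Matrix.of fun i => φ ᵥ* T ^ (i : ℕ)
  have hΦC : ∀ i j, (Φ * C) i j = φ ⬝ᵥ c (j + i) := by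
    intro i j
    rw [← hc, dotProduct_mulVec]
    rfl
  have hΦTC : ∀ i j, (Φ * (T * C)) i j = φ ⬝ᵥ c (j + i + 1) := by
    intro i j
    have : T * C = Matrix.of fun x (i : Fin (a + b + 1)) => c ((i : ℕ) + 1) x := by
      ext x i; simp only [of_apply]; rw [← hT]; rfl
    rw [this, show (j : ℕ) + i + 1 = (j + 1) + i by ring, ← hc, dotProduct_mulVec]
    rfl
  have hdet : IsUnit (Φ * C).det := by
    have : IsUnit ((Φ * C).submatrix Fin.revPerm id).det := by
      rw [Matrix.det_of_isUpperTriangular]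
      · rw [Finset.prod_eq_one]
        · exact isUnit_one
        · intro i _
          have := i.2
          simp only [submatrix_apply, hΦC, Fin.revPerm_apply, Fin.val_rev, id]
          rw [← h1]; congr 2; omega
      · intro i j hij
        have : (j : ℕ) < i := hij
        have := i.2
        simp only [submatrix_apply, hΦC, Fin.revPerm_apply, Fin.val_rev, id]
        apply h0; omega
    rw [Matrix.det_permute] at this
    exact isUnit_of_mul_isUnit_right this
  set H := Φ * C with hH
  let fb : Fin b → Fin (a + b + 1) := Fin.castLE (by omega)
  let fb' : Fin (b + 1) → Fin (a + b + 1) := Fin.castLE (by omega)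
  let fa : Fin a → Fin (a + b + 1) := Fin.castLE (by omega)
  let fa' : Fin (a + 1) → Fin (a + b + 1) := Fin.castLE (by omega)
  -- `N` is dual to the functionals, `R` is dual to the vectors
  let N := C * H⁻¹
  let R := H⁻¹ * Φ
  have hN : Φ * N = 1 := by
    simp only [N, ← Matrix.mul_assoc, ← hH]; exact Matrix.mul_nonsing_inv _ hdet
  have hR : R * C = 1 := by
    simp only [R, Matrix.mul_assoc, ← hH]; exact Matrix.nonsing_inv_mul _ hdet
  have hNT : ∀ (i : Fin b) (j), (Φ * (T * N)) (fb i) j = if (j : ℕ) = i + 1 then 1 else 0 := by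
    intro i j
    have hi := i.2
    have h : (Φ * N) ⟨i + 1, by omega⟩ j = (Φ * (T * N)) (fb i) j := by
      rw [show Φ * (T * N) = Φ * T * N from (Matrix.mul_assoc ..).symm]
      have : Φ ⟨i + 1, by omega⟩ = (Φ * T) (fb i) := by
        change φ ᵥ* T ^ ((i : ℕ) + 1) = (φ ᵥ* T ^ (i : ℕ)) ᵥ* T
        rw [pow_succ, vecMul_vecMul]
      exact congrArg (fun r => r ⬝ᵥ fun x => N x j) this
    rw [← h, hN, one_apply]
    simp [Fin.ext_iff, eq_comm]
  have hRT : ∀ i (j : Fin a), (R * (T * C)) i (fa j) = if (i : ℕ) = j + 1 then 1 else 0 := by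
    intro i j
    have hj := j.2
    have h : (R * C) i ⟨j + 1, by omega⟩ = (R * (T * C)) i (fa j) := by
      have : ∀ x, (T * C) x (fa j) = C x ⟨j + 1, by omega⟩ := by
        intro x; exact congrFun (hT j) x
      exact congrArg (fun r => R i ⬝ᵥ r) (funext fun x => (this x).symm)
    rw [← h, hR, one_apply]
    simp [Fin.ext_iff]
  refine KDeg.of_tendsto (l := 𝓝[≠] (0 : ℂ))
    (fun ε => fromRows (Φ.submatrix fb id) (ε • R.submatrix fa' id))
    (fun ε => fromCols (N.submatrix id fb') (ε⁻¹ • C.submatrix id fa)) ?_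
  refine Tendsto.congr' (f₁ := fun ε : ℂ =>
    (oplus (shiftPen b (b + 1)) (tr (shiftPen a (a + 1)))) +
      ε • ((fromBlocks 0 0 ((R * (T * N)).submatrix fa' fb') 0,
        fromBlocks 0 0 ((R * N).submatrix fa' fb') 0) : Pen _ _)) ?_ ?_
  · refine Filter.mem_of_superset self_mem_nhdsWithin fun ε (hε : ε ≠ 0) => ?_
    have e11 : ∀ M : Matrix ι ι ℂ, Φ.submatrix fb id * (M * N.submatrix id fb') =
      (Φ * (M * N)).submatrix fb fb' := fun M => rfl
    have e12 : ∀ M : Matrix ι ι ℂ, Φ.submatrix fb id * (M * C.submatrix id fa) =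
      (Φ * (M * C)).submatrix fb fa := fun M => rfl
    have e21 : ∀ M : Matrix ι ι ℂ, R.submatrix fa' id * (M * N.submatrix id fb') =
      (R * (M * N)).submatrix fa' fb' := fun M => rfl
    have e22 : ∀ M : Matrix ι ι ℂ, R.submatrix fa' id * (M * C.submatrix id fa) =
      (R * (M * C)).submatrix fa' fa := fun M => rfl
    have key : ∀ M : Matrix ι ι ℂ, fromRows (Φ.submatrix fb id) (ε • R.submatrix fa' id) * M *
        fromCols (N.submatrix id fb') (ε⁻¹ • C.submatrix id fa) =
        fromBlocks ((Φ * (M * N)).submatrix fb fb') (ε⁻¹ • (Φ * (M * C)).submatrix fb fa)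
          (ε • (R * (M * N)).submatrix fa' fb') ((R * (M * C)).submatrix fa' fa) := by
      intro M
      rw [Matrix.mul_assoc, mul_fromCols, fromRows_mul_fromCols]
      simp only [Matrix.mul_smul, Matrix.smul_mul, e11, e12, e21, e22, smul_smul, inv_mul_cancel₀ hε,
        one_smul]
    refine Prod.ext ?_ ?_
    · simp only [act, key, oplus, Prod.fst_add, Prod.smul_fst, fromBlocks_smul, fromBlocks_add]
      congr 1
      · ext i j; simp [hNT, fb', shiftPen, nm]
      · ext i j
        have := i.2; have := j.2
        rw [Matrix.smul_apply, submatrix_apply, hΦTC]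
        rw [h0 _ (by simp [fb, fa]; omega)]; simp
      · simp
      · ext i j; simp [hRT, fa', tr, shiftPen, nm]
    · simp only [act, key, oplus, Prod.snd_add, Prod.smul_snd, fromBlocks_smul, fromBlocks_add,
        Matrix.one_mul, hN, hR]
      congr 1
      · ext i j; simp [one_apply, fb, fb', shiftPen, nm, Fin.ext_iff, eq_comm]
      · ext i j
        have := i.2; have := j.2
        rw [Matrix.smul_apply, submatrix_apply, ← hH, hΦC]
        rw [h0 _ (by simp [fb, fa]; omega)]; simp
      · simp
      · ext i j; simp [one_apply, fa, fa', tr, shiftPen, nm, Fin.ext_iff]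
  · refine tendsto_nhdsWithin_of_tendsto_nhds ?_
    convert Continuous.tendsto (x := (0 : ℂ)) ?_ using 2
    · simp
    · fun_prop

end SkewPencil

namespace SkewPencil

open Filter Topology

variable {m n m' n' p q p' q' ι κ ι' κ' τ : Type}

/-! ### Canonical pencils -/

/-- Canonical blocks: `M k` of size `2 k + 1`, and `J μ e`, a pair of Jordan blocks of size `e`. -/
inductive Blk : Type
  | M (k : ℕ) : Blk
  | J (μ : ℂ) (e : ℕ) : Blk

namespace Blk

/-- Number of rows of the off-diagonal part of a block. -/
def row : Blk → ℕ
  | M k => k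
  | J _ e => e

/-- Number of columns of the off-diagonal part of a block. -/
def col : Blk → ℕ
  | M k => k + 1
  | J _ e => e

/-- Eigenvalue of a block (zero for the blocks `M k`). -/
def ev : Blk → ℂ
  | M _ => 0
  | J μ _ => μ

/-- The off-diagonal part of a block. -/
def pen (b : Blk) : Pen (Fin b.row) (Fin b.col) := mob 1 b.ev 0 1 (shiftPen b.row b.col)

end Blk

/-- The index set of the canonical pencil with given blocks. -/
def Idx : List Blk → Type
  | [] => Empty
  | b :: l => (Fin b.row ⊕ Fin b.col) ⊕ Idx l

instance Idx.fintype : ∀ l, Fintype (Idx l)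
  | [] => inferInstanceAs (Fintype Empty)
  | _ :: l => @instFintypeSum _ _ inferInstance (Idx.fintype l)

/-- The canonical pencil with given blocks. -/
def canon : ∀ l : List Blk, Pen (Idx l) (Idx l)
  | [] => 0
  | b :: l => oplus (hyp b.pen) (canon l)

theorem deg_canon_perm {l l' : List Blk} (h : l.Perm l') : Deg (canon l) (canon l') := by
  induction h with
  | nil => exact Deg.refl _
  | cons x _ ih => exact (Deg.refl _).oplus ih
  | swap x y l =>
    exact (Deg.oplus_assoc' _ _ _).trans (((Deg.oplus_comm _ _).oplus (Deg.refl _)).trans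
      (Deg.oplus_assoc _ _ _))
  | trans _ _ ih ih' => exact ih.trans ih'

theorem deg_canon_append (l : List Blk) {t t' : List Blk} (h : Deg (canon t) (canon t')) :
    Deg (canon (l ++ t)) (canon (l ++ t')) := by
  induction l with
  | nil => exact h
  | cons b l ih => exact (Deg.refl _).oplus ih

/-- Degeneration between canonical pencils, given by their multisets of blocks. -/
def MDeg (s t : Multiset Blk) : Prop :=
  ∀ l l' : List Blk, (l : Multiset Blk) = s → (l' : Multiset Blk) = t → Deg (canon l) (canon l')

theorem MDeg.mk {l l' : List Blk} (h : Deg (canon l) (canon l')) : MDeg l l' := by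
  intro k k' hk hk'
  exact (deg_canon_perm (Multiset.coe_eq_coe.1 hk)).trans
    (h.trans (deg_canon_perm (Multiset.coe_eq_coe.1 hk').symm))

theorem MDeg.refl (s : Multiset Blk) : MDeg s s := by
  induction s using Quotient.inductionOn
  exact MDeg.mk (Deg.refl _)

theorem MDeg.trans {s t u : Multiset Blk} (h : MDeg s t) (h' : MDeg t u) : MDeg s u := by
  intro l l' hl hl'
  exact (h l t.toList hl (by simp)).trans (h' t.toList l' (by simp) hl')

theorem MDeg.add_right {l l' : List Blk} (h : Deg (canon l) (canon l')) (u : Multiset Blk) :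
    MDeg (l + u) (l' + u) := by
  rw [← Multiset.coe_toList u, add_comm _ (u.toList : Multiset Blk),
    add_comm _ (u.toList : Multiset Blk)]
  exact MDeg.mk (deg_canon_append u.toList h)

/-- The off-diagonal parts determine the degeneration of a pair of blocks. -/
theorem deg_canon_pair {x y x' y' : Blk} (h : KDeg (oplus x.pen y.pen) (oplus x'.pen y'.pen)) :
    Deg (canon [x, y]) (canon [x', y']) :=
  (Deg.oplus_assoc' _ _ _).trans (((deg_oplus_hyp _ _).trans (h.hyp.trans
    (deg_hyp_oplus _ _))).oplus (Deg.refl _) |>.trans (Deg.oplus_assoc _ _ _))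

theorem kdeg_shiftPen_M (μ : ℂ) (k : ℕ) :
    KDeg (Blk.M k).pen (mob 1 μ 0 1 (shiftPen k (k + 1))) := by
  change KDeg (mob 1 0 0 1 _) _
  rw [mob_id]
  exact kdeg_shiftPen_mob k μ

theorem kdeg_M_shiftPen (μ : ℂ) (k : ℕ) :
    KDeg (mob 1 μ 0 1 (shiftPen k (k + 1))) (Blk.M k).pen := by
  change KDeg _ (mob 1 0 0 1 _)
  rw [mob_id]
  exact kdeg_mob_shiftPen k μ

theorem deg_canon_M_M (a c : ℕ) (h : a + 1 ≤ c) :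
    Deg (canon [.M (a + 1), .M c]) (canon [.M a, .M (c + 1)]) := by
  refine deg_canon_pair ?_
  have := (kdeg_shiftPen a (a + 1) c (c + 1) (by omega) (by omega) (by omega) (by omega)
    (by omega)).mob 1 0 0 1
  simp only [mob_oplus] at this
  exact this

theorem deg_canon_M_J (a e : ℕ) (μ : ℂ) :
    Deg (canon [.M (a + 1), .J μ e]) (canon [.M a, .J μ (e + 1)]) := by
  refine deg_canon_pair ?_
  have := (kdeg_shiftPen a (a + 1) e e (by omega) (by omega) (by omega) (by omega)
    (by omega)).mob 1 μ 0 1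
  simp only [mob_oplus] at this
  exact ((kdeg_shiftPen_M μ _).oplus (KDeg.refl _)).trans
    (this.trans ((kdeg_M_shiftPen μ _).oplus (KDeg.refl _)))

theorem deg_canon_J_J (e f : ℕ) (μ : ℂ) (h : e + 1 ≤ f) :
    Deg (canon [.J μ (f + 1), .J μ e]) (canon [.J μ f, .J μ (e + 1)]) := by
  refine deg_canon_pair ?_
  have := (kdeg_shiftPen f f e e (by omega) (by omega) (by omega) (by omega)
    (by omega)).mob 1 μ 0 1
  simp only [mob_oplus] at this
  exact this

theorem deg_canon_J_zero (μ : ℂ) : Deg (canon [.J μ 0]) (canon []) :=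
  Deg.of_eq 0 (Prod.ext (Matrix.ext fun i => i.elim) (Matrix.ext fun i => i.elim))

theorem deg_canon_zero_J (μ : ℂ) : Deg (canon []) (canon [.J μ 0]) := by
  refine Deg.of_eq 0 (Prod.ext (Matrix.ext ?_) (Matrix.ext ?_)) <;>
    rintro ((i | i) | i) <;> first | exact i.elim0 | exact i.elim

/-! ### Sums of Jordan blocks with distinct eigenvalues -/

/-- Index set of a sum of Jordan blocks. -/
def JIdx : List (ℂ × ℕ) → Type
  | [] => Empty
  | x :: l => Fin x.2 ⊕ JIdx l

instance JIdx.fintype : ∀ l, Fintype (JIdx l)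
  | [] => inferInstanceAs (Fintype Empty)
  | x :: l => @instFintypeSum (Fin x.2) _ inferInstance (JIdx.fintype l)

/-- Sum of Jordan blocks. -/
def jsum : ∀ l : List (ℂ × ℕ), Pen (JIdx l) (JIdx l)
  | [] => 0
  | x :: l => oplus (mob 1 x.1 0 1 (shiftPen x.2 x.2)) (jsum l)

theorem deg_canon_jsum (l : List (ℂ × ℕ)) :
    Deg (canon (l.map fun x => .J x.1 x.2)) (hyp (jsum l)) := by
  induction l with
  | nil =>
    refine Deg.of_eq 0 (Prod.ext (Matrix.ext ?_) (Matrix.ext ?_)) <;>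
      rintro (i | i) <;> exact i.elim
  | cons x l ih => exact ((Deg.refl _).oplus ih).trans (deg_oplus_hyp _ _)

open Polynomial in
/-- Taylor coefficients of a polynomial at the eigenvalues. -/
def jev : ∀ l : List (ℂ × ℕ), ℂ[X] →ₗ[ℂ] (JIdx l → ℂ)
  | [] => 0
  | x :: l => LinearMap.pi (Sum.rec
      (fun i => Polynomial.lcoeff ℂ (x.2 - 1 - i) ∘ₗ Polynomial.taylor x.1)
      (fun i => LinearMap.proj i ∘ₗ jev l))

open Polynomial in
theorem jsum_mulVec_jev (l : List (ℂ × ℕ)) (f : ℂ[X]) :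
    (jsum l).1 *ᵥ jev l f = jev l (X * f) := by
  induction l with
  | nil => ext i; exact i.elim
  | cons x l ih =>
    refine (fromBlocks_mulVec _ _ _ _ _).trans ?_
    funext i
    rcases i with i | i
    · have hi := i.2
      change ((mob 1 x.1 0 1 (shiftPen x.2 x.2)).1 *ᵥ fun j : Fin x.2 =>
        (taylor x.1 f).coeff (x.2 - 1 - j)) i + ((0 : Matrix _ _ ℂ) *ᵥ _) i =
        (taylor x.1 (X * f)).coeff (x.2 - 1 - i)
      have h1 : ((shiftPen x.2 x.2).1 *ᵥ fun j : Fin x.2 =>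
          (taylor x.1 f).coeff (x.2 - 1 - j)) i =
          if (i : ℕ) + 1 < x.2 then (taylor x.1 f).coeff (x.2 - 1 - (i + 1)) else 0 :=
        congrFun (congrFun (nm_up_mul x.2 x.2 x.2 1
          fun a _ => (taylor x.1 f).coeff (x.2 - 1 - a)) i) i
      have h2 : ((shiftPen x.2 x.2).2 *ᵥ fun j : Fin x.2 =>
          (taylor x.1 f).coeff (x.2 - 1 - j)) i =
          if (i : ℕ) < x.2 then (taylor x.1 f).coeff (x.2 - 1 - i) else 0 :=
        congrFun (congrFun (nm_diag_mul x.2 x.2 x.2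
          fun a _ => (taylor x.1 f).coeff (x.2 - 1 - a)) i) i
      rw [mob]
      simp only [add_mulVec, smul_mulVec, Pi.add_apply, Pi.smul_apply, h1, h2, zero_mulVec,
        Pi.zero_apply, taylor_mul, taylor_X, add_mul, coeff_add, coeff_C_mul, smul_eq_mul, hi]
      split_ifs with h
      · rw [show x.2 - 1 - (i : ℕ) = (x.2 - 1 - (i + 1)) + 1 by omega, coeff_X_mul]
        ring
      · rw [show x.2 - 1 - (i : ℕ) = 0 by omega]
        simp
    · have := congrFun ih i
      change ((0 : Matrix _ _ ℂ) *ᵥ _) i + ((jsum l).1 *ᵥ jev l f) i = jev l (X * f) i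
      simp [this]

theorem shiftPen_snd (e : ℕ) : (shiftPen e e).2 = 1 := by
  ext i j
  simp [shiftPen, nm, one_apply, Fin.ext_iff, eq_comm]

theorem jsum_snd_apply (l : List (ℂ × ℕ)) :
    (∀ i, (jsum l).2 i i = 1) ∧ ∀ i j, i ≠ j → (jsum l).2 i j = 0 := by
  induction l with
  | nil => exact ⟨fun i => i.elim, fun i => i.elim⟩
  | cons x l ih =>
    have h : (mob 1 x.1 0 1 (shiftPen x.2 x.2)).2 = (1 : Matrix (Fin x.2) (Fin x.2) ℂ) := by
      simp [mob, shiftPen_snd]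
    have h' : (jsum (x :: l)).2 = fromBlocks 1 0 0 (jsum l).2 := by rw [← h]; rfl
    rw [h']
    constructor
    · rintro (i | i)
      · exact one_apply_eq i
      · exact ih.1 i
    · rintro (i | i) (j | j) hij
      · exact one_apply_ne fun h => hij (congrArg Sum.inl h)
      · rfl
      · rfl
      · exact ih.2 i j fun h => hij (congrArg Sum.inr h)

theorem jsum_snd (l : List (ℂ × ℕ)) [DecidableEq (JIdx l)] : (jsum l).2 = 1 := by
  ext i j
  by_cases hij : i = j
  · subst hij; rw [(jsum_snd_apply l).1, one_apply_eq]
  · rw [(jsum_snd_apply l).2 i j hij, one_apply_ne hij]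

open Polynomial in
theorem dvd_of_jev_eq_zero (l : List (ℂ × ℕ)) (f : ℂ[X]) (h : jev l f = 0) :
    ∀ x ∈ l, (X - C x.1) ^ x.2 ∣ f := by
  induction l with
  | nil => simp
  | cons x l ih =>
    rw [List.forall_mem_cons]
    constructor
    · have h1 : X ^ x.2 ∣ taylor x.1 f := by
        rw [X_pow_dvd_iff]
        intro d hd
        have : (taylor x.1 f).coeff (x.2 - 1 - (x.2 - 1 - d)) = 0 :=
          congrFun h (Sum.inl ⟨x.2 - 1 - d, by omega⟩)
        rwa [show x.2 - 1 - (x.2 - 1 - d) = d by omega] at this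
      have h2 := map_dvd (taylorAlgHom (-x.1)) h1
      change taylor _ _ ∣ taylor _ _ at h2
      rw [taylor_taylor, taylor_X_pow] at h2
      simpa [sub_eq_add_neg] using h2
    · apply ih
      funext i
      exact congrFun h (Sum.inr i)

open Polynomial in
theorem eq_zero_of_jev_eq_zero (l : List (ℂ × ℕ)) (hl : (l.map Prod.fst).Nodup) (f : ℂ[X])
    (hf : f.degree < (l.map Prod.snd).sum) (h : jev l f = 0) : f = 0 := by
  have hd := dvd_of_jev_eq_zero l f h
  have key : (l.map fun x => (X - C x.1) ^ x.2).prod ∣ f ∧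
      (l.map fun x : ℂ × ℕ => ((X - C x.1) ^ x.2 : ℂ[X])).prod.degree =
        (l.map Prod.snd).sum := by
    clear h hf
    induction l with
    | nil => simp
    | cons x l ih =>
      rw [List.map_cons, List.nodup_cons] at hl
      rw [List.forall_mem_cons] at hd
      obtain ⟨i1, i2⟩ := ih hl.2 hd.2
      simp only [List.map_cons, List.prod_cons, List.sum_cons]
      refine ⟨IsCoprime.mul_dvd ?_ hd.1 i1, ?_⟩
      · refine List.prod_induction _ (fun _ _ => IsCoprime.mul_right) isCoprime_one_right ?_
        simp only [List.mem_map]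
        rintro _ ⟨y, hy, rfl⟩
        refine IsCoprime.pow (pairwise_coprime_X_sub_C Function.injective_id ?_)
        intro hxy
        exact hl.1 (List.mem_map.2 ⟨y, hy, hxy.symm⟩)
      · rw [degree_mul, i2, degree_pow, degree_X_sub_C]; simp
  by_contra h0
  have := degree_le_of_dvd key.1 h0
  rw [key.2] at this
  exact absurd hf (not_lt.2 this)

open Polynomial in
theorem deg_canon_J_M_M (a b : ℕ) (l : List (ℂ × ℕ)) (hl : (l.map Prod.fst).Nodup)
    (hs : (l.map Prod.snd).sum = a + b + 1) :
    Deg (canon (l.map fun x => .J x.1 x.2)) (canon [.M b, .M a]) := by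
  classical
  -- the evaluation map on polynomials of degree at most `a + b` is injective
  let L : (Fin (a + b + 1) → ℂ) →ₗ[ℂ] JIdx l → ℂ :=
    jev l ∘ₗ (degreeLT ℂ (a + b + 1)).subtype ∘ₗ (degreeLTEquiv ℂ (a + b + 1)).symm.toLinearMap
  have hL : LinearMap.ker L = ⊥ := by
    rw [LinearMap.ker_eq_bot']
    intro v hv
    have := eq_zero_of_jev_eq_zero l hl _ (by
      rw [hs]; exact mem_degreeLT.1 ((degreeLTEquiv ℂ (a + b + 1)).symm v).2) hv
    simpa using this
  obtain ⟨G, hG⟩ := L.exists_leftInverse_of_injective hL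
  have hLX : ∀ i : Fin (a + b + 1), L (Pi.single i 1) = jev l (X ^ (i : ℕ)) := by
    intro i
    simp only [L, LinearMap.comp_apply]
    congr 1
    have : (degreeLTEquiv ℂ (a + b + 1)).symm (Pi.single i 1) =
        ⟨X ^ (i : ℕ), mem_degreeLT.2 (by rw [degree_X_pow]; exact_mod_cast i.2)⟩ := by
      rw [LinearEquiv.symm_apply_eq]
      ext j
      simp [degreeLTEquiv, coeff_X_pow, Pi.single_apply, Fin.ext_iff]
    exact congrArg Subtype.val this
  have hφ : ∀ i : Fin (a + b + 1), (fun x => G (Pi.single x 1) (Fin.last _)) ⬝ᵥ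
      jev l (X ^ (i : ℕ)) = if i = Fin.last _ then 1 else 0 := by
    intro i
    rw [← hLX]
    have h1 : G (L (Pi.single i 1)) = Pi.single i 1 := LinearMap.congr_fun hG _
    generalize L (Pi.single i 1) = w at *
    have h2 : w = ∑ x, w x • (Pi.single x 1 : JIdx l → ℂ) := by
      ext y; simp [Finset.sum_apply, Pi.single_apply]
    have h3 : G w (Fin.last _) = ∑ x, w x • G (Pi.single x 1) (Fin.last _) := by
      conv_lhs => rw [h2]
      simp
    rw [h1, Pi.single_apply] at h3
    simp only [smul_eq_mul] at h3
    simp only [dotProduct, mul_comm _ (w _), ← h3, eq_comm]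
  have h := kdeg_cyclic a b (jsum l).1 (fun i => jev l (X ^ i))
    (fun x => G (Pi.single x 1) (Fin.last _))
    (fun i => by rw [jsum_mulVec_jev, pow_succ'])
    (fun i hi => by
      rw [hφ ⟨i, by omega⟩, if_neg]
      simp [Fin.ext_iff]; omega)
    (by simpa using hφ (Fin.last _))
  rw [← jsum_snd l] at h
  refine (deg_canon_jsum l).trans (h.hyp.trans ((deg_hyp_oplus _ _).trans ?_))
  refine Deg.oplus (Q := hyp (Blk.M b).pen) (Q' := canon [.M a]) ?_ ?_
  · change Deg (hyp (shiftPen b (b + 1))) (hyp (mob 1 0 0 1 (shiftPen b (b + 1))))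
    rw [mob_id]; exact Deg.refl _
  · refine (deg_hyp_tr _).trans ?_
    have : Deg (hyp (shiftPen a (a + 1))) (oplus (hyp (shiftPen a (a + 1))) (canon [])) := by
      convert Deg.sub (hyp (shiftPen a (a + 1)))
        (Sum.elim id (fun i : Idx [] => Empty.elim i) :
          (Fin a ⊕ Fin (a + 1)) ⊕ Idx [] → Fin a ⊕ Fin (a + 1)) using 1
      refine Prod.ext (Matrix.ext ?_) (Matrix.ext ?_) <;>
        rintro (i | i) (j | j) <;> first | rfl | exact i.elim | exact j.elim
    change Deg (hyp (shiftPen a (a + 1)))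
      (oplus (hyp (mob 1 0 0 1 (shiftPen a (a + 1)))) (canon []))
    rw [mob_id]; exact this

/-! ### Degenerations in terms of the multisets of invariants -/

/-- The blocks with given sizes of `M`-blocks and given eigenvalues and sizes of `J`-blocks. -/
def blocks (K : Multiset ℕ) (E : Multiset (ℂ × ℕ)) : Multiset Blk :=
  K.map Blk.M + E.map fun x => Blk.J x.1 x.2

theorem mdeg_M_M (K : Multiset ℕ) (E : Multiset (ℂ × ℕ)) {a c : ℕ} (h : a + 1 ≤ c) :
    MDeg (blocks ((a + 1) ::ₘ c ::ₘ K) E) (blocks (a ::ₘ (c + 1) ::ₘ K) E) := by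
  simpa [blocks, ← Multiset.cons_coe] using MDeg.add_right (deg_canon_M_M a c h) (blocks K E)

theorem mdeg_M_J (K : Multiset ℕ) (E : Multiset (ℂ × ℕ)) (a e : ℕ) (μ : ℂ) :
    MDeg (blocks ((a + 1) ::ₘ K) ((μ, e) ::ₘ E)) (blocks (a ::ₘ K) ((μ, e + 1) ::ₘ E)) := by
  simpa [blocks, ← Multiset.cons_coe, Multiset.cons_swap (Blk.J _ _)] using MDeg.add_right (deg_canon_M_J a e μ) (blocks K E)

theorem mdeg_J_J (K : Multiset ℕ) (E : Multiset (ℂ × ℕ)) {e f : ℕ} (μ : ℂ) (h : e + 1 ≤ f) :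
    MDeg (blocks K ((μ, f + 1) ::ₘ (μ, e) ::ₘ E)) (blocks K ((μ, f) ::ₘ (μ, e + 1) ::ₘ E)) := by
  simpa [blocks, ← Multiset.cons_coe] using MDeg.add_right (deg_canon_J_J e f μ h) (blocks K E)

theorem mdeg_J_zero (K : Multiset ℕ) (E : Multiset (ℂ × ℕ)) (μ : ℂ) :
    MDeg (blocks K ((μ, 0) ::ₘ E)) (blocks K E) := by
  simpa [blocks, ← Multiset.cons_coe] using MDeg.add_right (deg_canon_J_zero μ) (blocks K E)

theorem mdeg_zero_J (K : Multiset ℕ) (E : Multiset (ℂ × ℕ)) (μ : ℂ) :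
    MDeg (blocks K E) (blocks K ((μ, 0) ::ₘ E)) := by
  simpa [blocks, ← Multiset.cons_coe] using MDeg.add_right (deg_canon_zero_J μ) (blocks K E)

theorem mdeg_J_M_M (K : Multiset ℕ) (E : Multiset (ℂ × ℕ)) {a b : ℕ} (S : Finset ℂ) (m : ℂ → ℕ)
    (h : ∑ μ ∈ S, m μ = a + b + 1) :
    MDeg (blocks K (S.val.map (fun μ => (μ, m μ)) + E)) (blocks (b ::ₘ a ::ₘ K) E) := by
  have key := deg_canon_J_M_M a b (S.toList.map fun μ => (μ, m μ))
    (by simpa [Function.comp_def] using S.nodup_toList)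
    (by rw [← h]; simp [Function.comp_def])
  have hS : ((S.toList.map fun μ => Blk.J μ (m μ) : List Blk) : Multiset Blk) =
      S.val.map fun μ => Blk.J μ (m μ) := by
    rw [← Multiset.map_coe, Finset.coe_toList]
  have := MDeg.add_right key (blocks K E)
  simp only [List.map_map, Function.comp_def] at this
  rw [hS] at this
  convert this using 1
  · simp [blocks]; abel
  · simp [blocks, ← Multiset.cons_coe]

end SkewPencil

namespace SkewPencil

open Filter Topology

variable {m n m' n' p q p' q' ι κ ι' κ' τ : Type}

/-! ### Invariants: dimensions of spaces of chains -/

/-- The linear map `Y ↦ A Y D - B Y C`, where `C - λ D` is the pencil `shiftPen s t`. -/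
def tmap [Fintype n] (s t : ℕ) (X : Pen m n) :
    Matrix n (Fin s) ℂ →ₗ[ℂ] Matrix m (Fin t) ℂ where
  toFun Y := X.1 * Y * (shiftPen s t).2 - X.2 * Y * (shiftPen s t).1
  map_add' Y Z := by simp only [Matrix.mul_add, Matrix.add_mul]; abel
  map_smul' c Y := by simp [smul_sub]

/-- The nullity of `tmap s t X`. -/
def nul [Fintype n] (s t : ℕ) (X : Pen m n) : ℕ := Module.finrank ℂ (LinearMap.ker (tmap s t X))

theorem rank_tmap_act_le [Fintype m] [Fintype n] [Fintype q] (s t : ℕ) (F : Matrix p m ℂ)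
    (G : Matrix n q ℂ) (X : Pen m n) :
    (tmap s t (act F G X)).rank ≤ (tmap s t X).rank := by
  let f : Matrix m (Fin t) ℂ →ₗ[ℂ] Matrix p (Fin t) ℂ :=
    { toFun := fun Z => F * Z
      map_add' := fun Y Z => Matrix.mul_add _ _ _
      map_smul' := fun c Y => by simp }
  let g : Matrix q (Fin s) ℂ →ₗ[ℂ] Matrix n (Fin s) ℂ :=
    { toFun := fun Z => G * Z
      map_add' := fun Y Z => Matrix.mul_add _ _ _
      map_smul' := fun c Y => by simp }
  have : tmap s t (act F G X) = f.comp ((tmap s t X).comp g) := by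
    ext1 Y
    simp [tmap, act, f, g, Matrix.mul_sub, Matrix.mul_assoc]
  rw [this]
  exact (LinearMap.rank_comp_le_right _ _).trans (LinearMap.rank_comp_le_left _ _)

section

attribute [local instance] Matrix.normedAddCommGroup Matrix.normedSpace

theorem isOpen_le_rank_tmap [Fintype m] [Fintype n] (s t r : ℕ) :
    IsOpen {X : Pen m n | (r : Cardinal) ≤ (tmap s t X).rank} := by
  simp only [LinearMap.le_rank_iff_exists_linearIndependent_finset, Set.ofPred_exists,
    ← exists_prop]
  refine isOpen_biUnion fun u _ => ?_
  have : Continuous fun (X : Pen m n) => fun x : (u : Set (Matrix n (Fin s) ℂ)) =>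
      tmap s t X x := by
    refine continuous_pi fun x => ?_
    simp only [tmap, LinearMap.coe_mk, AddHom.coe_mk]
    fun_prop
  exact isOpen_setOfPred_linearIndependent.preimage this

end

theorem finrank_rank_tmap [Fintype m] [Fintype n] (s t : ℕ) (X : Pen m n) :
    (Module.finrank ℂ (LinearMap.range (tmap s t X)) : Cardinal) = (tmap s t X).rank :=
  Module.finrank_eq_rank _ _

theorem nul_add_rank [Fintype m] [Fintype n] (s t : ℕ) (X : Pen m n) :
    Module.finrank ℂ (LinearMap.range (tmap s t X)) + nul s t X = Fintype.card n * s := by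
  rw [nul, LinearMap.finrank_range_add_finrank_ker, Module.finrank_matrix]
  simp

theorem KDeg.nul_le [Fintype m] [Fintype n] [Fintype p] [Fintype q] {X : Pen m n} {Y : Pen p q}
    (h : KDeg X Y) (hn : Fintype.card n = Fintype.card q) (s t : ℕ) : nul s t X ≤ nul s t Y := by
  have h1 := nul_add_rank s t X
  have h2 := nul_add_rank s t Y
  suffices Module.finrank ℂ (LinearMap.range (tmap s t Y)) ≤
      Module.finrank ℂ (LinearMap.range (tmap s t X)) by rw [hn] at h1; omega
  obtain ⟨_, hZ, ⟨FG, rfl⟩⟩ := mem_closure_iff.1 h _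
    (isOpen_le_rank_tmap s t (Module.finrank ℂ (LinearMap.range (tmap s t Y))))
    (finrank_rank_tmap s t Y).le
  have hZ' : (Module.finrank ℂ (LinearMap.range (tmap s t Y)) : Cardinal) ≤
      (tmap s t (act FG.1 FG.2 X)).rank := hZ
  have := hZ'.trans (rank_tmap_act_le s t FG.1 FG.2 X)
  rw [← finrank_rank_tmap] at this
  exact_mod_cast this

theorem Deg.kdeg [Fintype ι] {P : Pen ι ι} {Q : Pen κ κ} (h : Deg P Q) : KDeg P Q :=
  closure_mono (by rintro _ ⟨S, rfl⟩; exact ⟨(Sᵀ, S), rfl⟩) h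

theorem nul_oplus [Fintype m] [Fintype n] [Fintype p] [Fintype q] (s t : ℕ) (X : Pen m n)
    (Y : Pen p q) : nul s t (oplus X Y) = nul s t X + nul s t Y := by
  rw [nul, nul, nul, ← Module.finrank_prod]
  have h : ∀ Z : Matrix (n ⊕ q) (Fin s) ℂ, tmap s t (oplus X Y) Z =
      fromRows (tmap s t X Z.toRows₁) (tmap s t Y Z.toRows₂) := by
    intro Z
    obtain ⟨Z₁, Z₂, rfl⟩ : ∃ Z₁ Z₂, Z = fromRows Z₁ Z₂ := ⟨_, _, (fromRows_toRows Z).symm⟩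
    ext (i | i) j <;>
      simp [tmap, oplus, fromBlocks_mul_fromRows, fromRows_mul]
  refine LinearEquiv.finrank_eq
    { toFun := fun Z => (⟨Z.1.toRows₁, ?_⟩, ⟨Z.1.toRows₂, ?_⟩)
      invFun := fun W => ⟨fromRows W.1.1 W.2.1, ?_⟩
      map_add' := fun _ _ => rfl
      map_smul' := fun _ _ => rfl
      left_inv := fun Z => Subtype.ext (fromRows_toRows _)
      right_inv := fun W => rfl }
  · have := Z.2
    rw [LinearMap.mem_ker, h] at this
    exact congrArg toRows₁ this
  · have := Z.2
    rw [LinearMap.mem_ker, h] at this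
    exact congrArg toRows₂ this
  · rw [LinearMap.mem_ker, h, toRows₁_fromRows, toRows₂_fromRows, W.1.2, W.2.2]
    exact fromRows_zero

theorem nul_hyp [Fintype m] [Fintype n] (s t : ℕ) (X : Pen m n) :
    nul s t (hyp X) = nul s t (tr X) + nul s t X := by
  rw [nul, nul, nul, ← Module.finrank_prod]
  have h : ∀ Z : Matrix (m ⊕ n) (Fin s) ℂ, tmap s t (hyp X) Z =
      fromRows (tmap s t X Z.toRows₂) (-tmap s t (tr X) Z.toRows₁) := by
    intro Z
    obtain ⟨Z₁, Z₂, rfl⟩ : ∃ Z₁ Z₂, Z = fromRows Z₁ Z₂ := ⟨_, _, (fromRows_toRows Z).symm⟩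
    ext (i | i) j <;>
      simp [tmap, hyp, tr, fromBlocks_mul_fromRows, fromRows_mul, neg_add_eq_sub]
  refine LinearEquiv.finrank_eq
    { toFun := fun Z => (⟨Z.1.toRows₁, ?_⟩, ⟨Z.1.toRows₂, ?_⟩)
      invFun := fun W => ⟨fromRows W.1.1 W.2.1, ?_⟩
      map_add' := fun _ _ => rfl
      map_smul' := fun _ _ => rfl
      left_inv := fun Z => Subtype.ext (fromRows_toRows _)
      right_inv := fun W => rfl }
  · have := Z.2
    rw [LinearMap.mem_ker, h] at this
    exact neg_eq_zero.1 (congrArg toRows₂ this)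
  · have := Z.2
    rw [LinearMap.mem_ker, h] at this
    exact congrArg toRows₁ this
  · rw [LinearMap.mem_ker, h, toRows₁_fromRows, toRows₂_fromRows, W.1.2, W.2.2]
    simp

theorem nm_transpose (q p : ℕ) (g : ℕ → ℕ → ℂ) : (nm q p g)ᵀ = nm p q fun i j => g j i := rfl

theorem mul_shiftPen_snd (q s t : ℕ) (y : ℕ → ℕ → ℂ) :
    nm q s y * (shiftPen s t).2 = nm q t fun i r => if r < s then y i r else 0 := by
  apply Matrix.transpose_injective
  rw [Matrix.transpose_mul, shiftPen, nm_transpose, nm_transpose, nm_transpose]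
  rw [← nm_diag_mul t s q fun i j => y j i]
  simp only [eq_comm]

theorem mul_shiftPen_fst (q s t : ℕ) (y : ℕ → ℕ → ℂ) :
    nm q s y * (shiftPen s t).1 = nm q t fun i r => if 1 ≤ r ∧ r ≤ s then y i (r - 1) else 0 := by
  apply Matrix.transpose_injective
  rw [Matrix.transpose_mul, shiftPen, nm_transpose, nm_transpose, nm_transpose]
  rw [← nm_down_mul t s q fun i j => y j i]

/-- The extension of a matrix by zero. -/
def ex {p s : ℕ} (Y : Matrix (Fin p) (Fin s) ℂ) (i r : ℕ) : ℂ :=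
  if h : i < p ∧ r < s then Y ⟨i, h.1⟩ ⟨r, h.2⟩ else 0

theorem nm_ex {p s : ℕ} (Y : Matrix (Fin p) (Fin s) ℂ) : nm p s (ex Y) = Y := by
  ext i j; simp [nm, ex]

theorem ex_nm {p s : ℕ} (y : ℕ → ℕ → ℂ) (i r : ℕ) :
    ex (nm p s y) i r = if i < p ∧ r < s then y i r else 0 := by
  simp [nm, ex]

theorem ex_eq_zero {p s : ℕ} (Y : Matrix (Fin p) (Fin s) ℂ) {i r : ℕ} (h : p ≤ i ∨ s ≤ r) :
    ex Y i r = 0 := dif_neg (by omega)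

theorem nm_eq_zero_iff (q p : ℕ) (g : ℕ → ℕ → ℂ) :
    nm q p g = 0 ↔ ∀ i r, i < q → r < p → g i r = 0 :=
  ⟨fun h i r hi hr => congrFun (congrFun h ⟨i, hi⟩) ⟨r, hr⟩, fun h => by
    ext i r; exact h i r i.2 r.2⟩

theorem mem_ker_tmap_shiftPen {k p s t : ℕ} (Y : Matrix (Fin p) (Fin s) ℂ) :
    Y ∈ LinearMap.ker (tmap s t (shiftPen k p)) ↔
      ∀ i r, i < k → r < t → ex Y (i + 1) r = if 1 ≤ r then ex Y i (r - 1) else 0 := by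
  have h : tmap s t (shiftPen k p) Y =
      nm k t fun i r => ex Y (i + 1) r - if 1 ≤ r then ex Y i (r - 1) else 0 := by
    conv_lhs => rw [← nm_ex Y]
    simp only [tmap, LinearMap.coe_mk, AddHom.coe_mk]
    have h1 : (shiftPen k p).1 * nm p s (ex Y) = nm k s fun i j => ex Y (i + 1) j := by
      rw [shiftPen, nm_up_mul]
      ext i j
      simp only [nm, of_apply]
      split_ifs with h
      · rfl
      · exact (ex_eq_zero Y (by omega)).symm
    have h2 : (shiftPen k p).2 * nm p s (ex Y) = nm k s (ex Y) := by
      rw [shiftPen, nm_diag_mul]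
      ext i j
      simp only [nm, of_apply]
      split_ifs with h
      · rfl
      · exact (ex_eq_zero Y (by omega)).symm
    rw [h1, h2, mul_shiftPen_snd, mul_shiftPen_fst]
    ext i r
    simp only [nm, of_apply, Matrix.sub_apply]
    congr 1
    · split_ifs with h
      · rfl
      · exact (ex_eq_zero Y (by omega)).symm
    · split_ifs
      · rfl
      · omega
      · exact (ex_eq_zero Y (by omega)).symm
      · rfl
  rw [LinearMap.mem_ker, h, nm_eq_zero_iff]
  simp only [sub_eq_zero]

theorem ex_of_mem_ker {k p s t : ℕ} {Y : Matrix (Fin p) (Fin s) ℂ}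
    (hY : Y ∈ LinearMap.ker (tmap s t (shiftPen k p))) (i : ℕ) (hi : i ≤ k) :
    ∀ r < t, ex Y i r = if i ≤ r then ex Y 0 (r - i) else 0 := by
  rw [mem_ker_tmap_shiftPen] at hY
  induction i with
  | zero => simp
  | succ i ih =>
    intro r hr
    rw [hY i r (by omega) hr]
    rcases r with _ | r
    · simp
    · simp only [Nat.add_sub_cancel, Nat.add_sub_add_right, Nat.add_le_add_iff_right]
      rw [if_pos (by omega), ih (by omega) r (by omega)]

theorem nul_shiftPen {k p s t d c : ℕ}
    (h1 : ∀ i r, i < k → r < t → ((i + 1 < p ∧ r < s ∧ i + 1 + c ≤ r ∧ r < i + 1 + c + d) ↔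
      (1 ≤ r ∧ i < p ∧ r - 1 < s ∧ i + c ≤ r - 1 ∧ r - 1 < i + c + d)))
    (h2 : ∀ m < s, (m < c ∨ c + d ≤ m) → ∃ i ≤ k, m + i < t ∧ (p ≤ i ∨ s ≤ m + i))
    (h3 : 0 < d → 0 < p) (h4 : c + d ≤ s)
    (h5 : ∀ i r, i < p → r < s → i ≤ k ∧ r < t) : nul s t (shiftPen k p) = d := by
  rw [nul]
  let e : LinearMap.ker (tmap s t (shiftPen k p)) ≃ₗ[ℂ] (Fin d → ℂ) :=
    { toFun := fun Y l => ex Y.1 0 (l + c)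
      invFun := fun g => ⟨nm p s fun i r => if h : i + c ≤ r ∧ r < i + c + d then
        g ⟨r - i - c, by omega⟩ else 0, by
          rw [mem_ker_tmap_shiftPen]
          intro i r hi hr
          have := h1 i r hi hr
          rw [ex_nm, ex_nm]
          by_cases h : 1 ≤ r ∧ i < p ∧ r - 1 < s ∧ i + c ≤ r - 1 ∧ r - 1 < i + c + d
          · have h' := this.2 h
            rw [if_pos ⟨h'.1, h'.2.1⟩, dif_pos ⟨h'.2.2.1, h'.2.2.2⟩, if_pos h.1,
              if_pos ⟨h.2.1, h.2.2.1⟩, dif_pos ⟨h.2.2.2.1, h.2.2.2.2⟩]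
            congr 2; omega
          · have h' := mt this.1 h
            split_ifs <;> first | rfl | (exfalso; omega)⟩
      map_add' := fun Y Z => by
        ext l; simp only [ex, Submodule.coe_add, Matrix.add_apply, Pi.add_apply]; split_ifs <;> simp
      map_smul' := fun a Y => by
        ext l; simp [ex]
      left_inv := fun Y => by
        apply Subtype.ext
        simp only
        conv_rhs => rw [← nm_ex Y.1]
        ext i r
        simp only [nm, of_apply]
        obtain ⟨hi, hr⟩ := h5 i r i.2 r.2
        rw [ex_of_mem_ker Y.2 i hi r hr]
        by_cases hir : (i : ℕ) ≤ r
        · rw [if_pos hir]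
          split_ifs with h
          · congr 1; omega
          · obtain ⟨j, hj, hjt, hj'⟩ := h2 (r - i) (by omega) (by omega)
            have := ex_of_mem_ker Y.2 j hj _ hjt
            rw [if_pos (by omega), ex_eq_zero _ hj', Nat.add_sub_cancel] at this
            exact this
        · rw [if_neg hir, dif_neg (by omega)]
      right_inv := fun g => by
        ext l
        have := l.2
        dsimp only
        rw [ex_nm, if_pos ⟨h3 (by omega), by omega⟩, dif_pos (by omega)]
        congr 1; ext; simp }
  rw [e.finrank_eq]; simp

theorem nul_shiftPen_M (k s : ℕ) : nul s (s + 1) (shiftPen k (k + 1)) = s - k :=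
  nul_shiftPen (c := 0) (by intros; omega)
    (fun m _ h => ⟨s - m, by omega, by omega, by omega⟩) (by omega) (by omega) (by intros; omega)

theorem nul_shiftPen_M' (k s : ℕ) : nul s s (shiftPen k (k + 1)) = s :=
  nul_shiftPen (c := 0) (by intros; omega) (by intros; omega) (by omega) (by omega)
    (by intros; omega)

theorem nul_shiftPen_J (e s : ℕ) : nul s s (shiftPen e e) = min s e :=
  nul_shiftPen (c := s - min s e) (by intros; omega)
    (fun m _ h => ⟨e, by omega, by omega, by omega⟩) (by omega) (by omega) (by intros; omega)
end SkewPencil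

namespace SkewPencil

open Filter Topology

variable {m n m' n' p q p' q' ι κ ι' κ' τ : Type}

/-- The columns of a matrix, extended by zero. -/
def colx {s : ℕ} (Y : Matrix n (Fin s) ℂ) (r : ℕ) : n → ℂ :=
  fun i => if h : r < s then Y i ⟨r, h⟩ else 0

theorem mul_shiftPen_snd_apply {s t : ℕ} (Y : Matrix n (Fin s) ℂ) (i : n) (r : Fin t) :
    (Y * (shiftPen s t).2) i r = colx Y r i := by
  have := congrFun (congrFun (mul_shiftPen_snd 1 s t fun _ j => colx Y j i) 0) r
  refine Eq.trans ?_ (this.trans ?_)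
  · simp only [Matrix.mul_apply]
    exact Finset.sum_congr rfl fun j _ => by simp [nm, colx]
  · simp only [nm, of_apply]
    split_ifs with h
    · rfl
    · simp [colx, h]

theorem mul_shiftPen_fst_apply {s t : ℕ} (Y : Matrix n (Fin s) ℂ) (i : n) (r : Fin t) :
    (Y * (shiftPen s t).1) i r = if 1 ≤ (r : ℕ) then colx Y (r - 1) i else 0 := by
  have := congrFun (congrFun (mul_shiftPen_fst 1 s t fun _ j => colx Y j i) 0) r
  refine Eq.trans ?_ (this.trans ?_)
  · simp only [Matrix.mul_apply]
    exact Finset.sum_congr rfl fun j _ => by simp [nm, colx]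
  · simp only [nm, of_apply]
    split_ifs with h h' h'
    · rfl
    · omega
    · simp [colx]; omega
    · rfl

theorem colx_mul [Fintype n] {s : ℕ} (A : Matrix m n ℂ) (Y : Matrix n (Fin s) ℂ) (r : ℕ) :
    colx (A * Y) r = A *ᵥ colx Y r := by
  ext i
  simp only [colx, mulVec, dotProduct, Matrix.mul_apply]
  split_ifs <;> simp

theorem mulVec_colx [Fintype n] {s t : ℕ} {X : Pen m n} {Y : Matrix n (Fin s) ℂ}
    (hY : Y ∈ LinearMap.ker (tmap s t X)) {r : ℕ} (hr : r < t) :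
    X.1 *ᵥ colx Y r = if 1 ≤ r then X.2 *ᵥ colx Y (r - 1) else 0 := by
  ext i
  have := congrFun (congrFun hY i) ⟨r, hr⟩
  simp only [tmap, LinearMap.coe_mk, AddHom.coe_mk, Matrix.sub_apply, mul_shiftPen_snd_apply,
    mul_shiftPen_fst_apply, colx_mul, Matrix.zero_apply, sub_eq_zero] at this
  rw [this]
  split_ifs <;> rfl

theorem nul_eq_zero_of_colx [Fintype n] {s t : ℕ} {X : Pen m n}
    (h : ∀ Y ∈ LinearMap.ker (tmap s t X), ∀ r < s, colx Y r = 0) : nul s t X = 0 := by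
  rw [nul, Submodule.finrank_eq_zero, Submodule.eq_bot_iff]
  intro Y hY
  ext i r
  have := congrFun (h Y hY r r.2) i
  simpa [colx] using this

theorem nul_eq_zero_of_fst [Fintype n] {s t : ℕ} (hst : s ≤ t) {X : Pen m n}
    (hX : ∀ y, X.1 *ᵥ y = 0 → y = 0) : nul s t X = 0 := by
  refine nul_eq_zero_of_colx fun Y hY r => ?_
  induction r with
  | zero =>
    intro hr
    exact hX _ (mulVec_colx hY (by omega))
  | succ r ih =>
    intro hr
    refine hX _ ((mulVec_colx hY (by omega)).trans ?_)
    simp [ih (by omega)]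

theorem nul_eq_zero_of_snd [Fintype n] {s t : ℕ} (hst : s < t) {X : Pen m n}
    (hX : ∀ y, X.2 *ᵥ y = 0 → y = 0) : nul s t X = 0 := by
  refine nul_eq_zero_of_colx fun Y hY => ?_
  have : ∀ c r, r + c + 1 = s → colx Y r = 0 := by
    intro c
    induction c with
    | zero =>
      intro r hr
      have h1 := mulVec_colx hY (r := r + 1) (by omega)
      have h2 : colx Y (r + 1) = 0 := by ext i; simp [colx]; omega
      rw [h2, mulVec_zero, if_pos (by omega)] at h1
      exact hX _ h1.symm
    | succ c ih =>
      intro r hr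
      have h1 := mulVec_colx hY (r := r + 1) (by omega)
      rw [ih (r + 1) (by omega), mulVec_zero, if_pos (by omega)] at h1
      exact hX _ h1.symm
  exact fun r hr => this (s - r - 1) r (by omega)

theorem tr_shiftPen_fst_inj (k : ℕ) (y : Fin k → ℂ) (hy : (tr (shiftPen k (k + 1))).1 *ᵥ y = 0) :
    y = 0 := by
  ext i
  have := congrFun hy i.succ
  simpa [tr, shiftPen, nm, mulVec, dotProduct, ← Fin.ext_iff] using this

theorem nul_tr_shiftPen_M (k s t : ℕ) (hst : s ≤ t) : nul s t (tr (shiftPen k (k + 1))) = 0 :=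
  nul_eq_zero_of_fst hst (tr_shiftPen_fst_inj k)

theorem nul_tr_shiftPen_J (e s : ℕ) : nul s s (tr (shiftPen e e)) = min s e := by
  have h1 : sub Fin.rev Fin.rev (tr (shiftPen e e)) = shiftPen e e := by
    refine Prod.ext ?_ ?_ <;> ext i j <;>
      simp only [sub, tr, shiftPen, nm, submatrix_apply, transpose_apply, of_apply, Fin.val_rev] <;>
      congr 1 <;> apply propext <;> omega
  have h2 : sub Fin.rev Fin.rev (shiftPen e e) = tr (shiftPen e e) := by
    conv_lhs => rw [← h1]
    simp only [sub, submatrix_submatrix, Function.comp_def, Fin.rev_rev]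
    rfl
  rw [← nul_shiftPen_J]
  refine le_antisymm ?_ ?_
  · have := (KDeg.sub (tr (shiftPen e e)) Fin.rev Fin.rev).nul_le rfl s s
    rwa [h1] at this
  · have := (KDeg.sub (shiftPen e e) Fin.rev Fin.rev).nul_le rfl s s
    rwa [h2] at this

theorem shiftPen_snd_self (e : ℕ) : (shiftPen e e).2 = 1 := by
  ext i j
  simp [shiftPen, nm, Matrix.one_apply, Fin.ext_iff, eq_comm]

theorem det_mob_shiftPen (e : ℕ) (c : ℂ) : (mob 1 c 0 1 (shiftPen e e)).1.det = c ^ e := by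
  rw [Matrix.det_of_isUpperTriangular]
  · simp [mob, shiftPen, nm]
  · intro i j hij
    have : (j : ℕ) < i := hij
    simp [mob, shiftPen, nm, show (j : ℕ) ≠ i + 1 by omega, show (j : ℕ) ≠ i by omega]

theorem mob_hyp (a b c d : ℂ) (X : Pen m n) : mob a b c d (hyp X) = hyp (mob a b c d X) := by
  refine Prod.ext ?_ ?_ <;> ext (i | i) (j | j) <;> simp [mob, hyp] <;> ring

theorem nul_mob_shiftPen_J {e s t : ℕ} (hst : s ≤ t) {c : ℂ} (hc : c ≠ 0) :
    nul s t (mob 1 c 0 1 (shiftPen e e)) = 0 :=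
  nul_eq_zero_of_fst hst fun _ => eq_zero_of_mulVec_eq_zero (by rw [det_mob_shiftPen]; positivity)

theorem nul_tr_mob_shiftPen_J {e s t : ℕ} (hst : s ≤ t) {c : ℂ} (hc : c ≠ 0) :
    nul s t (tr (mob 1 c 0 1 (shiftPen e e))) = 0 :=
  nul_eq_zero_of_fst hst fun _ => eq_zero_of_mulVec_eq_zero (by
    rw [tr, det_transpose, det_mob_shiftPen]; positivity)

/-- The contribution of a block to the dimension of the space of chains `A y₀ = 0`,
`A yᵢ = B yᵢ₋₁`, `B yₛ₋₁ = 0`. -/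
def Blk.nN (s : ℕ) : Blk → ℕ
  | M k => s - k
  | J _ _ => 0

/-- The contribution of a block to the dimension of the space of chains `(A - ν B) y₀ = 0`,
`(A - ν B) yᵢ = B yᵢ₋₁`. -/
def Blk.nH (ν : ℂ) (s : ℕ) : Blk → ℕ
  | M _ => s
  | J μ e => if μ = ν then 2 * min s e else 0

theorem nul_hyp_pen (b : Blk) (s : ℕ) : nul s (s + 1) (hyp b.pen) = b.nN s := by
  rw [nul_hyp]
  rcases b with k | ⟨μ, e⟩
  · change nul s (s + 1) (tr (mob 1 0 0 1 (shiftPen k (k + 1)))) +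
      nul s (s + 1) (mob 1 0 0 1 (shiftPen k (k + 1))) = s - k
    rw [mob_id, nul_tr_shiftPen_M _ _ _ (by omega), nul_shiftPen_M, zero_add]
  · change nul s (s + 1) (tr (mob 1 μ 0 1 (shiftPen e e))) +
      nul s (s + 1) (mob 1 μ 0 1 (shiftPen e e)) = 0
    rw [nul_eq_zero_of_snd (by omega), nul_eq_zero_of_snd (by omega)]
    · intro y; simp [mob, shiftPen_snd_self]
    · intro y; simp [mob, tr, shiftPen_snd_self]

theorem nul_mob_hyp_pen (b : Blk) (ν : ℂ) (s : ℕ) :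
    nul s s (mob 1 (-ν) 0 1 (hyp b.pen)) = b.nH ν s := by
  rw [mob_hyp]
  rcases b with k | ⟨μ, e⟩
  · change nul s s (hyp (mob 1 (-ν) 0 1 (mob 1 0 0 1 (shiftPen k (k + 1))))) = s
    rw [mob_id]
    have h1 := (kdeg_shiftPen_mob k (-ν)).hyp.kdeg.nul_le rfl s s
    have h2 := (kdeg_mob_shiftPen k (-ν)).hyp.kdeg.nul_le rfl s s
    have h3 : nul s s (hyp (shiftPen k (k + 1))) = s := by
      rw [nul_hyp, nul_tr_shiftPen_M _ _ _ le_rfl, nul_shiftPen_M', zero_add]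
    omega
  · change nul s s (hyp (mob 1 (-ν) 0 1 (mob 1 μ 0 1 (shiftPen e e)))) = if μ = ν then 2 * min s e else 0
    have h : mob 1 (-ν) 0 1 (mob 1 μ 0 1 (shiftPen e e)) = mob 1 (μ - ν) 0 1 (shiftPen e e) := by
      rw [mob_mob]; congr 1 <;> ring
    rw [h, nul_hyp]
    split_ifs with hμ
    · rw [hμ, sub_self, mob_id, nul_shiftPen_J, nul_tr_shiftPen_J]; ring
    · rw [nul_mob_shiftPen_J le_rfl (sub_ne_zero.2 hμ),
        nul_tr_mob_shiftPen_J le_rfl (sub_ne_zero.2 hμ)]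

theorem nul_canon (l : List Blk) (s : ℕ) :
    nul s (s + 1) (canon l) = (l.map (Blk.nN s)).sum := by
  induction l with
  | nil => exact nul_eq_zero_of_fst (by omega) fun y _ => funext fun i : Empty => i.elim
  | cons b l ih =>
    refine (nul_oplus _ _ (hyp b.pen) (canon l)).trans ?_
    rw [nul_hyp_pen, ih, List.map_cons, List.sum_cons]

theorem nul_mob_canon (l : List Blk) (ν : ℂ) (s : ℕ) :
    nul s s (mob 1 (-ν) 0 1 (canon l)) = (l.map (Blk.nH ν s)).sum := by
  induction l with
  | nil => exact nul_eq_zero_of_fst le_rfl fun y _ => funext fun i : Empty => i.elim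
  | cons b l ih =>
    refine (congrArg (nul s s) (mob_oplus 1 (-ν) 0 1 (hyp b.pen) (canon l))).trans ?_
    rw [nul_oplus, nul_mob_hyp_pen, ih, List.map_cons, List.sum_cons]

/-- The dimensions of the spaces of chains ending in the kernel of `B`. -/
def NN (K : Multiset ℕ) (s : ℕ) : ℕ := (K.map fun k => s - k).sum

/-- Half of the contribution of the eigenvalue `ν` to the dimensions of the spaces of chains. -/
def HH (E : Multiset (ℂ × ℕ)) (ν : ℂ) (s : ℕ) : ℕ :=
  (E.map fun x => if x.1 = ν then min s x.2 else 0).sum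

theorem nul_canon_blocks {l : List Blk} {K : Multiset ℕ} {E : Multiset (ℂ × ℕ)}
    (hl : (l : Multiset Blk) = blocks K E) (s : ℕ) : nul s (s + 1) (canon l) = NN K s := by
  rw [nul_canon, ← Multiset.sum_coe, ← Multiset.map_coe, hl]
  simp [blocks, Blk.nN, NN, Function.comp_def]

theorem nul_mob_canon_blocks {l : List Blk} {K : Multiset ℕ} {E : Multiset (ℂ × ℕ)}
    (hl : (l : Multiset Blk) = blocks K E) (ν : ℂ) (s : ℕ) :
    nul s s (mob 1 (-ν) 0 1 (canon l)) = K.card * s + 2 * HH E ν s := by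
  rw [nul_mob_canon, ← Multiset.sum_coe, ← Multiset.map_coe, hl]
  simp [blocks, Blk.nH, HH, Function.comp_def, ← Multiset.sum_map_mul_left]

/-- The size of a canonical pencil. -/
def size (K : Multiset ℕ) (E : Multiset (ℂ × ℕ)) : ℕ :=
  (K.map fun k => 2 * k + 1).sum + (E.map fun x => 2 * x.2).sum

theorem card_idx {l : List Blk} {K : Multiset ℕ} {E : Multiset (ℂ × ℕ)}
    (hl : (l : Multiset Blk) = blocks K E) : Fintype.card (Idx l) = size K E := by
  have : Fintype.card (Idx l) = (l.map fun b => b.row + b.col).sum := by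
    clear hl
    induction l with
    | nil => exact Fintype.card_eq_zero (α := Empty)
    | cons b l ih =>
      refine (Fintype.card_sum (α := Fin b.row ⊕ Fin b.col) (β := Idx l)).trans ?_
      rw [ih]; simp
  rw [this, ← Multiset.sum_coe, ← Multiset.map_coe, hl]
  simp [blocks, Blk.row, Blk.col, size, two_mul, add_assoc]

theorem Deg.invariants {l l' : List Blk} {K K' : Multiset ℕ} {E E' : Multiset (ℂ × ℕ)}
    (h : Deg (canon l) (canon l')) (hl : (l : Multiset Blk) = blocks K E)
    (hl' : (l' : Multiset Blk) = blocks K' E') (hs : size K E = size K' E') :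
    (∀ s, NN K s ≤ NN K' s) ∧
      ∀ ν s, K.card * s + 2 * HH E ν s ≤ K'.card * s + 2 * HH E' ν s := by
  have hc : Fintype.card (Idx l) = Fintype.card (Idx l') := by rw [card_idx hl, card_idx hl', hs]
  refine ⟨fun s => ?_, fun ν s => ?_⟩
  · rw [← nul_canon_blocks hl, ← nul_canon_blocks hl']
    exact h.kdeg.nul_le hc _ _
  · rw [← nul_mob_canon_blocks hl, ← nul_mob_canon_blocks hl']
    exact (h.kdeg.mob _ _ _ _).nul_le hc _ _

end SkewPencil

namespace SkewPencil

/-! ### Combinatorics of the invariants -/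

theorem NN_zero (K : Multiset ℕ) : NN K 0 = 0 := by simp [NN]

theorem HH_zero (E : Multiset (ℂ × ℕ)) (ν : ℂ) : HH E ν 0 = 0 := by simp [HH]

theorem NN_cons (k : ℕ) (K : Multiset ℕ) (s : ℕ) : NN (k ::ₘ K) s = (s - k) + NN K s := by
  simp [NN]

theorem HH_cons (x : ℂ × ℕ) (E : Multiset (ℂ × ℕ)) (ν : ℂ) (s : ℕ) :
    HH (x ::ₘ E) ν s = (if x.1 = ν then min s x.2 else 0) + HH E ν s := by
  simp [HH]

/-- The number of elements which are at most `s`. -/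
def cle (K : Multiset ℕ) (s : ℕ) : ℕ := K.countP (· ≤ s)

/-- The number of blocks with eigenvalue `ν` of size greater than `s`. -/
def cgt (E : Multiset (ℂ × ℕ)) (ν : ℂ) (s : ℕ) : ℕ := E.countP fun x => x.1 = ν ∧ s < x.2

/-- The total size of the blocks with eigenvalue `ν`. -/
def tot (E : Multiset (ℂ × ℕ)) (ν : ℂ) : ℕ := (E.map fun x => if x.1 = ν then x.2 else 0).sum

/-- The total size of the blocks. -/
def sumE (E : Multiset (ℂ × ℕ)) : ℕ := (E.map Prod.snd).sum

theorem NN_succ (K : Multiset ℕ) (s : ℕ) : NN K (s + 1) = NN K s + cle K s := by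
  induction K using Multiset.induction with
  | empty => simp [NN, cle]
  | cons k K ih =>
    rw [NN_cons, NN_cons, ih, cle, cle, Multiset.countP_cons]
    split_ifs <;> omega

theorem HH_succ (E : Multiset (ℂ × ℕ)) (ν : ℂ) (s : ℕ) :
    HH E ν (s + 1) = HH E ν s + cgt E ν s := by
  induction E using Multiset.induction with
  | empty => simp [HH, cgt]
  | cons x E ih =>
    simp only [HH_cons, cgt, Multiset.countP_cons] at ih ⊢
    by_cases h1 : x.1 = ν <;> simp only [h1, true_and, false_and, if_false] <;>
      (try split_ifs) <;> omega

theorem cle_le_card (K : Multiset ℕ) (s : ℕ) : cle K s ≤ K.card := Multiset.countP_le_card _ _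

theorem cle_eq_card {K : Multiset ℕ} {s : ℕ} (h : ∀ k ∈ K, k ≤ s) : cle K s = K.card :=
  Multiset.countP_eq_card.2 h

theorem cle_zero (K : Multiset ℕ) : cle K 0 = K.count 0 := by
  simp [cle, Multiset.count, eq_comm]

theorem cle_succ (K : Multiset ℕ) (s : ℕ) : cle K (s + 1) = cle K s + K.count (s + 1) := by
  induction K using Multiset.induction with
  | empty => simp [cle]
  | cons k K ih =>
    simp only [cle, Multiset.countP_cons, Multiset.count_cons] at ih ⊢
    split_ifs <;> omega

theorem cgt_anti (E : Multiset (ℂ × ℕ)) (ν : ℂ) {s t : ℕ} (h : s ≤ t) :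
    cgt E ν t ≤ cgt E ν s := by
  induction E using Multiset.induction with
  | empty => simp [cgt]
  | cons x E ih =>
    simp only [cgt, Multiset.countP_cons] at ih ⊢
    by_cases h1 : x.1 = ν <;> simp only [h1, true_and, false_and, if_false] <;>
      (try split_ifs) <;> omega

theorem cgt_eq_add (E : Multiset (ℂ × ℕ)) (ν : ℂ) {s t : ℕ} (h : s ≤ t) :
    cgt E ν s = cgt E ν t + (E.filter fun x => x.1 = ν ∧ s < x.2 ∧ x.2 ≤ t).card := by
  rw [← Multiset.countP_eq_card_filter]
  induction E using Multiset.induction with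
  | empty => simp [cgt]
  | cons x E ih =>
    simp only [cgt, Multiset.countP_cons] at ih ⊢
    by_cases h1 : x.1 = ν <;> simp only [h1, true_and, false_and, if_false] <;>
      (try split_ifs) <;> omega

theorem HH_le_tot (E : Multiset (ℂ × ℕ)) (ν : ℂ) (s : ℕ) : HH E ν s ≤ tot E ν := by
  induction E using Multiset.induction with
  | empty => simp [HH]
  | cons x E ih =>
    rw [HH_cons]
    simp only [tot, Multiset.map_cons, Multiset.sum_cons] at ih ⊢
    split_ifs <;> omega

theorem HH_eq_tot {E : Multiset (ℂ × ℕ)} {ν : ℂ} {s : ℕ} (h : ∀ x ∈ E, x.1 = ν → x.2 ≤ s) :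
    HH E ν s = tot E ν := by
  refine congrArg Multiset.sum (Multiset.map_congr rfl fun x hx => ?_)
  split_ifs with hν
  · exact min_eq_right (h x hx hν)
  · rfl

theorem tot_le_sumE (E : Multiset (ℂ × ℕ)) (ν : ℂ) : tot E ν ≤ sumE E := by
  refine Multiset.sum_map_le_sum_map _ _ fun x _ => ?_
  split_ifs <;> simp

theorem le_sumE {E : Multiset (ℂ × ℕ)} {x : ℂ × ℕ} (h : x ∈ E) : x.2 ≤ sumE E :=
  Multiset.le_sum_of_mem (Multiset.mem_map_of_mem _ h)

theorem sum_tot {E : Multiset (ℂ × ℕ)} {S : Finset ℂ} (h : ∀ x ∈ E, x.1 ∈ S) :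
    ∑ ν ∈ S, tot E ν = sumE E := by
  induction E using Multiset.induction with
  | empty => simp [tot, sumE]
  | cons x E ih =>
    have h1 : ∀ ν, tot (x ::ₘ E) ν = (if x.1 = ν then x.2 else 0) + tot E ν := by simp [tot]
    simp only [h1, Finset.sum_add_distrib, ih fun y hy => h y (Multiset.mem_cons_of_mem hy)]
    simp [sumE, h x (Multiset.mem_cons_self _ _)]

theorem card_mul_le (K : Multiset ℕ) (s : ℕ) : K.card * s ≤ NN K s + K.sum := by
  induction K using Multiset.induction with
  | empty => simp
  | cons k K ih => rw [NN_cons, Multiset.card_cons, Multiset.sum_cons, add_mul]; omega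

theorem NN_add_sum {K : Multiset ℕ} {s : ℕ} (h : ∀ k ∈ K, k ≤ s) :
    NN K s + K.sum = K.card * s := by
  induction K using Multiset.induction with
  | empty => simp [NN]
  | cons k K ih =>
    rw [NN_cons, Multiset.card_cons, Multiset.sum_cons, add_mul,
      ← ih fun x hx => h x (Multiset.mem_cons_of_mem hx)]
    have := h k (Multiset.mem_cons_self _ _)
    omega

theorem size_eq (K : Multiset ℕ) (E : Multiset (ℂ × ℕ)) :
    size K E = 2 * K.sum + K.card + 2 * sumE E := by
  have : (K.map fun k => 2 * k).sum = 2 * K.sum := by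
    simpa using Multiset.sum_map_mul_left (s := K) (a := 2) (f := id)
  simp [size, sumE, Multiset.sum_map_add, Multiset.sum_map_mul_left, this]

/-- A nonnegative sequence starting at zero either has an excursion between two zeros, or
its zeros form an initial interval. -/
theorem excursion (f : ℕ → ℕ) (h0 : f 0 = 0) :
    (∃ i j, i + 2 ≤ j ∧ f i = 0 ∧ f j = 0 ∧ ∀ s, i < s → s < j → 0 < f s) ∨
      ∀ s t, t ≤ s → f s = 0 → f t = 0 := by
  by_contra! h
  obtain ⟨h1, s, t, hts, hs, ht⟩ := h
  have hj : ∃ j, t ≤ j ∧ f j = 0 := ⟨s, hts, hs⟩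
  classical
  let i := Nat.findGreatest (fun i => f i = 0) t
  have hi : f i = 0 := Nat.findGreatest_spec (P := fun i => f i = 0) (Nat.zero_le t) h0
  have hit : i ≤ t := Nat.findGreatest_le t
  obtain ⟨htj, hj0⟩ := Nat.find_spec hj
  have hit' : i ≠ t := fun h => ht (h ▸ hi)
  have htj' : t ≠ Nat.find hj := fun h => ht (h ▸ hj0)
  obtain ⟨u, hu1, hu2, hu3⟩ := h1 i (Nat.find hj) (by omega) hi hj0
  rcases le_total u t with hut | hut
  · exact Nat.findGreatest_is_greatest hu1 hut (by omega)
  · exact Nat.find_min hj hu2 ⟨hut, by omega⟩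

theorem mem_of_kink {K₁ K₂ : Multiset ℕ} {i : ℕ} (h : ∀ s, NN K₁ s ≤ NN K₂ s)
    (hi : NN K₂ i = NN K₁ i) (h' : cle K₁ i < cle K₂ i) :
    cle K₂ i - cle K₁ i ≤ K₂.count i := by
  rcases i with _ | i
  · rw [← cle_zero]; omega
  · have h1 := NN_succ K₁ i
    have h2 := NN_succ K₂ i
    have h3 := cle_succ K₁ i
    have h4 := cle_succ K₂ i
    have := h i
    omega

end SkewPencil

namespace SkewPencil

/-- Comparison of the invariants of two canonical pencils of the same size, where the numbers of
`M`-blocks differ by `2 d`. -/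
structure Dom (d : ℕ) (K₁ : Multiset ℕ) (E₁ : Multiset (ℂ × ℕ)) (K₂ : Multiset ℕ)
    (E₂ : Multiset (ℂ × ℕ)) : Prop where
  card : K₂.card = K₁.card + 2 * d
  size : size K₁ E₁ = size K₂ E₂
  nn : ∀ s, NN K₁ s ≤ NN K₂ s
  hh : ∀ ν s, HH E₁ ν s ≤ d * s + HH E₂ ν s

/-- The part of the termination measure which decreases when moving boxes inside `K` or `E`. -/
def spread (K : Multiset ℕ) (E : Multiset (ℂ × ℕ)) : ℕ :=
  (K.map fun k => k ^ 2).sum + (sumE E ^ 2 - (E.map fun x => x.2 ^ 2).sum)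

/-- A canonical pencil immediately above the second one, still below the first one. -/
def HasStep (d : ℕ) (K₁ : Multiset ℕ) (E₁ : Multiset (ℂ × ℕ)) (K₂ : Multiset ℕ)
    (E₂ : Multiset (ℂ × ℕ)) : Prop :=
  ∃ d' K E, Dom d' K₁ E₁ K E ∧ MDeg (blocks K E) (blocks K₂ E₂) ∧
    (d = d' + 1 ∨ d = d' ∧ (sumE E < sumE E₂ ∨ sumE E = sumE E₂ ∧ spread K E < spread K₂ E₂))

variable {d : ℕ} {K₁ K₂ : Multiset ℕ} {E₁ E₂ : Multiset (ℂ × ℕ)}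

theorem sumE_cons (x : ℂ × ℕ) (E : Multiset (ℂ × ℕ)) : sumE (x ::ₘ E) = x.2 + sumE E := by
  simp [sumE]

theorem sum_sq_le (E : Multiset (ℂ × ℕ)) : (E.map fun x => x.2 ^ 2).sum ≤ sumE E ^ 2 := by
  induction E using Multiset.induction with
  | empty => simp [sumE]
  | cons x E ih =>
    rw [sumE_cons, Multiset.map_cons, Multiset.sum_cons]
    nlinarith [Nat.zero_le (x.2 * sumE E)]

theorem hasStep_M_M (h : Dom d K₁ E₁ K₂ E₂) {K : Multiset ℕ} {a b : ℕ} (hK : K₂ = a ::ₘ b ::ₘ K)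
    (hab : a + 2 ≤ b) (hs : ∀ s, a < s → s < b → NN K₁ s < NN K₂ s) :
    HasStep d K₁ E₁ K₂ E₂ := by
  obtain ⟨c, rfl⟩ : ∃ c, b = c + 1 := ⟨b - 1, by omega⟩
  refine ⟨d, (a + 1) ::ₘ c ::ₘ K, E₂, ⟨?_, ?_, fun s => ?_, h.hh⟩,
    hK ▸ mdeg_M_M K E₂ (by omega), Or.inr ⟨rfl, Or.inr ⟨rfl, ?_⟩⟩⟩
  · rw [← h.card, hK]; simp
  · rw [h.size, hK]; simp only [size_eq, Multiset.sum_cons, Multiset.card_cons]; ring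
  · have h1 := h.nn s
    have h2 := hs s
    simp only [hK, NN_cons] at h1 h2 ⊢
    omega
  · simp only [spread, hK, Multiset.map_cons, Multiset.sum_cons]
    nlinarith

theorem hasStep_M_J (h : Dom d K₁ E₁ K₂ E₂) {K : Multiset ℕ} {E : Multiset (ℂ × ℕ)} {a e : ℕ}
    {μ : ℂ} (hK : K₂ = a ::ₘ K) (hE : E₂ = (μ, e + 1) ::ₘ E)
    (hs : ∀ s, a < s → NN K₁ s < NN K₂ s) (hs' : ∀ s, e < s → HH E₁ μ s < d * s + HH E₂ μ s) :
    HasStep d K₁ E₁ K₂ E₂ := by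
  refine ⟨d, (a + 1) ::ₘ K, (μ, e) ::ₘ E, ⟨?_, ?_, fun s => ?_, fun ν s => ?_⟩,
    hK ▸ hE ▸ mdeg_M_J K E a e μ, Or.inr ⟨rfl, Or.inl ?_⟩⟩
  · rw [← h.card, hK]; simp
  · rw [h.size, hK, hE]
    simp only [size_eq, Multiset.sum_cons, Multiset.card_cons, sumE_cons]; ring
  · have h1 := h.nn s
    have h2 := hs s
    simp only [hK, NN_cons] at h1 h2 ⊢
    omega
  · have h1 := h.hh ν s
    have h2 := hs' s
    simp only [hE, HH_cons] at h1 h2 ⊢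
    by_cases hν : μ = ν
    · subst hν
      simp only [if_true] at h1 h2 ⊢
      omega
    · simpa only [hν, if_false] using h1
  · simp [hE, sumE_cons]

theorem hasStep_J_J (h : Dom d K₁ E₁ K₂ E₂) {E : Multiset (ℂ × ℕ)} {e f : ℕ}
    {μ : ℂ} (hE : E₂ = (μ, f) ::ₘ (μ, e + 1) ::ₘ E) (hef : e + 1 ≤ f)
    (hs' : ∀ s, e < s → s ≤ f → HH E₁ μ s < d * s + HH E₂ μ s) :
    HasStep d K₁ E₁ K₂ E₂ := by
  have hsum : sumE ((μ, f + 1) ::ₘ (μ, e) ::ₘ E) = sumE E₂ := by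
    rw [hE]; simp only [sumE_cons]; ring
  refine ⟨d, K₂, (μ, f + 1) ::ₘ (μ, e) ::ₘ E, ⟨h.card, ?_, h.nn, fun ν s => ?_⟩,
    hE ▸ mdeg_J_J K₂ E μ hef, Or.inr ⟨rfl, Or.inr ⟨hsum, ?_⟩⟩⟩
  · rw [h.size, size_eq, size_eq, hsum]
  · have h1 := h.hh ν s
    have h2 := hs' s
    simp only [hE, HH_cons] at h1 h2 ⊢
    by_cases hν : μ = ν
    · subst hν
      simp only [if_true] at h1 h2 ⊢
      omega
    · simpa only [hν, if_false] using h1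
  · have h1 := sum_sq_le ((μ, f + 1) ::ₘ (μ, e) ::ₘ E)
    have h2 := sum_sq_le E₂
    rw [spread, spread, hsum]
    rw [hsum] at h1
    have h3 : (E₂.map fun x => x.2 ^ 2).sum <
        (((μ, f + 1) ::ₘ (μ, e) ::ₘ E).map fun x => x.2 ^ 2).sum := by
      simp only [hE, Multiset.map_cons, Multiset.sum_cons]
      nlinarith
    omega

theorem HH_map (S : Finset ℂ) (m : ℂ → ℕ) (E : Multiset (ℂ × ℕ)) (ν : ℂ) (s : ℕ) :
    HH (S.val.map (fun μ => (μ, m μ)) + E) ν s =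
      (if ν ∈ S then min s (m ν) else 0) + HH E ν s := by
  simp only [HH, Multiset.map_add, Multiset.sum_add, Multiset.map_map, Function.comp_def]
  congr 1
  change ∑ μ ∈ S, (if μ = ν then min s (m μ) else 0) = _
  rw [Finset.sum_ite_eq']

theorem sumE_map (S : Finset ℂ) (m : ℂ → ℕ) (E : Multiset (ℂ × ℕ)) :
    sumE (S.val.map (fun μ => (μ, m μ)) + E) = ∑ μ ∈ S, m μ + sumE E := by
  simp [sumE]

theorem hasStep_J_M_M (h : Dom (d + 1) K₁ E₁ K₂ E₂) {K : Multiset ℕ} {a b : ℕ}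
    (hK : K₂ = b ::ₘ a ::ₘ K) (S : Finset ℂ) (m : ℂ → ℕ) (hm : ∑ μ ∈ S, m μ = a + b + 1)
    (hm' : ∀ μ ∉ S, m μ = 0)
    (hs : ∀ s, NN K₁ s + (s - a) + (s - b) ≤ NN K₂ s)
    (hs' : ∀ ν s, m ν < s → HH E₁ ν s + (s - m ν) ≤ (d + 1) * s + HH E₂ ν s) :
    HasStep (d + 1) K₁ E₁ K₂ E₂ := by
  refine ⟨d, K, S.val.map (fun μ => (μ, m μ)) + E₂, ⟨?_, ?_, fun s => ?_, fun ν s => ?_⟩,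
    hK ▸ mdeg_J_M_M K E₂ S m hm, Or.inl rfl⟩
  · have := h.card
    rw [hK] at this
    simp only [Multiset.card_cons] at this
    omega
  · rw [h.size, size_eq, size_eq, sumE_map, hm, hK]
    simp only [Multiset.card_cons, Multiset.sum_cons]
    ring
  · have := hs s
    rw [hK, NN_cons, NN_cons] at this
    omega
  · rw [HH_map]
    have h1 := h.hh ν s
    have h2 := hs' ν s
    rw [add_mul] at h1 h2
    have h3 := hm' ν
    split_ifs with hν
    · omega
    · rw [h3 hν] at h2
      omega

end SkewPencil

namespace SkewPencil

variable {d : ℕ} {K₁ K₂ : Multiset ℕ} {E₁ E₂ : Multiset (ℂ × ℕ)}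

theorem exists_cons_cons {α : Type} {E : Multiset α} (p : α → Prop) [DecidablePred p]
    (h : 2 ≤ (E.filter p).card) : ∃ x y F, E = x ::ₘ y ::ₘ F ∧ p x ∧ p y := by
  obtain ⟨x, hx⟩ := Multiset.card_pos_iff_exists_mem.1 (show 0 < (E.filter p).card by omega)
  obtain ⟨F, hF⟩ := Multiset.exists_cons_of_mem hx
  rw [hF, Multiset.card_cons] at h
  obtain ⟨y, hy⟩ := Multiset.card_pos_iff_exists_mem.1 (show 0 < F.card by omega)
  obtain ⟨G, rfl⟩ := Multiset.exists_cons_of_mem hy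
  have hle : x ::ₘ y ::ₘ G ≤ E := hF ▸ Multiset.filter_le p E
  obtain ⟨R, rfl⟩ := Multiset.le_iff_exists_add.1 hle
  have hy' : y ∈ Multiset.filter p (x ::ₘ y ::ₘ G + R) := by rw [hF]; simp
  exact ⟨x, y, G + R, by simp, (Multiset.mem_filter.1 hx).2, (Multiset.mem_filter.1 hy').2⟩

theorem hasStep_of_excursion_NN (h : Dom d K₁ E₁ K₂ E₂) {i j : ℕ} (hij : i + 2 ≤ j)
    (hi : NN K₂ i = NN K₁ i) (hj : NN K₂ j = NN K₁ j)
    (hs : ∀ s, i < s → s < j → NN K₁ s < NN K₂ s) : HasStep d K₁ E₁ K₂ E₂ := by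
  have ha : i ∈ K₂ := by
    have h1 := NN_succ K₁ i
    have h2 := NN_succ K₂ i
    have h3 := hs (i + 1) (by omega) (by omega)
    have := mem_of_kink h.nn hi (by omega)
    exact Multiset.count_pos.1 (by omega)
  have hb : j ∈ K₂ := by
    obtain ⟨j, rfl⟩ : ∃ k, j = k + 1 := ⟨j - 1, by omega⟩
    have h1 := NN_succ K₁ j
    have h2 := NN_succ K₂ j
    have h3 := hs j (by omega) (by omega)
    have h4 := NN_succ K₁ (j + 1)
    have h5 := NN_succ K₂ (j + 1)
    have := h.nn (j + 1 + 1)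
    have := mem_of_kink h.nn hj
    have h6 := cle_succ K₁ j
    have h7 := cle_succ K₂ j
    exact Multiset.count_pos.1 (by omega)
  obtain ⟨K, rfl⟩ := Multiset.exists_cons_of_mem ha
  obtain hb | hb := Multiset.mem_cons.1 hb
  · omega
  obtain ⟨K, rfl⟩ := Multiset.exists_cons_of_mem hb
  exact hasStep_M_M h rfl hij hs

theorem hasStep_of_excursion_HH (h : Dom d K₁ E₁ K₂ E₂) (ν : ℂ) {i j : ℕ} (hij : i + 2 ≤ j)
    (hi : d * i + HH E₂ ν i = HH E₁ ν i) (hj : d * j + HH E₂ ν j = HH E₁ ν j)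
    (hs : ∀ s, i < s → s < j → HH E₁ ν s < d * s + HH E₂ ν s) : HasStep d K₁ E₁ K₂ E₂ := by
  obtain ⟨j, rfl⟩ : ∃ k, j = k + 1 := ⟨j - 1, by omega⟩
  have h1 := HH_succ E₁ ν i
  have h2 := HH_succ E₂ ν i
  have h3 := HH_succ E₁ ν j
  have h4 := HH_succ E₂ ν j
  have h5 := hs (i + 1) (by omega) (by omega)
  have h6 := hs j (by omega) (by omega)
  have h7 := cgt_eq_add E₂ ν (show i ≤ j by omega)
  have h8 := cgt_anti E₁ ν (show i ≤ j by omega)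
  rw [mul_add] at h5 hj
  obtain ⟨⟨μ, e⟩, ⟨μ', f⟩, F, hE, hx, hy⟩ := exists_cons_cons
    (E := E₂) (fun x : ℂ × ℕ => x.1 = ν ∧ i < x.2 ∧ x.2 ≤ j) (by omega)
  obtain ⟨rfl, he, he'⟩ := hx
  obtain ⟨hμ, hf, hf'⟩ := hy
  dsimp only at *
  subst hμ
  rcases le_total e f with hef | hef
  · obtain ⟨e, rfl⟩ : ∃ k, e = k + 1 := ⟨e - 1, by omega⟩
    exact hasStep_J_J h (hE.trans (Multiset.cons_swap _ _ _)) hef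
      fun s hs1 hs2 => hs s (by omega) (by omega)
  · obtain ⟨f, rfl⟩ : ∃ k, f = k + 1 := ⟨f - 1, by omega⟩
    exact hasStep_J_J h hE hef fun s hs1 hs2 => hs s (by omega) (by omega)

theorem eq_of_NN_eq (h : ∀ s, NN K₁ s = NN K₂ s) : K₁ = K₂ := by
  have hc : ∀ s, cle K₁ s = cle K₂ s := fun s => by
    have h1 := NN_succ K₁ s
    have h2 := NN_succ K₂ s
    have := h s
    have := h (s + 1)
    omega
  refine Multiset.ext.2 fun s => ?_
  rcases s with _ | s
  · rw [← cle_zero, ← cle_zero, hc]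
  · have h1 := cle_succ K₁ s
    have h2 := cle_succ K₂ s
    have := hc s
    have := hc (s + 1)
    omega

/-- If the zeros of the defects form initial intervals and the numbers of blocks agree, equality
of the total sizes of the `J`-blocks implies equality of all their invariants. -/
theorem HH_eq_of_sumE_eq (hE : sumE E₁ = sumE E₂) (hh : ∀ ν s, HH E₁ ν s ≤ HH E₂ ν s)
    (hz : ∀ ν s t, t ≤ s → HH E₁ ν s = HH E₂ ν s → HH E₁ ν t = HH E₂ ν t) (ν : ℂ) (s : ℕ) :
    HH E₁ ν s = HH E₂ ν s := by
  classical
  have h1 : ∀ b, sumE E₁ + sumE E₂ ≤ b → ∀ ν, HH E₁ ν b = tot E₁ ν ∧ HH E₂ ν b = tot E₂ ν :=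
    fun b hb ν => ⟨HH_eq_tot fun x hx _ => (le_sumE hx).trans (by omega),
      HH_eq_tot fun x hx _ => (le_sumE hx).trans (by omega)⟩
  have hle : ∀ ν, tot E₁ ν ≤ tot E₂ ν := fun ν => by
    rw [← (h1 _ le_rfl ν).1, ← (h1 _ le_rfl ν).2]
    exact hh _ _
  let S : Finset ℂ := insert ν ((E₁ + E₂).map Prod.fst).toFinset
  have hS₁ : ∑ ν ∈ S, tot E₁ ν = sumE E₁ := sum_tot fun x hx => Finset.mem_insert_of_mem
    (Multiset.mem_toFinset.2 (Multiset.mem_map_of_mem _ (Multiset.mem_add.2 (Or.inl hx))))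
  have hS₂ : ∑ ν ∈ S, tot E₂ ν = sumE E₂ := sum_tot fun x hx => Finset.mem_insert_of_mem
    (Multiset.mem_toFinset.2 (Multiset.mem_map_of_mem _ (Multiset.mem_add.2 (Or.inr hx))))
  have := (Finset.sum_eq_sum_iff_of_le fun ν _ => hle ν).1 (hS₁.trans (hE.trans hS₂.symm)) ν
    (Finset.mem_insert_self _ _)
  refine hz ν (sumE E₁ + sumE E₂ + s) s (by omega) ?_
  rw [(h1 _ (by omega) ν).1, (h1 _ (by omega) ν).2, this]

end SkewPencil

namespace SkewPencil

variable {d : ℕ} {K₁ K₂ : Multiset ℕ} {E₁ E₂ : Multiset (ℂ × ℕ)}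

theorem Dom.sum_eq (h : Dom d K₁ E₁ K₂ E₂) : K₁.sum + sumE E₁ = K₂.sum + sumE E₂ + d := by
  have h1 := h.size
  have h2 := h.card
  rw [size_eq, size_eq] at h1
  omega

theorem exists_bound {α : Type} (E : Multiset α) (f : α → ℕ) (q : α → Prop) (p : ℕ → Prop)
    (h0 : p 0) (h : ∀ x ∈ E, q x → 1 ≤ f x → ∃ s, f x ≤ s ∧ p s) :
    ∃ s, p s ∧ ∀ x ∈ E, q x → f x ≤ s := by
  induction E using Multiset.induction with
  | empty => exact ⟨0, h0, by simp⟩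
  | cons x E ih =>
    obtain ⟨s, hs, hs'⟩ := ih fun y hy => h y (Multiset.mem_cons_of_mem hy)
    by_cases hx : q x ∧ s < f x
    · obtain ⟨t, ht, ht'⟩ := h x (Multiset.mem_cons_self _ _) hx.1 (by omega)
      refine ⟨t, ht', fun y hy hq => ?_⟩
      rcases Multiset.mem_cons.1 hy with rfl | hy
      · exact ht
      · have := hs' y hy hq
        omega
    · refine ⟨s, hs, fun y hy hq => ?_⟩
      rcases Multiset.mem_cons.1 hy with rfl | hy
      · by_contra hlt
        exact hx ⟨hq, by omega⟩
      · exact hs' y hy hq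

/-- The property that no `J`-block of the second pencil can be shortened. -/
def JTight (d : ℕ) (E₁ E₂ : Multiset (ℂ × ℕ)) : Prop :=
  ∀ x ∈ E₂, 1 ≤ x.2 → ∃ s, x.2 ≤ s ∧ d * s + HH E₂ x.1 s = HH E₁ x.1 s

theorem JTight.exists_last (h : Dom d K₁ E₁ K₂ E₂) (hd : 1 ≤ d) (hJ : JTight d E₁ E₂) (ν : ℂ) :
    ∃ i, d * i + tot E₂ ν ≤ tot E₁ ν ∧
      ∀ s, i ≤ s → HH E₁ ν s + (s - i) ≤ d * s + HH E₂ ν s := by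
  classical
  let p := fun s => d * s + HH E₂ ν s = HH E₁ ν s
  have hb : ∀ s, p s → s ≤ sumE E₁ := fun s hs => by
    have h1 := (HH_le_tot E₁ ν s).trans (tot_le_sumE E₁ ν)
    have h2 : d * s + HH E₂ ν s = HH E₁ ν s := hs
    nlinarith
  have h0 : p 0 := by simp [p, HH_zero]
  let i := Nat.findGreatest p (sumE E₁)
  have hi : d * i + HH E₂ ν i = HH E₁ ν i := Nat.findGreatest_spec (P := p) (Nat.zero_le _) h0
  have hlt : ∀ s, i < s → HH E₁ ν s < d * s + HH E₂ ν s := fun s hs => by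
    refine lt_of_le_of_ne (h.hh ν s) fun heq => ?_
    exact Nat.findGreatest_is_greatest hs (hb s heq.symm) heq.symm
  have hE : ∀ s, i ≤ s → HH E₂ ν s = tot E₂ ν := fun s hs => HH_eq_tot fun x hx hν => by
    by_contra hlt'
    obtain ⟨t, ht, ht'⟩ := hJ x hx (by omega)
    rw [hν] at ht'
    have := hlt t (by omega)
    omega
  refine ⟨i, ?_, fun s hs => ?_⟩
  · rw [← hE i le_rfl, hi]
    exact HH_le_tot _ _ _
  · rw [hE i le_rfl] at hi
    rw [hE s hs]
    have hc : cgt E₁ ν i + 1 ≤ d := by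
      have h1 := hlt (i + 1) (by omega)
      rw [HH_succ, hE _ (by omega), mul_add] at h1
      omega
    obtain ⟨t, rfl⟩ := Nat.exists_eq_add_of_le hs
    clear hs
    induction t with
    | zero => simpa using hi.ge
    | succ t ih =>
      have := cgt_anti E₁ ν (show i ≤ i + t by omega)
      rw [← add_assoc, HH_succ, mul_add]
      omega

theorem JTight.hasStep (h : Dom d K₁ E₁ K₂ E₂) (hd : 1 ≤ d) (hJ : JTight d E₁ E₂)
    {K : Multiset ℕ} {a b : ℕ} (hK : K₂ = b ::ₘ a ::ₘ K)
    (hs : ∀ s, NN K₁ s + (s - a) + (s - b) ≤ NN K₂ s)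
    (hlt : sumE E₁ < sumE E₂ + d * (a + b + 2)) : HasStep d K₁ E₁ K₂ E₂ := by
  classical
  choose i hi hi' using JTight.exists_last h hd hJ
  let S : Finset ℂ := insert 0 ((E₁ + E₂).map Prod.fst).toFinset
  have hS₁ : ∑ ν ∈ S, tot E₁ ν = sumE E₁ := sum_tot fun x hx => Finset.mem_insert_of_mem
    (Multiset.mem_toFinset.2 (Multiset.mem_map_of_mem _ (Multiset.mem_add.2 (Or.inl hx))))
  have hS₂ : ∑ ν ∈ S, tot E₂ ν = sumE E₂ := sum_tot fun x hx => Finset.mem_insert_of_mem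
    (Multiset.mem_toFinset.2 (Multiset.mem_map_of_mem _ (Multiset.mem_add.2 (Or.inr hx))))
  have hsum : d * ∑ ν ∈ S, i ν + sumE E₂ ≤ sumE E₁ := by
    rw [← hS₁, ← hS₂, Finset.mul_sum, ← Finset.sum_add_distrib]
    exact Finset.sum_le_sum fun ν _ => hi ν
  have hle : ∑ ν ∈ S, i ν ≤ a + b + 1 := by
    by_contra! hlt'
    have := Nat.mul_le_mul_left d (show a + b + 2 ≤ ∑ ν ∈ S, i ν by omega)
    omega
  have hi0 : ∀ ν ∉ S, i ν = 0 := fun ν hν => by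
    have h1 : tot E₁ ν = 0 := Multiset.sum_eq_zero fun y hy => by
      obtain ⟨x, hx, rfl⟩ := Multiset.mem_map.1 hy
      refine if_neg fun hxν => hν (Finset.mem_insert_of_mem (Multiset.mem_toFinset.2 ?_))
      exact hxν ▸ Multiset.mem_map_of_mem _ (Multiset.mem_add.2 (Or.inl hx))
    have h2 := hi ν
    have h3 : d * i ν = 0 := by omega
    exact (Nat.mul_eq_zero.1 h3).resolve_left (by omega)
  obtain ⟨d, rfl⟩ : ∃ k, d = k + 1 := ⟨d - 1, by omega⟩
  refine hasStep_J_M_M h hK S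
    (fun ν => i ν + if ν = 0 then a + b + 1 - ∑ ν ∈ S, i ν else 0) ?_ ?_ hs fun ν s hs => ?_
  · rw [Finset.sum_add_distrib, Finset.sum_ite_eq', if_pos (Finset.mem_insert_self _ _)]
    omega
  · intro μ hμ
    have hμ0 : μ ≠ 0 := fun h => hμ (h ▸ Finset.mem_insert_self _ _)
    simp [hi0 μ hμ, hμ0]
  · have := hi' ν s (by omega)
    omega

theorem hasStep_or_eq (h : Dom d K₁ E₁ K₂ E₂) :
    (K₁ = K₂ ∧ ∀ ν s, HH E₁ ν s = HH E₂ ν s) ∨ HasStep d K₁ E₁ K₂ E₂ := by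
  obtain ⟨i, j, hij, hi, hj, hs⟩ | hN := excursion (fun s => NN K₂ s - NN K₁ s)
    (by simp [NN_zero])
  · have := h.nn i
    have := h.nn j
    exact Or.inr (hasStep_of_excursion_NN h hij (by omega) (by omega)
      fun s h1 h2 => by have := hs s h1 h2; omega)
  by_cases hH : ∀ ν s t, t ≤ s → d * s + HH E₂ ν s = HH E₁ ν s → d * t + HH E₂ ν t = HH E₁ ν t
  swap
  · push Not at hH
    obtain ⟨ν, s, t, hts, hs, ht⟩ := hH
    obtain ⟨i, j, hij, hi, hj, hs⟩ | hN := excursion (fun s => d * s + HH E₂ ν s - HH E₁ ν s)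
      (by simp [HH_zero])
    · have := h.hh ν i
      have := h.hh ν j
      exact Or.inr (hasStep_of_excursion_HH h ν hij (by omega) (by omega)
        fun s h1 h2 => by have := hs s h1 h2; omega)
    · have := hN s t hts (by omega)
      have := h.hh ν t
      omega
  by_cases hD : ∀ s, NN K₁ s = NN K₂ s
  · have hK := eq_of_NN_eq hD
    have hd : d = 0 := by have := h.card; rw [hK] at this; omega
    have hE := h.sum_eq
    have hh := h.hh
    subst hd hK
    simp only [zero_mul, zero_add] at hH hh
    exact Or.inl ⟨rfl, HH_eq_of_sumE_eq (by omega) hh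
      fun ν s t hts hs => (hH ν s t hts hs.symm).symm⟩
  right
  push Not at hD
  classical
  obtain ⟨a, ha, ha'⟩ : ∃ a, (∀ s, s ≤ a → NN K₂ s = NN K₁ s) ∧
      ∀ s, a < s → NN K₁ s < NN K₂ s := by
    have h1 := Nat.find_spec hD
    have h2 : Nat.find hD ≠ 0 := fun h0 => h1 (by rw [h0, NN_zero, NN_zero])
    refine ⟨Nat.find hD - 1, fun s hs => ?_, fun s hs => ?_⟩
    · have := Nat.find_min hD (m := s) (by omega)
      push Not at this
      exact this.symm
    · refine lt_of_le_of_ne (h.nn s) fun heq => h1 ?_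
      have h3 := hN s (Nat.find hD) (by omega) (by omega)
      have := h.nn (Nat.find hD)
      omega
  have haK : a ∈ K₂ := by
    have h1 := NN_succ K₁ a
    have h2 := NN_succ K₂ a
    have h3 := ha' (a + 1) (by omega)
    have h4 := ha a le_rfl
    have := mem_of_kink h.nn h4 (by omega)
    exact Multiset.count_pos.1 (by omega)
  by_cases hJ : JTight d E₁ E₂
  swap
  · unfold JTight at hJ
    push Not at hJ
    obtain ⟨⟨μ, e⟩, hx, he, hs⟩ := hJ
    obtain ⟨e, rfl⟩ : ∃ k, e = k + 1 := ⟨e - 1, by dsimp only at he; omega⟩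
    obtain ⟨E, hE⟩ := Multiset.exists_cons_of_mem hx
    obtain ⟨K, hK⟩ := Multiset.exists_cons_of_mem haK
    exact hasStep_M_J h hK hE ha' fun s hs' => lt_of_le_of_ne (h.hh μ s) (hs s hs').symm
  by_cases hb : ∃ b ∈ K₂, a + 2 ≤ b
  · obtain ⟨b, hb, hab⟩ := hb
    obtain ⟨K, rfl⟩ := Multiset.exists_cons_of_mem haK
    obtain rfl | hb := Multiset.mem_cons.1 hb
    · omega
    obtain ⟨K, rfl⟩ := Multiset.exists_cons_of_mem hb
    exact hasStep_M_M h rfl hab fun s hs _ => ha' s hs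
  push Not at hb
  have hsum := h.sum_eq
  have hcard := h.card
  obtain hd | hd := Nat.eq_zero_or_pos d
  · exfalso
    subst hd
    have htot : ∀ ν, tot E₂ ν ≤ tot E₁ ν := fun ν => by
      obtain ⟨s, hs, hs'⟩ := exists_bound E₂ Prod.snd (fun x => x.1 = ν)
        (fun s => 0 * s + HH E₂ ν s = HH E₁ ν s) (by simp [HH_zero])
        fun x hx hν h1 => hν ▸ hJ x hx h1
      rw [← HH_eq_tot hs']
      have := HH_le_tot E₁ ν s
      omega
    let S : Finset ℂ := ((E₁ + E₂).map Prod.fst).toFinset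
    have hS₁ : ∑ ν ∈ S, tot E₁ ν = sumE E₁ := sum_tot fun x hx =>
      Multiset.mem_toFinset.2 (Multiset.mem_map_of_mem _ (Multiset.mem_add.2 (Or.inl hx)))
    have hS₂ : ∑ ν ∈ S, tot E₂ ν = sumE E₂ := sum_tot fun x hx =>
      Multiset.mem_toFinset.2 (Multiset.mem_map_of_mem _ (Multiset.mem_add.2 (Or.inr hx)))
    have h1 : sumE E₂ ≤ sumE E₁ := hS₁ ▸ hS₂ ▸ Finset.sum_le_sum fun ν _ => htot ν
    have h2 := ha' (a + 1) (by omega)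
    have h3 := card_mul_le K₁ (a + 1)
    have h4 := NN_add_sum (K := K₂) (s := a + 1) fun k hk => by have := hb k hk; omega
    rw [hcard, mul_zero, add_zero] at h4
    omega
  have hgrow : ∀ b, (∀ k ∈ K₂, k ≤ b) → ∀ t, NN K₁ (b + t) + 2 * t + NN K₂ b ≤
      NN K₂ (b + t) + NN K₁ b := fun b hb t => by
    induction t with
    | zero => simp [add_comm]
    | succ t ih =>
      have h1 := cle_eq_card (K := K₂) (s := b + t) fun k hk => (hb k hk).trans (by omega)
      have h2 := cle_le_card K₁ (b + t)
      rw [← add_assoc, NN_succ, NN_succ]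
      omega
  have hbound : ∀ b, (∀ k ∈ K₂, k ≤ b) →
      sumE E₁ + NN K₂ b ≤ sumE E₂ + d * (2 * b + 1) + NN K₁ b := fun b hb => by
    have h1 := NN_add_sum hb
    have h2 := card_mul_le K₁ b
    rw [hcard, add_mul] at h1
    have h3 : d * (2 * b + 1) = 2 * d * b + d := by ring
    omega
  by_cases hb' : a + 1 ∈ K₂
  · have hle : ∀ k ∈ K₂, k ≤ a + 1 := fun k hk => by have := hb k hk; omega
    have h1 := ha' (a + 1) (by omega)
    obtain ⟨K, hK⟩ := Multiset.exists_cons_of_mem hb'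
    have haK' := haK
    rw [hK] at haK'
    obtain ⟨K', rfl⟩ := Multiset.exists_cons_of_mem
      ((Multiset.mem_cons.1 haK').resolve_left (by omega))
    refine JTight.hasStep h hd hJ hK (fun s => ?_) ?_
    · rcases le_or_gt s a with hs | hs
      · have := h.nn s
        omega
      · obtain ⟨t, rfl⟩ := Nat.exists_eq_add_of_le (show a + 1 ≤ s by omega)
        have := hgrow (a + 1) hle t
        omega
    · have := hbound (a + 1) hle
      have h3 : d * (2 * (a + 1) + 1) = d * (a + (a + 1) + 2) := by ring
      omega
  · have hle : ∀ k ∈ K₂, k ≤ a := fun k hk => by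
      have h1 := hb k hk
      have h2 : k ≠ a + 1 := fun h => hb' (h ▸ hk)
      omega
    have h1 := ha a le_rfl
    obtain ⟨K, hK⟩ := Multiset.exists_cons_of_mem haK
    have h2 : 2 ≤ K₂.count a := by
      have h2 := cle_eq_card hle
      have h3 := cle_le_card K₁ a
      have := mem_of_kink h.nn h1 (by omega)
      omega
    rw [hK, Multiset.count_cons_self] at h2
    obtain ⟨K', rfl⟩ := Multiset.exists_cons_of_mem
      (Multiset.count_pos.1 (show 0 < K.count a by omega))
    refine JTight.hasStep h hd hJ hK (fun s => ?_) ?_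
    · rcases le_or_gt s a with hs | hs
      · have := h.nn s
        omega
      · obtain ⟨t, rfl⟩ := Nat.exists_eq_add_of_le (show a ≤ s by omega)
        have := hgrow a hle t
        omega
    · have := hbound a hle
      have h3 : d * (a + a + 2) = d * (2 * a + 1) + d := by ring
      omega

end SkewPencil

namespace SkewPencil

theorem mdeg_filter (K : Multiset ℕ) (E G : Multiset (ℂ × ℕ)) :
    MDeg (blocks K (E + G)) (blocks K (E.filter (fun x => 1 ≤ x.2) + G)) ∧
      MDeg (blocks K (E.filter (fun x => 1 ≤ x.2) + G)) (blocks K (E + G)) := by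
  induction E using Multiset.induction generalizing G with
  | empty => exact ⟨.refl _, .refl _⟩
  | cons x E ih =>
    obtain ⟨ν, e⟩ := x
    by_cases he : 1 ≤ e
    · rw [Multiset.filter_cons_of_pos (p := fun x : ℂ × ℕ => 1 ≤ x.2) E (a := (ν, e)) he, Multiset.cons_add, Multiset.cons_add,
        ← Multiset.add_cons, ← Multiset.add_cons]
      exact ih _
    · obtain rfl : e = 0 := by omega
      rw [Multiset.filter_cons_of_neg (p := fun x : ℂ × ℕ => 1 ≤ x.2) E (a := (ν, 0)) he, Multiset.cons_add]
      exact ⟨(mdeg_J_zero K (E + G) ν).trans (ih G).1, (ih G).2.trans (mdeg_zero_J K (E + G) ν)⟩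

theorem cgt_eq_add_count (E : Multiset (ℂ × ℕ)) (ν : ℂ) (s : ℕ) :
    cgt E ν s = cgt E ν (s + 1) + E.count (ν, s + 1) := by
  classical
  induction E using Multiset.induction with
  | empty => simp [cgt]
  | cons x E ih =>
    obtain ⟨μ, e⟩ := x
    simp only [cgt, Multiset.countP_cons, Multiset.count_cons, Prod.mk.injEq] at ih ⊢
    by_cases h1 : μ = ν
    · subst h1
      simp only [true_and]
      split_ifs <;> omega
    · simpa [h1, Ne.symm h1] using ih

theorem mdeg_of_HH_eq {E₁ E₂ : Multiset (ℂ × ℕ)} (K : Multiset ℕ) (h : ∀ ν s, HH E₁ ν s = HH E₂ ν s) :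
    MDeg (blocks K E₁) (blocks K E₂) := by
  classical
  have hc : ∀ ν s, cgt E₁ ν s = cgt E₂ ν s := fun ν s => by
    have h1 := HH_succ E₁ ν s
    have h2 := HH_succ E₂ ν s
    have := h ν s
    have := h ν (s + 1)
    omega
  have hF : E₁.filter (fun x => 1 ≤ x.2) = E₂.filter (fun x => 1 ≤ x.2) := by
    refine Multiset.ext.2 fun ⟨ν, e⟩ => ?_
    rw [Multiset.count_filter, Multiset.count_filter]
    split_ifs with he
    · obtain ⟨e, rfl⟩ : ∃ k, e = k + 1 := ⟨e - 1, by dsimp only at he; omega⟩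
      have h1 := cgt_eq_add_count E₁ ν e
      have h2 := cgt_eq_add_count E₂ ν e
      have := hc ν e
      have := hc ν (e + 1)
      omega
    · rfl
  have h1 := (mdeg_filter K E₁ 0).1
  have h2 := (mdeg_filter K E₂ 0).2
  rw [add_zero, add_zero] at h1 h2
  exact h1.trans (hF ▸ h2)

/-- Comparison of invariants implies degeneration; a drop of the rank can be done in steps. -/
theorem Dom.chain {K₁ : Multiset ℕ} {E₁ : Multiset (ℂ × ℕ)} : ∀ {d : ℕ} {K₂ : Multiset ℕ}
    {E₂ : Multiset (ℂ × ℕ)}, Dom d K₁ E₁ K₂ E₂ → MDeg (blocks K₁ E₁) (blocks K₂ E₂) ∧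
    (1 ≤ d → ∃ K E, K.card + 2 = K₂.card ∧ SkewPencil.size K E = SkewPencil.size K₂ E₂ ∧
      MDeg (blocks K₁ E₁) (blocks K E) ∧ MDeg (blocks K E) (blocks K₂ E₂)) := by
  intro d K₂ E₂ h
  obtain ⟨rfl, hH⟩ | ⟨d', K, E, hD, hM, hlt⟩ := hasStep_or_eq h
  · refine ⟨mdeg_of_HH_eq _ hH, fun hd => ?_⟩
    have := h.card
    omega
  · obtain ⟨ih, ih'⟩ := hD.chain
    refine ⟨ih.trans hM, fun hd => ?_⟩
    have h1 := h.card
    have h2 := hD.card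
    obtain rfl | ⟨rfl, -⟩ := hlt
    · exact ⟨K, E, by omega, hD.size.symm.trans h.size, ih, hM⟩
    · obtain ⟨K', E', h3, h4, h5, h6⟩ := ih' hd
      exact ⟨K', E', by omega, h4.trans (hD.size.symm.trans h.size), h5, h6.trans hM⟩
termination_by d K₂ E₂ => (d, sumE E₂, spread K₂ E₂)
decreasing_by
  obtain rfl | ⟨rfl, h | ⟨h, hs⟩⟩ := hlt
  · exact Prod.Lex.left _ _ (Nat.lt_succ_self _)
  · exact Prod.Lex.right _ (Prod.Lex.left _ _ h)
  · rw [h]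
    exact Prod.Lex.right _ (Prod.Lex.right _ hs)

/-- A degeneration between canonical pencils dropping the rank by more than two factors. -/
theorem exists_between {K₁ : Multiset ℕ} {E₁ : Multiset (ℂ × ℕ)} {K₂ : Multiset ℕ}
    {E₂ : Multiset (ℂ × ℕ)} (hs : SkewPencil.size K₁ E₁ = SkewPencil.size K₂ E₂)
    (h : MDeg (blocks K₁ E₁) (blocks K₂ E₂)) :
    K₁.card ≤ K₂.card ∧ (K₁.card < K₂.card →
      ∃ K E, K.card + 2 = K₂.card ∧ SkewPencil.size K E = SkewPencil.size K₂ E₂ ∧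
      MDeg (blocks K₁ E₁) (blocks K E) ∧ MDeg (blocks K E) (blocks K₂ E₂)) := by
  obtain ⟨l₁, h₁⟩ := Quot.exists_rep (blocks K₁ E₁)
  obtain ⟨l₂, h₂⟩ := Quot.exists_rep (blocks K₂ E₂)
  obtain ⟨hN, hH⟩ := (h l₁ l₂ h₁ h₂).invariants h₁ h₂ hs
  have hle : K₁.card ≤ K₂.card := by
    by_contra! hlt
    have h1 := hH 0 (2 * sumE E₂ + 1)
    have h2 := (HH_le_tot E₂ 0 (2 * sumE E₂ + 1)).trans (tot_le_sumE E₂ 0)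
    nlinarith [Nat.mul_le_mul_right (2 * sumE E₂ + 1) (show K₂.card + 1 ≤ K₁.card from hlt)]
  refine ⟨hle, fun hlt => ?_⟩
  obtain ⟨d, hd⟩ : ∃ d, K₂.card = K₁.card + 2 * d := by
    rw [size_eq, size_eq] at hs
    exact ⟨(K₂.card - K₁.card) / 2, by omega⟩
  have hD : Dom d K₁ E₁ K₂ E₂ := ⟨hd, hs, hN, fun ν s => by
    have := hH ν s
    rw [hd] at this
    nlinarith⟩
  exact hD.chain.2 (by omega)

end SkewPencil

namespace SkewPencil

/-! ### Canonical forms of pairs of alternating forms -/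

section Forms

variable {V : Type} [AddCommGroup V] [Module ℂ V]

theorem alt_swap {A : V →ₗ[ℂ] V →ₗ[ℂ] ℂ} (hA : ∀ x, A x x = 0) (x y : V) : A x y = -A y x := by
  have := hA (x + y)
  simp only [map_add, LinearMap.add_apply, hA, zero_add, add_zero] at this
  linear_combination this

theorem exists_repr [FiniteDimensional ℂ V] {B : V →ₗ[ℂ] V →ₗ[ℂ] ℂ} {X : Submodule ℂ V}
    (hX : ∀ x ∈ X, (∀ y ∈ X, B x y = 0) → x = 0) (f : V →ₗ[ℂ] ℂ) :
    ∃ x ∈ X, ∀ y ∈ X, B x y = f y := by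
  let F : X →ₗ[ℂ] Module.Dual ℂ X := B.domRestrict₁₂ X X
  have hinj : Function.Injective F := by
    rw [← LinearMap.ker_eq_bot, LinearMap.ker_eq_bot']
    intro x hx
    exact Subtype.ext (hX x x.2 fun y hy => LinearMap.congr_fun hx ⟨y, hy⟩)
  obtain ⟨x, hx⟩ := (LinearMap.injective_iff_surjective_of_finrank_eq_finrank
    (Subspace.dual_finrank_eq (K := ℂ) (V := X)).symm).1 hinj (f.comp X.subtype)
  exact ⟨x, x.2, fun y hy => LinearMap.congr_fun hx ⟨y, hy⟩⟩

theorem exists_repr_of_vanish [FiniteDimensional ℂ V] (A : V →ₗ[ℂ] V →ₗ[ℂ] ℂ)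
    (Z : Submodule ℂ V) (f : V →ₗ[ℂ] ℂ) (hf : ∀ x, (∀ z ∈ Z, A z x = 0) → f x = 0) :
    ∃ w ∈ Z, A w = f := by
  have h : f ∈ (Submodule.map A Z).dualCoannihilator.dualAnnihilator := by
    rw [Submodule.mem_dualAnnihilator]
    intro x hx
    rw [Submodule.mem_dualCoannihilator] at hx
    exact hf x fun z hz => hx _ (Submodule.mem_map_of_mem hz)
  rw [Subspace.dualCoannihilator_dualAnnihilator_eq] at h
  exact Submodule.mem_map.1 h

theorem exists_dual [FiniteDimensional ℂ V] {ι : Type} [Fintype ι] [DecidableEq ι]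
    (B : V →ₗ[ℂ] V →ₗ[ℂ] ℂ) (w : ι → V)
    (h : ∀ c : ι → ℂ, (∀ x, B x (∑ t, c t • w t) = 0) → c = 0) :
    ∃ y : ι → V, ∀ t s, B (y t) (w s) = if t = s then 1 else 0 := by
  let F : V →ₗ[ℂ] ι → ℂ := LinearMap.pi fun s => B.flip (w s)
  have hF : Function.Surjective F := by
    rw [← LinearMap.dualMap_injective_iff, ← LinearMap.ker_eq_bot, LinearMap.ker_eq_bot']
    intro φ hφ
    have hφ' : ∀ g : ι → ℂ, φ g = ∑ s, g s * φ (Pi.single s 1) := fun g => by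
      conv_lhs => rw [← Finset.univ_sum_single g, map_sum]
      refine Finset.sum_congr rfl fun s _ => ?_
      rw [← smul_eq_mul, ← map_smul, ← Pi.single_smul, smul_eq_mul, mul_one]
    have h0 := h (fun s => φ (Pi.single s 1)) fun x => by
      have := LinearMap.congr_fun hφ x
      simp only [LinearMap.dualMap_apply, LinearMap.zero_apply] at this
      rw [hφ'] at this
      rw [map_sum, ← this]
      exact Finset.sum_congr rfl fun s _ => by rw [map_smul, smul_eq_mul, mul_comm]; rfl
    refine LinearMap.ext fun g => ?_
    rw [hφ']
    exact Finset.sum_eq_zero fun s _ => by rw [congrFun h0 s]; simp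
  choose y hy using fun t => hF (Pi.single t 1)
  refine ⟨y, fun t s => ?_⟩
  rw [show B (y t) (w s) = F (y t) s from rfl, hy, Pi.single_apply]
  simp only [eq_comm]

/-- Modification of a family to an isotropic one. -/
theorem exists_isotropic {ι : Type} [Fintype ι] [DecidableEq ι] {F : V →ₗ[ℂ] V →ₗ[ℂ] ℂ}
    (hF : ∀ x, F x x = 0) (y w : ι → V) (hyw : ∀ t s, F (y t) (w s) = if t = s then 1 else 0)
    (hww : ∀ t s, F (w t) (w s) = 0) : ∃ c : ι → ι → ℂ, ∀ t s,
      F (y t + ∑ r, c t r • w r) (y s + ∑ r, c s r • w r) = 0 := by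
  refine ⟨fun t s => F (y t) (y s) / 2, fun t s => ?_⟩
  have hwy : ∀ t s, F (w t) (y s) = if s = t then -1 else 0 := fun t s => by
    rw [alt_swap hF, hyw]; split_ifs <;> simp
  simp only [map_add, map_sum, LinearMap.add_apply, LinearMap.sum_apply, map_smul,
    LinearMap.smul_apply, hww, hyw, hwy, smul_eq_mul, mul_ite, mul_zero, Finset.sum_ite_eq,
    Finset.mem_univ, if_true, Finset.sum_const_zero, add_zero]
  rw [alt_swap hF (y s) (y t)]
  ring

/-- Every vector of the kernel of `B` starts an infinite chain. -/
def Chains (A B : V →ₗ[ℂ] V →ₗ[ℂ] ℂ) : Prop :=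
  ∀ z, B z = 0 → ∃ v : ℕ → V, v 0 = z ∧ ∀ i, B (v (i + 1)) = A (v i)

/-- A decomposition into singular chains and a regular part. -/
structure Fam (A B : V →ₗ[ℂ] V →ₗ[ℂ] ℂ) {ι : Type} [Fintype ι] [DecidableEq ι] (k : ι → ℕ)
    (u v : ι → ℕ → V) (R : Submodule ℂ V) : Prop where
  Auv : ∀ t s i j, i < k t → j ≤ k s → A (u t i) (v s j) = if t = s ∧ j = i + 1 then 1 else 0
  Buv : ∀ t s i j, i < k t → j ≤ k s → B (u t i) (v s j) = if t = s ∧ j = i then 1 else 0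
  Auu : ∀ t s i j, i < k t → j < k s → A (u t i) (u s j) = 0
  Buu : ∀ t s i j, i < k t → j < k s → B (u t i) (u s j) = 0
  Avv : ∀ t s i j, i ≤ k t → j ≤ k s → A (v t i) (v s j) = 0
  Bvv : ∀ t s i j, i ≤ k t → j ≤ k s → B (v t i) (v s j) = 0
  ARu : ∀ r ∈ R, ∀ t i, i < k t → A r (u t i) = 0
  BRu : ∀ r ∈ R, ∀ t i, i < k t → B r (u t i) = 0
  ARv : ∀ r ∈ R, ∀ t i, i ≤ k t → A r (v t i) = 0
  BRv : ∀ r ∈ R, ∀ t i, i ≤ k t → B r (v t i) = 0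
  R_nondeg : ∀ r ∈ R, (∀ s ∈ R, B r s = 0) → r = 0
  top_indep : ∀ c : ι → ℂ, ∑ t, c t • v t (k t) = 0 → c = 0
  span : ∀ W : Submodule ℂ V, (∀ t i, i < k t → u t i ∈ W) → (∀ t i, i ≤ k t → v t i ∈ W) →
    R ≤ W → W = ⊤
  rank : Module.finrank ℂ V = ∑ t, (2 * k t + 1) + Module.finrank ℂ R

end Forms

end SkewPencil

namespace SkewPencil

section Forms

variable {V : Type} [AddCommGroup V] [Module ℂ V] {A B : V →ₗ[ℂ] V →ₗ[ℂ] ℂ} {ι : Type}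
  [Fintype ι] [DecidableEq ι] {k : ι → ℕ} {u v : ι → ℕ → V} {R : Submodule ℂ V}

/-- The vector representing a functional through the form `B` on the chains. -/
def corr (k : ι → ℕ) (u v : ι → ℕ → V) : (V →ₗ[ℂ] ℂ) →ₗ[ℂ] V where
  toFun f := ∑ t, ∑ i ∈ Finset.range (k t), (f (v t i) • u t i - f (u t i) • v t i)
  map_add' f g := by
    simp only [← Finset.sum_add_distrib, LinearMap.add_apply, add_smul]
    exact Finset.sum_congr rfl fun t _ => Finset.sum_congr rfl fun i _ => by abel
  map_smul' c f := by
    simp only [Finset.smul_sum, LinearMap.smul_apply, smul_sub, smul_smul, smul_eq_mul,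
      RingHom.id_apply]

theorem Fam.Bvu (F : Fam A B k u v R) (hB : ∀ x, B x x = 0) {t s : ι} {i j : ℕ} (hi : i ≤ k t)
    (hj : j < k s) : B (v t i) (u s j) = if t = s ∧ i = j then -1 else 0 := by
  rw [alt_swap hB, F.Buv s t j i hj hi]
  simp only [eq_comm (a := s)]
  split_ifs <;> simp

theorem sum_sum_ite (s : ι) {j : ℕ} (g : ι → ℕ → ℂ) :
    ∑ t, ∑ i ∈ Finset.range (k t), (if t = s ∧ j = i then g t i else 0) =
      if j < k s then g s j else 0 := by
  rw [Finset.sum_eq_single s]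
  · simp [Finset.sum_ite_eq]
  · intro t _ ht
    exact Finset.sum_eq_zero fun i _ => if_neg fun h => ht h.1
  · simp

theorem Fam.B_corr_v (F : Fam A B k u v R) (f : V →ₗ[ℂ] ℂ) {s : ι} {j : ℕ} (hj : j ≤ k s) :
    B (corr k u v f) (v s j) = if j < k s then f (v s j) else 0 := by
  rw [← sum_sum_ite (k := k) s fun t i => f (v t i)]
  simp only [corr, LinearMap.coe_mk, AddHom.coe_mk, map_sum, LinearMap.sum_apply]
  refine Finset.sum_congr rfl fun t _ => Finset.sum_congr rfl fun i hi => ?_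
  have hi := Finset.mem_range.1 hi
  simp [F.Buv t s i j hi hj, F.Bvv t s i j hi.le hj]

theorem Fam.B_corr_u (F : Fam A B k u v R) (hB : ∀ x, B x x = 0) (f : V →ₗ[ℂ] ℂ) {s : ι} {j : ℕ}
    (hj : j < k s) : B (corr k u v f) (u s j) = f (u s j) := by
  rw [← if_pos (c := j < k s) (t := f (u s j)) (e := 0) hj,
    ← sum_sum_ite (k := k) s fun t i => f (u t i)]
  simp only [corr, LinearMap.coe_mk, AddHom.coe_mk, map_sum, LinearMap.sum_apply]
  refine Finset.sum_congr rfl fun t _ => Finset.sum_congr rfl fun i hi => ?_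
  have hi := Finset.mem_range.1 hi
  simp only [map_sub, map_smul, LinearMap.sub_apply, LinearMap.smul_apply, smul_eq_mul,
    F.Bvu hB hi.le hj, F.Buu t s i j hi hj, eq_comm (a := i)]
  split_ifs <;> simp

theorem Fam.B_corr_R (F : Fam A B k u v R) (hB : ∀ x, B x x = 0) (f : V →ₗ[ℂ] ℂ) {r : V}
    (hr : r ∈ R) : B (corr k u v f) r = 0 := by
  simp only [corr, LinearMap.coe_mk, AddHom.coe_mk, map_sum, LinearMap.sum_apply]
  refine Finset.sum_eq_zero fun t _ => Finset.sum_eq_zero fun i hi => ?_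
  have hi := Finset.mem_range.1 hi
  rw [map_sub, map_smul, map_smul, LinearMap.sub_apply, LinearMap.smul_apply,
    LinearMap.smul_apply, alt_swap hB (u t i), alt_swap hB (v t i), F.BRu r hr t i hi,
    F.BRv r hr t i hi.le]
  simp

theorem corr_eq (f : V →ₗ[ℂ] ℂ) (s : ι) (j : ℕ) (hj : j < k s) (w : V)
    (h : ∀ t i, i < k t → f (v t i) • u t i - f (u t i) • v t i = if t = s ∧ j = i then w else 0) :
    corr k u v f = w := by
  simp only [corr, LinearMap.coe_mk, AddHom.coe_mk]
  rw [Finset.sum_eq_single s]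
  · rw [Finset.sum_eq_single j]
    · rw [h s j hj]; simp
    · intro i hi hij
      rw [h s i (Finset.mem_range.1 hi), if_neg fun h => hij h.2.symm]
    · intro h'; exact absurd (Finset.mem_range.2 hj) h'
  · intro t _ ht
    exact Finset.sum_eq_zero fun i hi => by
      rw [h t i (Finset.mem_range.1 hi), if_neg fun h => ht h.1]
  · simp

omit [DecidableEq ι] in
theorem corr_zero {f : V →ₗ[ℂ] ℂ} (hu : ∀ t i, i < k t → f (u t i) = 0)
    (hv : ∀ t i, i < k t → f (v t i) = 0) : corr k u v f = 0 := by
  simp only [corr, LinearMap.coe_mk, AddHom.coe_mk]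
  refine Finset.sum_eq_zero fun t _ => Finset.sum_eq_zero fun i hi => ?_
  rw [hu t i (Finset.mem_range.1 hi), hv t i (Finset.mem_range.1 hi)]
  simp

theorem Fam.B_top (F : Fam A B k u v R) (hB : ∀ x, B x x = 0) (t : ι) : B (v t (k t)) = 0 := by
  rw [← LinearMap.ker_eq_top]
  refine F.span _ (fun s i hi => ?_) (fun s i hi => F.Bvv t s _ i le_rfl hi) fun r hr => ?_
  · rw [LinearMap.mem_ker, F.Bvu hB le_rfl hi, if_neg]
    rintro ⟨rfl, h⟩
    omega
  · rw [LinearMap.mem_ker, alt_swap hB, F.BRv r hr t _ le_rfl, neg_zero]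

theorem Fam.mem_ker (F : Fam A B k u v R) (hB : ∀ x, B x x = 0) {x : V} (hx : B x = 0) :
    ∃ c : ι → ℂ, x = ∑ t, c t • v t (k t) := by
  let T : Submodule ℂ V := Submodule.span ℂ (Set.range fun t => v t (k t))
  have hW := F.span ((T ⊔ R).comap (LinearMap.id - (corr k u v).comp B)) (fun s i hi => ?_)
    (fun s i hi => ?_) fun r hr => ?_
  · have hx' : x ∈ (T ⊔ R).comap (LinearMap.id - (corr k u v).comp B) := hW ▸ Submodule.mem_top
    simp only [Submodule.mem_comap, LinearMap.sub_apply, LinearMap.id_apply,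
      LinearMap.comp_apply, hx, map_zero, sub_zero] at hx'
    obtain ⟨y, hy, r, hr, rfl⟩ := Submodule.mem_sup.1 hx'
    obtain ⟨c, rfl⟩ := (Submodule.mem_span_range_iff_exists_fun ℂ).1 hy
    have hr0 : r = 0 := F.R_nondeg r hr fun s _ => by
      have h1 : B (∑ t, c t • v t (k t)) = 0 := by
        rw [map_sum]
        exact Finset.sum_eq_zero fun t _ => by rw [map_smul, F.B_top hB, smul_zero]
      rw [map_add, h1, zero_add] at hx
      rw [hx, LinearMap.zero_apply]
    exact ⟨c, by rw [hr0, add_zero]⟩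
  · have : corr k u v (B (u s i)) = u s i := by
      refine corr_eq _ s i hi _ fun t j hj => ?_
      rw [F.Buv s t i j hi hj.le, F.Buu s t i j hi hj]
      simp only [eq_comm (a := s), eq_comm (a := j)]
      split_ifs with h
      · obtain ⟨rfl, rfl⟩ := h; simp
      · simp
    simp [this]
  · rcases hi.lt_or_eq with hi | rfl
    · have : corr k u v (B (v s i)) = v s i := by
        refine corr_eq _ s i hi _ fun t j hj => ?_
        rw [F.Bvv s t i j hi.le hj.le, F.Bvu hB hi.le hj]
        simp only [eq_comm (a := s)]
        split_ifs with h
        · obtain ⟨rfl, rfl⟩ := h; simp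
        · simp
      simp [this]
    · simp only [Submodule.mem_comap, LinearMap.sub_apply, LinearMap.id_apply,
        LinearMap.comp_apply, F.B_top hB, map_zero, sub_zero]
      exact Submodule.mem_sup_left (Submodule.subset_span ⟨s, rfl⟩)
  · simp only [Submodule.mem_comap, LinearMap.sub_apply, LinearMap.id_apply,
      LinearMap.comp_apply]
    rw [corr_zero (F.BRu r hr) fun t i hi => F.BRv r hr t i hi.le, sub_zero]
    exact Submodule.mem_sup_right hr

/-- A functional is represented by `B` up to the tops of the chains. -/
theorem Fam.exists_repr [FiniteDimensional ℂ V] (F : Fam A B k u v R) (hB : ∀ x, B x x = 0)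
    (f : V →ₗ[ℂ] ℂ) : ∃ x, (∀ t i, i < k t → B x (u t i) = f (u t i)) ∧
      (∀ t i, i < k t → B x (v t i) = f (v t i)) ∧ ∀ r ∈ R, B x r = f r := by
  obtain ⟨r, hr, hr'⟩ := SkewPencil.exists_repr F.R_nondeg f
  refine ⟨r + corr k u v f, fun t i hi => ?_, fun t i hi => ?_, fun s hs => ?_⟩
  · rw [map_add, LinearMap.add_apply, F.BRu r hr t i hi, F.B_corr_u hB f hi, zero_add]
  · rw [map_add, LinearMap.add_apply, F.BRv r hr t i hi.le, F.B_corr_v f hi.le, zero_add,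
      if_pos hi]
  · rw [map_add, LinearMap.add_apply, hr' s hs, F.B_corr_R hB f hs, add_zero]

end Forms

end SkewPencil

namespace SkewPencil

section Forms

variable {V : Type} [AddCommGroup V] [Module ℂ V] {A B : V →ₗ[ℂ] V →ₗ[ℂ] ℂ}

/-- `W` is a complement of the kernel of `B` inside its orthogonal with respect to `A`. -/
structure Core (A B : V →ₗ[ℂ] V →ₗ[ℂ] ℂ) (W : Submodule ℂ V) : Prop where
  eq_zero : ∀ x ∈ W, B x = 0 → x = 0
  orth : ∀ x ∈ W, ∀ z, B z = 0 → A z x = 0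
  exists_mem : ∀ x, (∀ z, B z = 0 → A z x = 0) → ∃ b ∈ W, B x = B b

theorem Chains.orth (hA : ∀ x, A x x = 0) (hB : ∀ x, B x x = 0) {w : ℕ → V}
    (h : ∀ i, B (w (i + 1)) = A (w i)) (i : ℕ) {z : V} (hz : B z = 0) : A z (w i) = 0 := by
  rw [alt_swap hA, ← h, alt_swap hB, hz]
  simp

theorem exists_core (hA : ∀ x, A x x = 0) (hB : ∀ x, B x x = 0) (hC : Chains A B) :
    ∃ W : Submodule ℂ V, Core A B W := by
  obtain ⟨Q, hQ⟩ := Submodule.exists_isCompl (LinearMap.ker B)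
  let V₁ := ((LinearMap.ker B).map A).dualCoannihilator
  have hV₁ : ∀ x, x ∈ V₁ ↔ ∀ z, B z = 0 → A z x = 0 := fun x => by
    rw [Submodule.mem_dualCoannihilator]
    constructor
    · exact fun h z hz => h _ (Submodule.mem_map_of_mem (LinearMap.mem_ker.2 hz))
    · rintro h _ ⟨z, hz, rfl⟩
      exact h z hz
  refine ⟨Q ⊓ V₁, fun x hx h => ?_, fun x hx => (hV₁ x).1 hx.2, fun x hx => ?_⟩
  · exact Submodule.disjoint_def.1 hQ.disjoint x h hx.1
  · obtain ⟨z, hz, q, hq, rfl⟩ := Submodule.mem_sup.1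
      (hQ.codisjoint.eq_top ▸ Submodule.mem_top : x ∈ LinearMap.ker B ⊔ Q)
    refine ⟨q, ⟨hq, (hV₁ q).2 fun z' hz' => ?_⟩, by rw [map_add, LinearMap.mem_ker.1 hz, zero_add]⟩
    obtain ⟨v, hv0, hv⟩ := hC z hz
    have h1 := hx z' hz'
    rwa [map_add, ← hv0, Chains.orth hA hB hv 0 hz', zero_add] at h1

variable {W : Submodule ℂ V}

theorem Core.exists_repr [FiniteDimensional ℂ V] (hW : Core A B W) (hB : ∀ x, B x x = 0) {b : V}
    (h : ∀ x ∈ W, B b x = 0) : ∃ z, B z = 0 ∧ A z = B b := by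
  refine exists_repr_of_vanish A (LinearMap.ker B) (B b) fun x hx => ?_
  obtain ⟨c, hc, hc'⟩ := hW.exists_mem x hx
  rw [alt_swap hB, hc', alt_swap hB, h c hc]
  simp

theorem Core.chains [FiniteDimensional ℂ V] (hW : Core A B W) (hA : ∀ x, A x x = 0)
    (hB : ∀ x, B x x = 0) (hC : Chains A B) :
    Chains (A.domRestrict₁₂ W W) (B.domRestrict₁₂ W W) := by
  intro z hz
  obtain ⟨w, hw, hw'⟩ := hW.exists_repr hB (b := z) fun x hx => LinearMap.congr_fun hz ⟨x, hx⟩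
  obtain ⟨c, rfl, hc⟩ := hC w hw
  choose b hb hb' using fun i => hW.exists_mem (c i) fun z hz => Chains.orth hA hB hc i hz
  refine ⟨fun i => ⟨b (i + 1), hb _⟩, Subtype.ext (sub_eq_zero.1 ?_), fun i => ?_⟩
  · refine hW.eq_zero _ (W.sub_mem (hb _) z.2) ?_
    rw [map_sub, ← hb', hc, hw', sub_self]
  · ext x
    have h1 := hW.orth x x.2 (c (i + 1) - b (i + 1)) (by rw [map_sub, ← hb', sub_self])
    rw [map_sub, LinearMap.sub_apply, sub_eq_zero] at h1
    simp only [LinearMap.domRestrict₁₂_apply]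
    rw [← hb', hc, h1]

variable {ι : Type} [Fintype ι] [DecidableEq ι] {k : ι → ℕ} {u v : ι → ℕ → W} {R : Submodule ℂ W}

/-- The new vectors needed to extend the chains from the core. -/
structure Ext (A B : V →ₗ[ℂ] V →ₗ[ℂ] ℂ) (W : Submodule ℂ V) {ι : Type} [Fintype ι]
    [DecidableEq ι] (k : ι → ℕ) (u v : ι → ℕ → W) (R : Submodule ℂ W) (y z : ι → V)
    (Φ : W →ₗ[ℂ] V) : Prop where
  Bz : ∀ t, B (z t) = 0
  Az : ∀ t, A (z t) = B (v t (k t))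
  Byu : ∀ t s i, i < k s → B (y t) (u s i) = 0
  Byv : ∀ t s i, i ≤ k s → B (y t) (v s i) = if t = s ∧ i = k s then 1 else 0
  ByR : ∀ t, ∀ r ∈ R, B (y t) r = 0
  Byy : ∀ t s, B (y t) (y s) = 0
  Ayy : ∀ t s, A (y t) (y s) = 0
  AyΦ : ∀ t b, A (y t) (Φ b) = 0
  BΦ : ∀ b, B (Φ b) = B b
  mem : ∀ b, ∃ c : ι → ℂ, Φ b = b + ∑ t, c t • z t

theorem Fam.exists_ext [FiniteDimensional ℂ V] (hW : Core A B W) (hA : ∀ x, A x x = 0)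
    (hB : ∀ x, B x x = 0) (hC : Chains A B)
    (F : Fam (A.domRestrict₁₂ W W) (B.domRestrict₁₂ W W) k u v R) :
    ∃ y z Φ, Ext A B W k u v R y z Φ := by
  have hB' : ∀ x, B.domRestrict₁₂ W W x x = 0 := fun x => hB x
  have htop : ∀ t, ∀ x ∈ W, B (v t (k t)) x = 0 := fun t x hx =>
    LinearMap.congr_fun (F.B_top hB' t) ⟨x, hx⟩
  have htop' : ∀ t, ∀ x ∈ W, B x (v t (k t)) = 0 := fun t x hx => by
    rw [alt_swap hB, htop t x hx, neg_zero]
  choose z hz hz' using fun t => hW.exists_repr hB (htop t)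
  have hZZ : ∀ z z', B z = 0 → B z' = 0 → A z z' = 0 := fun z z' h h' => by
    obtain ⟨c, rfl, hc⟩ := hC z' h'
    exact Chains.orth hA hB hc 0 h
  have hBz : ∀ x t, B x (z t) = 0 := fun x t => by rw [alt_swap hB, hz]; simp
  obtain ⟨y₀, hy₀⟩ := exists_dual B (fun t => (v t (k t) : V)) fun c hc => by
    refine F.top_indep c (Subtype.ext (hW.eq_zero _ (Subtype.coe_prop _) (LinearMap.ext fun x => ?_)))
    have := hc x
    rw [alt_swap hB, LinearMap.zero_apply]
    simpa using this
  choose x hxu hxv hxR using fun t => F.exists_repr hB' ((B (y₀ t)).domRestrict W)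
  obtain ⟨c, hc⟩ := exists_isotropic hB (fun t => y₀ t - x t) (fun t => (v t (k t) : V))
    (fun t s => by rw [map_sub, LinearMap.sub_apply, hy₀, htop' s _ (x t).2, sub_zero])
    (fun t s => htop t _ (Subtype.coe_prop _))
  set y₁ : ι → V := fun t => y₀ t - x t + ∑ r, c t r • (v r (k r) : V) with hy₁
  have hy₁W : ∀ t, ∀ b ∈ W, B (y₁ t) b = B (y₀ t) b - B (x t) b := fun t b hb => by
    simp [hy₁, htop _ b hb]
  have hy₁z : ∀ t s, A (y₁ t) (z s) = if t = s then 1 else 0 := fun t s => by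
    rw [alt_swap hA, hz', ← alt_swap hB, hy₁W _ _ (Subtype.coe_prop _), hy₀,
      htop' s _ (x t).2, sub_zero]
  obtain ⟨e, he⟩ := exists_isotropic hA y₁ z hy₁z fun t s => hZZ _ _ (hz t) (hz s)
  set y : ι → V := fun t => y₁ t + ∑ r, e t r • z r with hy
  have hBy : ∀ t x, B (y t) x = B (y₁ t) x := fun t x => by simp [hy, hz]
  let Φ : W →ₗ[ℂ] V := W.subtype - ∑ s, (LinearMap.toSpanSingleton ℂ V (z s)).comp
    ((A (y₁ s)).domRestrict W)
  have hΦ : ∀ b, Φ b = b + ∑ s, (-A (y₁ s) b) • z s := fun b => by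
    simp [Φ, sub_eq_add_neg, LinearMap.sum_apply, LinearMap.toSpanSingleton_apply]
  refine ⟨y, z, Φ, hz, hz', fun t s i hi => ?_, fun t s i hi => ?_, fun t r hr => ?_,
    fun t s => ?_, he, fun t b => ?_, fun b => ?_, fun b => ⟨_, hΦ b⟩⟩
  · rw [hBy, hy₁W _ _ (Subtype.coe_prop _), sub_eq_zero]
    exact (hxu t s i hi).symm
  · rw [hBy, hy₁W _ _ (Subtype.coe_prop _)]
    rcases hi.lt_or_eq with hi | rfl
    · rw [if_neg fun h => hi.ne h.2, sub_eq_zero]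
      exact (hxv t s i hi).symm
    · rw [hy₀, htop' s _ (x t).2, sub_zero]
      simp
  · rw [hBy, hy₁W _ _ (Subtype.coe_prop _), sub_eq_zero]
    exact (hxR t r hr).symm
  · rw [hBy]
    simp only [hy, map_add, map_sum, map_smul, hBz, smul_zero, Finset.sum_const_zero, add_zero]
    exact hc t s
  · have h1 : ∀ r, A (z r) (Φ b) = 0 := fun r => by
      rw [hΦ, map_add, hW.orth b b.2 _ (hz r), zero_add, map_sum]
      exact Finset.sum_eq_zero fun s _ => by rw [map_smul, hZZ _ _ (hz r) (hz s), smul_zero]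
    simp only [hy, map_add, map_sum, map_smul, LinearMap.add_apply, LinearMap.sum_apply,
      LinearMap.smul_apply, h1, smul_zero, Finset.sum_const_zero, add_zero]
    simp [hΦ, hy₁z]
  · rw [hΦ, map_add, map_sum]
    simp [hz]

end Forms

end SkewPencil

namespace SkewPencil

section Forms

variable {V : Type} [AddCommGroup V] [Module ℂ V] {A B : V →ₗ[ℂ] V →ₗ[ℂ] ℂ} {W : Submodule ℂ V}
  {ι : Type} [Fintype ι] [DecidableEq ι] {k : ι → ℕ} {u v : ι → ℕ → W} {R : Submodule ℂ W}
  {y z : ι → V} {Φ : W →ₗ[ℂ] V}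

section Gram

variable (hW : Core A B W) (hA : ∀ x, A x x = 0) (hB : ∀ x, B x x = 0) (hC : Chains A B)
  (X : Ext A B W k u v R y z Φ)

include hA hB hC in
theorem Chains.isotropic {x x' : V} (h : B x = 0) (h' : B x' = 0) : A x x' = 0 := by
  obtain ⟨c, rfl, hc⟩ := hC x' h'
  exact Chains.orth hA hB hc 0 h

include hW hA hB hC X in
theorem Ext.AzΦ {x : V} (h : B x = 0) (b : W) : A x (Φ b) = 0 := by
  obtain ⟨c, hc⟩ := X.mem b
  rw [hc, map_add, hW.orth b b.2 x h, zero_add, map_sum]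
  exact Finset.sum_eq_zero fun t _ => by
    rw [map_smul, hC.isotropic hA hB h (X.Bz t), smul_zero]

include hW hA hB hC X in
theorem Ext.AΦΦ (b b' : W) : A (Φ b) (Φ b') = A b b' := by
  obtain ⟨c, hc⟩ := X.mem b
  have h1 : A (Φ b) (Φ b') = A b (Φ b') := by
    rw [hc, map_add, map_sum, LinearMap.add_apply, LinearMap.sum_apply]
    simp [X.AzΦ hW hA hB hC (X.Bz _)]
  obtain ⟨c, hc⟩ := X.mem b'
  rw [h1, hc, map_add, map_sum]
  simp [alt_swap hA b, hW.orth b b.2 _ (X.Bz _)]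

include hB in
theorem right_zero {x : V} (h : B x = 0) (x' : V) : B x' x = 0 := by
  rw [alt_swap hB, h]; simp

include hB X in
theorem Ext.BxΦ (x : V) (b : W) : B x (Φ b) = B x b := by
  rw [alt_swap hB, X.BΦ, ← alt_swap hB]

include hA hB X in
theorem Ext.Ayz (t s : ι) : A (y t) (z s) = if t = s then 1 else 0 := by
  rw [alt_swap hA, X.Az, ← alt_swap hB, X.Byv t s _ le_rfl]
  simp

end Gram

theorem Ext.kernel (hW : Core A B W) (hA : ∀ x, A x x = 0)
    (hB : ∀ x, B x x = 0) (hC : Chains A B)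
    (F : Fam (A.domRestrict₁₂ W W) (B.domRestrict₁₂ W W) k u v R)
    (X : Ext A B W k u v R y z Φ) {x : V} (hx : B x = 0) :
    ∃ c : ι → ℂ, A (x - ∑ t, c t • z t) = 0 ∧ B (x - ∑ t, c t • z t) = 0 := by
  obtain ⟨w, rfl, hw⟩ := hC x hx
  obtain ⟨b, hb, hb'⟩ := hW.exists_mem (w 1) fun z hz => Chains.orth hA hB hw 1 hz
  obtain ⟨c, hc⟩ := F.mem_ker (fun x => hB x) (x := ⟨b, hb⟩) (LinearMap.ext fun x => by
    rw [LinearMap.domRestrict₁₂_apply]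
    change B b x = 0
    rw [← hb', hw]
    exact hW.orth x x.2 _ hx)
  refine ⟨c, ?_, by simp [hx, X.Bz]⟩
  have hc' : b = ∑ t, c t • (v t (k t) : V) := by simpa using congrArg Subtype.val hc
  rw [map_sub, ← hw, hb', hc']
  simp [X.Az]

theorem Ext.decomp [FiniteDimensional ℂ V] (hW : Core A B W) (hA : ∀ x, A x x = 0)
    (hB : ∀ x, B x x = 0) (hC : Chains A B)
    (F : Fam (A.domRestrict₁₂ W W) (B.domRestrict₁₂ W W) k u v R)
    (X : Ext A B W k u v R y z Φ) (x : V) :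
    ∃ (a : ι → ℂ) (b : W) (c : ι → ℂ), A (x - (∑ t, a t • y t + Φ b + ∑ t, c t • z t)) = 0 ∧
      B (x - (∑ t, a t • y t + Φ b + ∑ t, c t • z t)) = 0 := by
  let a : ι → ℂ := fun t => B x (v t (k t))
  have h1 : ∀ s, B (x - ∑ t, a t • y t) (v s (k s)) = 0 := fun s => by
    simp [X.Byv _ s _ le_rfl, a]
  obtain ⟨b, hb, hb'⟩ := hW.exists_mem (x - ∑ t, a t • y t) fun z' hz' => by
    obtain ⟨c, hc, -⟩ := X.kernel hW hA hB hC F hz'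
    have h2 : ∀ s, A (z s) (x - ∑ t, a t • y t) = 0 := fun s => by
      rw [X.Az, alt_swap hB, h1, neg_zero]
    rw [map_sub, sub_eq_zero] at hc
    rw [hc, map_sum, LinearMap.sum_apply]
    exact Finset.sum_eq_zero fun s _ => by rw [map_smul, LinearMap.smul_apply, h2, smul_zero]
  obtain ⟨c, hc⟩ := X.kernel hW hA hB hC F (x := x - ∑ t, a t • y t - Φ ⟨b, hb⟩) (by
    rw [map_sub, X.BΦ, hb', sub_self])
  refine ⟨a, ⟨b, hb⟩, c, ?_⟩
  rwa [← sub_sub, ← sub_sub]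

variable {κ : Type} [Fintype κ] [DecidableEq κ] {ζ : κ → V}

theorem Ext.fam [FiniteDimensional ℂ V] (hW : Core A B W) (hA : ∀ x, A x x = 0)
    (hB : ∀ x, B x x = 0) (hC : Chains A B)
    (F : Fam (A.domRestrict₁₂ W W) (B.domRestrict₁₂ W W) k u v R)
    (X : Ext A B W k u v R y z Φ) (hAζ : ∀ s, A (ζ s) = 0) (hBζ : ∀ s, B (ζ s) = 0)
    (hζ : LinearIndependent ℂ ζ)
    (hζ' : ∀ x, A x = 0 → B x = 0 → ∃ c : κ → ℂ, x = ∑ s, c s • ζ s) :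
    Fam A B (Sum.elim (fun t => k t + 1) fun _ : κ => 0)
      (Sum.elim (fun t i => if i < k t then Φ (u t i) else y t) fun _ _ => 0)
      (Sum.elim (fun t i => if i ≤ k t then Φ (v t i) else z t) fun s _ => ζ s) (R.map Φ) := by
  have hAζ' := fun s x => right_zero hA (hAζ s) x
  have hBζ' := fun s x => right_zero hB (hBζ s) x
  have hBz' := fun s x => right_zero hB (X.Bz s) x
  have hAzΦ := fun t b => X.AzΦ hW hA hB hC (X.Bz t) b
  have hAΦz : ∀ t b, A (Φ b) (z t) = 0 := fun t b => by rw [alt_swap hA, hAzΦ, neg_zero]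
  have hAΦy : ∀ t b, A (Φ b) (y t) = 0 := fun t b => by rw [alt_swap hA, X.AyΦ, neg_zero]
  have hAzz := fun t s => hC.isotropic hA hB (X.Bz t) (X.Bz s)
  have hAyz := X.Ayz hA hB
  have hBxΦ := X.BxΦ hB
  have hAΦΦ := X.AΦΦ hW hA hB hC
  have hindep : ∀ (c : ι → ℂ) (d : κ → ℂ), ∑ t, c t • z t + ∑ s, d s • ζ s = 0 →
      c = 0 ∧ d = 0 := fun c d h => by
    have h1 : c = 0 := F.top_indep c (Subtype.ext (hW.eq_zero _ (Subtype.coe_prop _) (by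
      have := congrArg A h
      simpa [hAζ, X.Az] using this)))
    refine ⟨h1, funext (Fintype.linearIndependent_iff.1 hζ d ?_)⟩
    simpa [h1] using h
  have hΦinj : Function.Injective Φ := by
    rw [← LinearMap.ker_eq_bot, LinearMap.ker_eq_bot']
    exact fun b hb => Subtype.ext (hW.eq_zero b b.2 (by rw [← X.BΦ, hb, map_zero]))
  have hAyy := X.Ayy
  have hByy := X.Byy
  have hAyΦ := X.AyΦ
  constructor
  · rintro (t | t) (s | s) i j hi hj
    · simp only [Sum.elim_inl, Sum.inl.injEq] at hi hj ⊢
      rcases lt_or_ge i (k t) with h1 | h1 <;> rcases le_or_gt j (k s) with h2 | h2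
      · rw [if_pos h1, if_pos h2, hAΦΦ]
        exact F.Auv t s i j h1 h2
      · rw [if_pos h1, if_neg h2.not_ge, hAΦz, if_neg]
        rintro ⟨rfl, h⟩
        omega
      · rw [if_neg h1.not_gt, if_pos h2, hAyΦ, if_neg]
        rintro ⟨rfl, h⟩
        omega
      · rw [if_neg h1.not_gt, if_neg h2.not_ge, hAyz]
        refine if_congr ⟨?_, And.left⟩ rfl rfl
        rintro rfl
        exact ⟨rfl, by omega⟩
    · simp [hAζ']
    · simp at hi
    · simp at hi
  · rintro (t | t) (s | s) i j hi hj
    · simp only [Sum.elim_inl, Sum.inl.injEq] at hi hj ⊢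
      rcases lt_or_ge i (k t) with h1 | h1 <;> rcases le_or_gt j (k s) with h2 | h2
      · rw [if_pos h1, if_pos h2, hBxΦ, X.BΦ]
        exact F.Buv t s i j h1 h2
      · rw [if_pos h1, if_neg h2.not_ge, hBz', if_neg]
        rintro ⟨rfl, h⟩
        omega
      · rw [if_neg h1.not_gt, if_pos h2, hBxΦ, X.Byv t s j h2]
        refine if_congr ⟨?_, ?_⟩ rfl rfl <;> rintro ⟨rfl, h⟩ <;> exact ⟨rfl, by omega⟩
      · rw [if_neg h1.not_gt, if_neg h2.not_ge, hBz', if_neg]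
        rintro ⟨rfl, h⟩
        omega
    · simp [hBζ']
    · simp at hi
    · simp at hi
  · rintro (t | t) (s | s) i j hi hj
    · simp only [Sum.elim_inl] at hi hj ⊢
      split_ifs with h1 h2 h2
      · rw [hAΦΦ]
        exact F.Auu t s i j h1 h2
      · exact hAΦy _ _
      · exact hAyΦ _ _
      · exact hAyy _ _
    all_goals simp
  · rintro (t | t) (s | s) i j hi hj
    · simp only [Sum.elim_inl] at hi hj ⊢
      split_ifs with h1 h2 h2
      · rw [hBxΦ, X.BΦ]
        exact F.Buu t s i j h1 h2
      · rw [X.BΦ, alt_swap hB, X.Byu s t i h1, neg_zero]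
      · rw [hBxΦ, X.Byu t s j h2]
      · exact hByy _ _
    all_goals simp
  · rintro (t | t) (s | s) i j hi hj
    · simp only [Sum.elim_inl] at hi hj ⊢
      split_ifs with h1 h2 h2
      · rw [hAΦΦ]
        exact F.Avv t s i j h1 h2
      · exact hAΦz _ _
      · exact hAzΦ _ _
      · exact hAzz _ _
    all_goals simp [hAζ, hAζ']
  · rintro (t | t) (s | s) i j hi hj
    · simp only [Sum.elim_inl] at hi hj ⊢
      split_ifs with h1 h2 h2
      · rw [hBxΦ, X.BΦ]
        exact F.Bvv t s i j h1 h2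
      · exact hBz' _ _
      · rw [X.Bz, LinearMap.zero_apply]
      · exact hBz' _ _
    all_goals simp [hBζ, hBζ']
  · rintro _ ⟨r, hr, rfl⟩ (t | t) i hi
    · simp only [Sum.elim_inl]
      split_ifs with h1
      · rw [hAΦΦ]
        exact F.ARu r hr t i h1
      · exact hAΦy _ _
    · simp
  · rintro _ ⟨r, hr, rfl⟩ (t | t) i hi
    · simp only [Sum.elim_inl]
      split_ifs with h1
      · rw [hBxΦ, X.BΦ]
        exact F.BRu r hr t i h1
      · rw [X.BΦ, alt_swap hB, X.ByR t r hr, neg_zero]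
    · simp
  · rintro _ ⟨r, hr, rfl⟩ (t | t) i hi
    · simp only [Sum.elim_inl]
      split_ifs with h1
      · rw [hAΦΦ]
        exact F.ARv r hr t i h1
      · exact hAΦz _ _
    · simp [hAζ']
  · rintro _ ⟨r, hr, rfl⟩ (t | t) i hi
    · simp only [Sum.elim_inl]
      split_ifs with h1
      · rw [hBxΦ, X.BΦ]
        exact F.BRv r hr t i h1
      · exact hBz' _ _
    · simp [hBζ']
  · rintro _ ⟨r, hr, rfl⟩ h
    rw [F.R_nondeg r hr fun s hs => ?_, map_zero]
    have := h (Φ s) (Submodule.mem_map_of_mem hs)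
    rwa [X.BΦ, hBxΦ] at this
  · intro c hc
    obtain ⟨h1, h2⟩ := hindep (fun t => c (Sum.inl t)) (fun s => c (Sum.inr s)) (by
      simpa using hc)
    funext x
    rcases x with t | s
    · exact congrFun h1 t
    · exact congrFun h2 s
  · intro Q hu hv hR
    have hz : ∀ t, z t ∈ Q := fun t => by simpa using hv (Sum.inl t) (k t + 1) le_rfl
    have hy : ∀ t, y t ∈ Q := fun t => by simpa using hu (Sum.inl t) (k t) (Nat.lt_succ_self _)
    have hΦ := F.span (Q.comap Φ) (fun t i hi => by
        simpa [hi] using hu (Sum.inl t) i (Nat.lt_succ_of_lt hi))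
      (fun t i hi => by simpa [hi] using hv (Sum.inl t) i (Nat.le_succ_of_le hi))
      fun r hr => hR (Submodule.mem_map_of_mem hr)
    refine eq_top_iff.2 fun x _ => ?_
    obtain ⟨a, b, c, h1, h2⟩ := X.decomp hW hA hB hC F x
    obtain ⟨d, hd⟩ := hζ' _ h1 h2
    rw [sub_eq_iff_eq_add.1 hd]
    refine Q.add_mem (Q.sum_mem fun s _ => Q.smul_mem _ (hv (Sum.inr s) 0 le_rfl))
      (Q.add_mem (Q.add_mem (Q.sum_mem fun t _ => Q.smul_mem _ (hy t)) ?_)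
        (Q.sum_mem fun t _ => Q.smul_mem _ (hz t)))
    have : b ∈ Q.comap Φ := hΦ ▸ Submodule.mem_top
    exact this
  · let G : ((ι → ℂ) × W × (ι → ℂ) × (κ → ℂ)) →ₗ[ℂ] V :=
      (Fintype.linearCombination ℂ y).coprod (Φ.coprod
        ((Fintype.linearCombination ℂ z).coprod (Fintype.linearCombination ℂ ζ)))
    have hG : ∀ a b c d, G (a, b, c, d) =
        ∑ t, a t • y t + (Φ b + (∑ t, c t • z t + ∑ s, d s • ζ s)) := fun a b c d => by
      simp [G, Fintype.linearCombination_apply]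
    have hbij : Function.Bijective G := by
      constructor
      · rw [← LinearMap.ker_eq_bot, LinearMap.ker_eq_bot']
        rintro ⟨a, b, c, d⟩ h
        rw [hG] at h
        have hB0 : B (Φ b + (∑ t, c t • z t + ∑ s, d s • ζ s)) = B b := by
          simp [X.Bz, hBζ, X.BΦ]
        have ha : a = 0 := funext fun s => by
          have h1 := LinearMap.congr_fun (congrArg B h) (v s (k s))
          rw [map_add, hB0, LinearMap.add_apply] at h1
          have h2 : B b (v s (k s)) = 0 := by
            rw [alt_swap hB, neg_eq_zero]
            exact LinearMap.congr_fun (F.B_top (fun x => hB x) s) b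
          simpa [h2, X.Byv _ s _ le_rfl] using h1
        subst ha
        simp only [Pi.zero_apply, zero_smul, Finset.sum_const_zero, zero_add] at h
        have hb : b = 0 := Subtype.ext (hW.eq_zero b b.2 (by rw [← hB0, h, map_zero]))
        subst hb
        rw [map_zero, zero_add] at h
        obtain ⟨rfl, rfl⟩ := hindep c d h
        rfl
      · intro x
        obtain ⟨a, b, c, h1, h2⟩ := X.decomp hW hA hB hC F x
        obtain ⟨d, hd⟩ := hζ' _ h1 h2
        refine ⟨(a, b, c, d), ?_⟩
        rw [hG, sub_eq_iff_eq_add.1 hd]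
        abel
    rw [← (LinearEquiv.ofBijective G hbij).finrank_eq,
      ← (Submodule.equivMapOfInjective Φ hΦinj R).finrank_eq]
    simp only [Module.finrank_prod, F.rank, Module.finrank_fintype_fun_eq_card,
      Fintype.sum_sum_type, Sum.elim_inl, Sum.elim_inr]
    simp only [mul_add, Finset.sum_add_distrib, Finset.sum_const, Finset.card_univ, smul_eq_mul]
    ring

theorem exists_fam (n : ℕ) : ∀ (V : Type) [AddCommGroup V] [Module ℂ V] [FiniteDimensional ℂ V]
    (A B : V →ₗ[ℂ] V →ₗ[ℂ] ℂ), Module.finrank ℂ V = n → (∀ x, A x x = 0) → (∀ x, B x x = 0) →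
    Chains A B → ∃ (ι : Type) (_ : Fintype ι) (_ : DecidableEq ι) (k : ι → ℕ) (u v : ι → ℕ → V)
      (R : Submodule ℂ V), Fam A B k u v R := by
  induction n using Nat.strong_induction_on with
  | _ n ih =>
    intro V _ _ _ A B hn hA hB hC
    by_cases h : ∀ x, B x = 0 → x = 0
    · refine ⟨Empty, inferInstance, inferInstance, Empty.elim, Empty.elim, Empty.elim, ⊤, ?_⟩
      constructor
      case R_nondeg => exact fun r _ hr => h r (LinearMap.ext fun s => hr s trivial)
      case top_indep => exact fun c _ => Subsingleton.elim _ _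
      case span => exact fun W _ _ h => top_le_iff.1 h
      case rank => simp
      all_goals simp
    · push Not at h
      obtain ⟨x, hx, hx0⟩ := h
      obtain ⟨W, hW⟩ := exists_core hA hB hC
      have hlt : Module.finrank ℂ W < n := hn ▸ Submodule.finrank_lt
        fun h => hx0 (hW.eq_zero x (by rw [h]; trivial) hx)
      obtain ⟨ι, _, _, k, u, v, R, F⟩ := ih _ hlt W _ _ rfl (fun x => hA x) (fun x => hB x)
        (hW.chains hA hB hC)
      obtain ⟨y, z, Φ, X⟩ := F.exists_ext hW hA hB hC
      let N := LinearMap.ker A ⊓ LinearMap.ker B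
      let b := Module.finBasis ℂ N
      refine ⟨_, inferInstance, inferInstance, _, _, _, _,
        X.fam hW hA hB hC F (ζ := fun s => (b s : V)) (fun s => (b s).2.1) (fun s => (b s).2.2)
        (b.linearIndependent.map' N.subtype (Submodule.ker_subtype _)) fun x h1 h2 =>
          ⟨b.repr ⟨x, h1, h2⟩, ?_⟩⟩
      have := congrArg Subtype.val (b.sum_repr ⟨x, h1, h2⟩)
      simpa only [Submodule.coe_sum, Submodule.coe_smul] using this.symm

end Forms

end SkewPencil

namespace SkewPencil

section Forms

variable {V : Type} [AddCommGroup V] [Module ℂ V]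

theorem eq_zero_of_sum_pow_smul {N : Module.End ℂ V} {e : ℕ} {x : V} (hx : (N ^ e) x = 0)
    (hx' : (N ^ (e - 1)) x ≠ 0) (c : Fin e → ℂ) (h : ∑ t, c t • (N ^ (t : ℕ)) x = 0) : c = 0 := by
  suffices ∀ m (hm : m < e), c ⟨m, hm⟩ = 0 from funext fun t => this t t.2
  intro m
  induction m using Nat.strong_induction_on with
  | _ m ih =>
    intro hm
    have := congrArg (N ^ (e - 1 - m)) h
    rw [map_sum, map_zero, Finset.sum_eq_single ⟨m, hm⟩, map_smul, ← Module.End.mul_apply,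
      ← pow_add, show e - 1 - m + m = e - 1 by omega] at this
    · exact (smul_eq_zero.1 this).resolve_right hx'
    · intro t _ ht
      rw [map_smul, ← Module.End.mul_apply, ← pow_add]
      rcases lt_or_gt_of_ne (fun h => ht (Fin.ext h) : (t : ℕ) ≠ m) with h | h
      · rw [ih t h t.2, zero_smul]
      · rw [show e - 1 - m + t = (t - m - 1) + e by omega, pow_add, Module.End.mul_apply, hx,
          map_zero, smul_zero]
    · simp

/-- Splitting off a pair of Jordan blocks. -/
theorem exists_jordan_pair [FiniteDimensional ℂ V] [Nontrivial V] {A B : V →ₗ[ℂ] V →ₗ[ℂ] ℂ}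
    (hA : ∀ x, A x x = 0) (hB : ∀ x, B x x = 0) (hB0 : ∀ x, B x = 0 → x = 0) :
    ∃ (μ : ℂ) (e : ℕ) (p q : ℕ → V), 0 < e ∧
      (∀ i < e, ∀ j < e, A (p i) (q j) = (if j = i + 1 then 1 else 0) + μ * if j = i then 1 else 0)
      ∧ (∀ i < e, ∀ j < e, B (p i) (q j) = if j = i then 1 else 0)
      ∧ (∀ i j, A (p i) (p j) = 0) ∧ (∀ i j, B (p i) (p j) = 0)
      ∧ (∀ i j, A (q i) (q j) = 0) ∧ (∀ i j, B (q i) (q j) = 0)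
      ∧ ∀ w, (∀ i < e, B (p i) w = 0) → (∀ i < e, B (q i) w = 0) →
        (∀ i < e, A (p i) w = 0) ∧ ∀ i < e, A (q i) w = 0 := by
  have hrep : ∀ x, ∃ z, B z = A x := fun x => by
    obtain ⟨z, -, hz⟩ := exists_repr_of_vanish B ⊤ (A x) fun y hy => by
      have : y = 0 := hB0 y (LinearMap.ext fun z => by
        rw [alt_swap hB, hy z trivial, neg_zero, LinearMap.zero_apply])
      rw [this, map_zero]
    exact ⟨z, hz⟩
  have hBinj : Function.Injective B :=
    LinearMap.ker_eq_bot.1 (LinearMap.ker_eq_bot'.2 hB0)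
  choose T0 hT0 using hrep
  let T : Module.End ℂ V :=
    { toFun := T0
      map_add' := fun x y => hBinj (by simp [hT0])
      map_smul' := fun c x => hBinj (by simp [hT0]) }
  have hT : ∀ x y, A x y = B (T x) y := fun x y => by rw [show B (T x) = A x from hT0 x]
  obtain ⟨μ, hμ⟩ := Module.End.exists_eigenvalue T
  obtain ⟨x₀, hx₀⟩ := hμ.exists_hasEigenvector
  let N : Module.End ℂ V := T - algebraMap ℂ (Module.End ℂ V) μ
  have hN : ∀ x, T x = N x + μ • x := fun x => by simp [N]
  have hAN : ∀ x y, A x y = B (N x) y + μ * B x y := fun x y => by rw [hT, hN]; simp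
  have hself : ∀ x y, B (N x) y = B x (N y) := fun x y => by
    have h1 := hAN x y
    have h2 := hAN y x
    rw [alt_swap hA, h2, alt_swap hB (N y), alt_swap hB y] at h1
    linear_combination -h1
  have hselfpow : ∀ m x y, B ((N ^ m) x) y = B x ((N ^ m) y) := fun m => by
    induction m with
    | zero => simp
    | succ m ih =>
      intro x y
      rw [pow_succ, Module.End.mul_apply, ih, hself, ← Module.End.mul_apply, ← pow_succ', pow_succ]
  have hiso : ∀ x i j, B ((N ^ i) x) ((N ^ j) x) = 0 := fun x i j => by
    rw [← hselfpow, ← Module.End.mul_apply, ← pow_add]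
    have := hselfpow (j + i) x x
    rw [alt_swap hB x] at this
    linear_combination this / 2
  have hisoA : ∀ x i j, A ((N ^ i) x) ((N ^ j) x) = 0 := fun x i j => by
    rw [hAN, hiso, ← Module.End.mul_apply, ← pow_succ', hiso]; simp
  obtain ⟨k, hk, hk0⟩ := (N.eventually_isCompl_ker_pow_range_pow.and
    (Filter.eventually_ge_atTop 1)).exists
  have hex : ∃ e, ∀ x ∈ LinearMap.ker (N ^ k), (N ^ e) x = 0 := ⟨k, fun x hx => hx⟩
  classical
  set e := Nat.find hex
  have he : ∀ x ∈ LinearMap.ker (N ^ k), (N ^ e) x = 0 := Nat.find_spec hex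
  have hx₀k : x₀ ∈ LinearMap.ker (N ^ k) := by
    have hNx : N x₀ = 0 := by
      have := hx₀.apply_eq_smul
      simp [N, this]
    rw [LinearMap.mem_ker, show k = k - 1 + 1 by omega, pow_succ, Module.End.mul_apply, hNx,
      map_zero]
  have he0 : 0 < e := by
    rcases Nat.eq_zero_or_pos e with h | h
    · have := he x₀ hx₀k
      rw [h, pow_zero] at this
      exact absurd this hx₀.2
    · exact h
  obtain ⟨x, hxk, hx⟩ : ∃ x ∈ LinearMap.ker (N ^ k), (N ^ (e - 1)) x ≠ 0 := by
    have := Nat.find_min hex (m := e - 1) (by omega)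
    push Not at this
    exact this
  have hlast : e - 1 < e := by omega
  obtain ⟨y₀, hy₀⟩ := exists_dual B (fun t : Fin e => (N ^ (t : ℕ)) x) fun c hc =>
    eq_zero_of_sum_pow_smul (he x hxk) hx c (hB0 _ (LinearMap.ext fun z => by
      rw [alt_swap hB, hc, neg_zero, LinearMap.zero_apply]))
  obtain ⟨y, hy, r, ⟨r', rfl⟩, hyr⟩ := Submodule.mem_sup.1
    (hk.sup_eq_top ▸ Submodule.mem_top : -y₀ ⟨e - 1, hlast⟩ ∈ LinearMap.ker (N ^ k) ⊔ _)
  have hxy : ∀ m, B ((N ^ m) x) y = if m = e - 1 then 1 else 0 := fun m => by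
    by_cases hm : m < e
    · have h1 := hy₀ ⟨e - 1, hlast⟩ ⟨m, hm⟩
      have h2 : y = -y₀ ⟨e - 1, hlast⟩ - (N ^ k) r' := eq_sub_of_add_eq hyr
      rw [h2, map_sub, ← hselfpow, ← Module.End.mul_apply, ← pow_add, add_comm k m, pow_add,
        Module.End.mul_apply, show (N ^ k) x = 0 from hxk, map_zero, map_zero,
        LinearMap.zero_apply, sub_zero, map_neg, ← alt_swap hB, h1]
      simp only [Fin.mk.injEq, eq_comm]
    · rw [if_neg (by omega), show m = m - e + e by omega, pow_add, Module.End.mul_apply,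
        he x hxk, map_zero, map_zero, LinearMap.zero_apply]
  have hBpq : ∀ i j, j < e → B ((N ^ i) x) ((N ^ (e - 1 - j)) y) = if j = i then 1 else 0 := by
    intro i j hj
    rw [← hselfpow, ← Module.End.mul_apply, ← pow_add, hxy]
    exact if_congr (by omega) rfl rfl
  refine ⟨μ, e, fun i => (N ^ i) x, fun j => (N ^ (e - 1 - j)) y, he0, fun i _ j hj => ?_,
    fun i _ j hj => hBpq i j hj, fun i j => hisoA x i j, fun i j => hiso x i j,
    fun i j => hisoA y _ _, fun i j => hiso y _ _, fun w hp hq => ⟨fun i hi => ?_, fun i hi => ?_⟩⟩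
  · rw [hAN, hBpq _ _ hj, ← Module.End.mul_apply, ← pow_succ', hBpq _ _ hj]
  · rw [hAN, hp i hi, ← Module.End.mul_apply, ← pow_succ']
    rcases Nat.lt_or_ge (i + 1) e with h | h
    · rw [hp _ h]; simp
    · rw [show i + 1 = e by omega, he x hxk]; simp
  · rw [hAN, hq i hi, ← Module.End.mul_apply, ← pow_succ']
    rcases Nat.eq_zero_or_pos i with h | h
    · rw [h, show e - 1 - 0 + 1 = e by omega, he y hy]; simp
    · rw [show e - 1 - i + 1 = e - 1 - (i - 1) by omega, hq _ (by omega)]; simp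

end Forms

end SkewPencil

namespace SkewPencil

section Forms

variable {V : Type} [AddCommGroup V] [Module ℂ V]

/-- The family `vec` has the canonical pencil as its pair of Gram matrices. -/
def IsGram (A B : V →ₗ[ℂ] V →ₗ[ℂ] ℂ) (l : List Blk) (vec : Idx l → V) : Prop :=
  (Matrix.of fun i j => A (vec i) (vec j), Matrix.of fun i j => B (vec i) (vec j)) = canon l

theorem gram_sum {F : V →ₗ[ℂ] V →ₗ[ℂ] ℂ} (hF : ∀ x, F x x = 0) {α β γ : Type} (p : α → V)
    (q : β → V) (r : γ → V) (hpp : ∀ i j, F (p i) (p j) = 0) (hqq : ∀ i j, F (q i) (q j) = 0)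
    (hpr : ∀ i j, F (p i) (r j) = 0) (hqr : ∀ i j, F (q i) (r j) = 0) :
    (Matrix.of fun i j => F (Sum.elim (Sum.elim p q) r i) (Sum.elim (Sum.elim p q) r j)) =
      fromBlocks (fromBlocks 0 (Matrix.of fun i j => F (p i) (q j))
        (-(Matrix.of fun i j => F (p i) (q j))ᵀ) 0) 0 0 (Matrix.of fun i j => F (r i) (r j)) := by
  have hqp := fun i j => alt_swap hF (q i) (p j)
  have hrp : ∀ i j, F (r i) (p j) = 0 := fun i j => by rw [alt_swap hF, hpr, neg_zero]
  have hrq : ∀ i j, F (r i) (q j) = 0 := fun i j => by rw [alt_swap hF, hqr, neg_zero]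
  ext i j
  rcases i with (i | i) | i <;> rcases j with (j | j) | j <;>
    simp [hpp, hqq, hpr, hqr, hqp, hrp, hrq]

theorem le_span_of_span_eq_top {R : Submodule ℂ V} {α : Type} {vec : α → R}
    (h : Submodule.span ℂ (Set.range vec) = ⊤) :
    R ≤ Submodule.span ℂ (Set.range fun j => (vec j : V)) := by
  have := congrArg (Submodule.map R.subtype) h
  rw [Submodule.map_span, Submodule.map_subtype_top, ← Set.range_comp] at this
  exact this.ge

theorem IsGram.cons {A B : V →ₗ[ℂ] V →ₗ[ℂ] ℂ} (hA : ∀ x, A x x = 0) (hB : ∀ x, B x x = 0)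
    {l : List Blk} {vec : Idx l → V} (h : IsGram A B l vec) (b : Blk)
    (p : Fin b.row → V) (q : Fin b.col → V)
    (hApq : ∀ i j, A (p i) (q j) =
      (if (j : ℕ) = i + 1 then 1 else 0) + b.ev * if (j : ℕ) = i then 1 else 0)
    (hBpq : ∀ i j, B (p i) (q j) = if (j : ℕ) = i then 1 else 0)
    (hApp : ∀ i j, A (p i) (p j) = 0) (hBpp : ∀ i j, B (p i) (p j) = 0)
    (hAqq : ∀ i j, A (q i) (q j) = 0) (hBqq : ∀ i j, B (q i) (q j) = 0)
    (hApv : ∀ i j, A (p i) (vec j) = 0) (hBpv : ∀ i j, B (p i) (vec j) = 0)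
    (hAqv : ∀ i j, A (q i) (vec j) = 0) (hBqv : ∀ i j, B (q i) (vec j) = 0) :
    IsGram A B (b :: l) (Sum.elim (Sum.elim p q) vec) := by
  have hpen : b.pen = (Matrix.of fun i j => A (p i) (q j), Matrix.of fun i j => B (p i) (q j)) := by
    ext i j <;> simp [Blk.pen, mob, shiftPen, nm, hApq, hBpq]
  have h1 := congrArg Prod.fst h
  have h2 := congrArg Prod.snd h
  dsimp only at h1 h2
  change _ = oplus (hyp b.pen) (canon l)
  rw [hpen]
  refine Prod.ext ((gram_sum hA p q vec hApp hAqq hApv hAqv).trans ?_)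
    ((gram_sum hB p q vec hBpp hBqq hBpv hBqv).trans ?_)
  · rw [h1]; rfl
  · rw [h2]; rfl

theorem exists_regular (n : ℕ) : ∀ (V : Type) [AddCommGroup V] [Module ℂ V]
    [FiniteDimensional ℂ V] (A B : V →ₗ[ℂ] V →ₗ[ℂ] ℂ), Module.finrank ℂ V = n →
    (∀ x, A x x = 0) → (∀ x, B x x = 0) → (∀ x, B x = 0 → x = 0) →
    ∃ (E : Multiset (ℂ × ℕ)) (l : List Blk) (vec : Idx l → V), (l : Multiset Blk) = blocks 0 E ∧
      size 0 E = n ∧ IsGram A B l vec ∧ Submodule.span ℂ (Set.range vec) = ⊤ := by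
  induction n using Nat.strong_induction_on with
  | _ n ih =>
    intro V _ _ _ A B hn hA hB hB0
    rcases Nat.eq_zero_or_pos n with h0 | h0
    · have := Module.finrank_zero_iff.1 (hn.trans h0)
      refine ⟨0, [], Empty.elim, by simp [blocks], by simp [size, h0], ?_, Subsingleton.elim _ _⟩
      ext i <;> exact i.elim
    have : Nontrivial V := Module.nontrivial_of_finrank_pos (hn ▸ h0)
    obtain ⟨μ, e, p, q, he, hApq, hBpq, hApp, hBpp, hAqq, hBqq, hW⟩ :=
      exists_jordan_pair hA hB hB0
    let G : V →ₗ[ℂ] (Fin e → ℂ) × (Fin e → ℂ) :=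
      (LinearMap.pi fun i : Fin e => B (p i)).prod (LinearMap.pi fun i : Fin e => B (q i))
    let c : (Fin e → ℂ) × (Fin e → ℂ) → V := fun f =>
      ∑ i, f.1 i • q i - ∑ i, f.2 i • p i
    have hpc : ∀ f (i : Fin e), B (p i) (c f) = f.1 i := fun f i => by
      simp [c, hBpp, hBpq, Fin.val_inj]
    have hqc : ∀ f (i : Fin e), B (q i) (c f) = f.2 i := fun f i => by
      simp [c, hBqq, alt_swap hB (q _) (p _), hBpq, Fin.val_inj]
    have hGc : ∀ f, G (c f) = f := fun f =>
      Prod.ext (funext fun i => hpc f i) (funext fun i => hqc f i)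
    let W := LinearMap.ker G
    have hmem : ∀ w, w ∈ W ↔ (∀ i < e, B (p i) w = 0) ∧ ∀ i < e, B (q i) w = 0 := fun w => by
      simp only [W, G, LinearMap.mem_ker, LinearMap.prod_apply, Function.prod, Prod.mk_eq_zero,
        funext_iff, LinearMap.pi_apply, Pi.zero_apply, Fin.forall_iff]
    have hdim : 2 * e + Module.finrank ℂ W = n := by
      have h1 := LinearMap.finrank_range_add_finrank_ker G
      rw [LinearMap.range_eq_top.2 fun f => ⟨c f, hGc f⟩, finrank_top, hn] at h1
      rw [← h1]
      simp [W]
      ring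
    have hdec : ∀ v, v - c (G v) ∈ W := fun v => by
      rw [LinearMap.mem_ker, map_sub, hGc, sub_self]
    obtain ⟨E, l, vec, hl, hs, hG, hspan⟩ := ih (Module.finrank ℂ W) (by omega) W
      (A.domRestrict₁₂ W W) (B.domRestrict₁₂ W W) rfl (fun x => hA x) (fun x => hB x)
      fun w hw => Subtype.ext <| hB0 w <| LinearMap.ext fun v => by
        have h1 := LinearMap.congr_fun hw ⟨_, hdec v⟩
        have hcw : B (c (G v)) w = 0 := by
          have h2 := (hmem w).1 w.2
          simp [c, fun i : Fin e => h2.1 i i.2, fun i : Fin e => h2.2 i i.2]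
        rw [LinearMap.domRestrict₁₂_apply, map_sub, alt_swap hB w (c _), hcw] at h1
        simpa using h1
    have hvec : ∀ j, ((∀ i < e, B (p i) (vec j) = 0) ∧ ∀ i < e, B (q i) (vec j) = 0) := fun j =>
      (hmem _).1 (vec j).2
    have hvecA := fun j => hW (vec j) (hvec j).1 (hvec j).2
    refine ⟨(μ, e) ::ₘ E, Blk.J μ e :: l, Sum.elim (Sum.elim (fun i : Fin e => p i)
      fun i : Fin e => q i) fun j => vec j, ?_, ?_, ?_, ?_⟩
    · rw [← Multiset.cons_coe, hl]; simp [blocks]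
    · rw [← hdim, ← hs]; simp [size]
    · exact IsGram.cons hA hB (vec := fun j => (vec j : V)) hG (Blk.J μ e) _ _
        (fun i j => hApq i i.2 j j.2)
        (fun i j => hBpq i i.2 j j.2) (fun _ _ => hApp _ _) (fun _ _ => hBpp _ _)
        (fun _ _ => hAqq _ _) (fun _ _ => hBqq _ _) (fun i j => (hvecA j).1 i i.2)
        (fun i j => (hvec j).1 i i.2) (fun i j => (hvecA j).2 i i.2) fun i j => (hvec j).2 i i.2
    · refine top_le_iff.1 fun v _ => ?_
      set S := Submodule.span ℂ (Set.range (Sum.elim (Sum.elim (fun i : Fin e => p i)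
        fun i : Fin e => q i) fun j => (vec j : V)))
      have hp : ∀ i : Fin e, p i ∈ S := fun i => Submodule.subset_span ⟨Sum.inl (Sum.inl i), rfl⟩
      have hq : ∀ i : Fin e, q i ∈ S := fun i => Submodule.subset_span ⟨Sum.inl (Sum.inr i), rfl⟩
      have hWS : W ≤ S := (le_span_of_span_eq_top hspan).trans
        (Submodule.span_mono (by rintro _ ⟨j, rfl⟩; exact ⟨Sum.inr j, rfl⟩))
      rw [← sub_add_cancel v (c (G v))]
      exact S.add_mem (hWS (hdec v)) (S.sub_mem
        (S.sum_mem fun i _ => S.smul_mem _ (hq i)) (S.sum_mem fun i _ => S.smul_mem _ (hp i)))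

theorem Fam.exists_gram [FiniteDimensional ℂ V] {A B : V →ₗ[ℂ] V →ₗ[ℂ] ℂ}
    (hA : ∀ x, A x x = 0) (hB : ∀ x, B x x = 0) {ι : Type} [Fintype ι] [DecidableEq ι]
    {k : ι → ℕ} {u v : ι → ℕ → V} {R : Submodule ℂ V} (F : Fam A B k u v R) :
    ∃ (K : Multiset ℕ) (E : Multiset (ℂ × ℕ)) (l : List Blk) (vec : Idx l → V),
      (l : Multiset Blk) = blocks K E ∧ size K E = Module.finrank ℂ V ∧ IsGram A B l vec ∧
      Submodule.span ℂ (Set.range vec) = ⊤ := by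
  obtain ⟨E, l, vec, hl, hs, hG, hspan⟩ := exists_regular _ R (A.domRestrict₁₂ R R)
    (B.domRestrict₁₂ R R) rfl (fun x => hA x) (fun x => hB x) fun x hx =>
      Subtype.ext (F.R_nondeg x x.2 fun y hy => LinearMap.congr_fun hx ⟨y, hy⟩)
  have key : ∀ L : List ι, L.Nodup → ∃ vec' : Idx (L.map (fun t => Blk.M (k t)) ++ l) → V,
      IsGram A B _ vec' ∧
      (∀ t ∉ L, (∀ i < k t, ∀ x, A (u t i) (vec' x) = 0 ∧ B (u t i) (vec' x) = 0) ∧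
        ∀ i ≤ k t, ∀ x, A (v t i) (vec' x) = 0 ∧ B (v t i) (vec' x) = 0) ∧
      R ≤ Submodule.span ℂ (Set.range vec') ∧
      ∀ t ∈ L, (∀ i < k t, u t i ∈ Submodule.span ℂ (Set.range vec')) ∧
        ∀ i ≤ k t, v t i ∈ Submodule.span ℂ (Set.range vec') := by
    intro L
    induction L with
    | nil =>
      refine fun _ => ⟨fun j => vec j, hG, fun t _ => ⟨fun i hi x => ⟨?_, ?_⟩,
        fun i hi x => ⟨?_, ?_⟩⟩, ?_, by simp⟩
      · rw [alt_swap hA, F.ARu _ (vec x).2 _ _ hi, neg_zero]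
      · rw [alt_swap hB, F.BRu _ (vec x).2 _ _ hi, neg_zero]
      · rw [alt_swap hA, F.ARv _ (vec x).2 _ _ hi, neg_zero]
      · rw [alt_swap hB, F.BRv _ (vec x).2 _ _ hi, neg_zero]
      · exact le_span_of_span_eq_top hspan
    | cons s L ih =>
      intro hL
      obtain ⟨hsL, hL⟩ := List.nodup_cons.1 hL
      obtain ⟨vec', hG', horth, hR, hmem⟩ := ih hL
      have hle : Submodule.span ℂ (Set.range vec') ≤ Submodule.span ℂ (Set.range
          (Sum.elim (Sum.elim (fun i : Fin (k s) => u s i) fun i : Fin (k s + 1) => v s i) vec')) :=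
        Submodule.span_mono (by rintro _ ⟨j, rfl⟩; exact ⟨Sum.inr j, rfl⟩)
      refine ⟨Sum.elim (Sum.elim (fun i : Fin (k s) => u s i) fun i : Fin (k s + 1) => v s i) vec',
        ?_, fun t ht => ?_, hR.trans hle, fun t ht => ?_⟩
      · refine hG'.cons hA hB (Blk.M (k s)) (fun i : Fin (k s) => u s i)
          (fun i : Fin (k s + 1) => v s i)
          (fun i j => ?_) (fun i j => ?_) (fun i j => F.Auu _ _ _ _ i.2 j.2)
          (fun i j => F.Buu _ _ _ _ i.2 j.2) (fun i j => F.Avv _ _ _ _ i.is_le j.is_le)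
          (fun i j => F.Bvv _ _ _ _ i.is_le j.is_le)
          (fun i j => ((horth s hsL).1 i i.2 j).1)
          (fun i j => ((horth s hsL).1 i i.2 j).2) (fun i j => ((horth s hsL).2 i i.is_le j).1)
          (fun i j => ((horth s hsL).2 i i.is_le j).2)
        · rw [F.Auv _ _ _ _ i.2 j.is_le]; simp [Blk.ev]
        · rw [F.Buv _ _ _ _ i.2 j.is_le]; simp
      · obtain ⟨hts, htL⟩ : t ≠ s ∧ t ∉ L := by simpa using ht
        refine ⟨fun i hi x => ?_, fun i hi x => ?_⟩ <;> rcases x with (x | x) | x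
        · exact ⟨F.Auu _ _ _ _ hi x.2, F.Buu _ _ _ _ hi x.2⟩
        · exact ⟨(F.Auv _ _ _ _ hi x.is_le).trans (if_neg fun h => hts h.1),
            (F.Buv _ _ _ _ hi x.is_le).trans (if_neg fun h => hts h.1)⟩
        · exact (horth t htL).1 i hi x
        · refine ⟨?_, ?_⟩
          · exact (alt_swap hA _ _).trans (neg_eq_zero.2 ((F.Auv _ _ _ _ x.2 hi).trans
              (if_neg fun h => hts h.1.symm)))
          · exact (alt_swap hB _ _).trans (neg_eq_zero.2 ((F.Buv _ _ _ _ x.2 hi).trans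
              (if_neg fun h => hts h.1.symm)))
        · exact ⟨F.Avv _ _ _ _ hi x.is_le, F.Bvv _ _ _ _ hi x.is_le⟩
        · exact (horth t htL).2 i hi x
      · rcases List.mem_cons.1 ht with rfl | ht
        · exact ⟨fun i hi => Submodule.subset_span ⟨Sum.inl (Sum.inl ⟨i, hi⟩), rfl⟩,
            fun i hi => Submodule.subset_span ⟨Sum.inl (Sum.inr ⟨i, Nat.lt_succ_of_le hi⟩), rfl⟩⟩
        · exact ⟨fun i hi => hle ((hmem t ht).1 i hi), fun i hi => hle ((hmem t ht).2 i hi)⟩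
  obtain ⟨vec', hG', -, hR, hmem⟩ := key Finset.univ.toList (Finset.nodup_toList _)
  refine ⟨Finset.univ.val.map k, E, _, vec', ?_, ?_, hG', F.span _
    (fun t => (hmem t (by simp)).1) (fun t => (hmem t (by simp)).2) hR⟩
  · rw [← Multiset.coe_add, hl, ← Multiset.map_coe, Finset.coe_toList]
    simp [blocks, Multiset.map_map]
  · rw [F.rank, ← hs]
    simp only [size, Multiset.map_map, Multiset.map_zero, Multiset.sum_zero, zero_add]
    rfl

end Forms

end SkewPencil

namespace SkewPencil

open Filter Topology

theorem exists_generalized_inverse {n : ℕ} (B : Matrix (Fin n) (Fin n) ℂ) :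
    ∃ L : Matrix (Fin n) (Fin n) ℂ, B * L * B = B := by
  obtain ⟨g, hg⟩ := (Matrix.toLin' B).rangeRestrict.exists_rightInverse_of_surjective
    (LinearMap.range_rangeRestrict _)
  obtain ⟨f, hf⟩ := LinearMap.exists_extend g
  refine ⟨LinearMap.toMatrix' f, (Matrix.toLin' : Matrix (Fin n) (Fin n) ℂ ≃ₗ[ℂ] _).injective ?_⟩
  rw [Matrix.toLin'_mul, Matrix.toLin'_mul, Matrix.toLin'_toMatrix']
  refine LinearMap.ext fun y => ?_
  have h1 := congrArg Subtype.val
    (LinearMap.congr_fun hg ⟨_, LinearMap.mem_range_self (Matrix.toLin' B) y⟩)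
  have h2 := LinearMap.congr_fun hf ⟨_, LinearMap.mem_range_self (Matrix.toLin' B) y⟩
  simp only [LinearMap.comp_apply, Submodule.subtype_apply] at h1 h2 ⊢
  rw [h2]
  exact h1

theorem mulVec_eq_zero_of_rank_le {n : ℕ} {C M : Matrix (Fin n) (Fin n) ℂ}
    (h : M.rank ≤ (C * M).rank) {w : Fin n → ℂ} (hw : (C * M) *ᵥ w = 0) : M *ᵥ w = 0 := by
  have hle : LinearMap.ker M.mulVecLin ≤ LinearMap.ker (C * M).mulVecLin := by
    rw [Matrix.mulVecLin_mul]
    exact LinearMap.ker_le_ker_comp _ _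
  have h1 := LinearMap.finrank_range_add_finrank_ker M.mulVecLin
  have h2 := LinearMap.finrank_range_add_finrank_ker (C * M).mulVecLin
  have : LinearMap.ker M.mulVecLin = LinearMap.ker (C * M).mulVecLin :=
    Submodule.eq_of_le_of_finrank_le hle (by unfold Matrix.rank at h; omega)
  have hw' : w ∈ LinearMap.ker (C * M).mulVecLin := hw
  rw [← this] at hw'
  exact hw'

theorem mulVec_eq_zero_of_eventually {n : ℕ} {D g : Matrix (Fin n) (Fin n) ℂ} {z : Fin n → ℂ}
    (h : ∀ᶠ s : ℂ in 𝓝[≠] 0, g *ᵥ (adjugate (1 + s • D) *ᵥ z) = 0) : g *ᵥ z = 0 := by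
  have hc : Continuous fun s : ℂ => g *ᵥ (adjugate (1 + s • D) *ᵥ z) := by fun_prop
  have h1 := (hc.tendsto 0).mono_left (nhdsWithin_le_nhds (s := {0}ᶜ))
  have h2 := tendsto_nhds_unique h1
    ((tendsto_const_nhds (x := (0 : Fin n → ℂ))).congr' (h.mono fun s hs => hs.symm))
  simpa using h2

theorem mulVec_pow_eq_zero {n : ℕ} {D g : Matrix (Fin n) (Fin n) ℂ} (i : ℕ) :
    ∀ z : Fin n → ℂ, (∀ᶠ s : ℂ in 𝓝[≠] 0, g *ᵥ (adjugate (1 + s • D) *ᵥ z) = 0) →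
      g *ᵥ (D ^ i *ᵥ z) = 0 := by
  induction i with
  | zero =>
    intro z h
    simpa using mulVec_eq_zero_of_eventually h
  | succ i ih =>
    intro z h
    rw [pow_succ, ← mulVec_mulVec]
    refine ih _ ?_
    filter_upwards [h, self_mem_nhdsWithin] with s hs hs0
    have h1 := congrArg (fun M => g *ᵥ (M *ᵥ z)) (adjugate_mul (1 + s • D))
    simp only [Matrix.mul_add, Matrix.mul_one, Matrix.mul_smul, add_mulVec, smul_mulVec,
      mulVec_add, mulVec_smul, hs, mulVec_eq_zero_of_eventually h, one_mulVec, smul_zero,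
      zero_add] at h1
    rw [mulVec_mulVec _ _ D]
    exact (smul_eq_zero.1 h1).resolve_left hs0

theorem exists_chain_of_rank_le {n : ℕ} (A B : Matrix (Fin n) (Fin n) ℂ)
    (h : ∀ s : ℂ, (B + s • A).rank ≤ B.rank) (z : Fin n → ℂ) (hz : B *ᵥ z = 0) :
    ∃ v : ℕ → Fin n → ℂ, v 0 = z ∧ ∀ i, B *ᵥ v (i + 1) = A *ᵥ v i := by
  obtain ⟨L, hL⟩ := exists_generalized_inverse B
  have hdet : ∀ᶠ s : ℂ in 𝓝[≠] 0, (1 + s • (L * A)).det ≠ 0 := by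
    have hc : Continuous fun s : ℂ => (1 + s • (L * A)).det := by fun_prop
    exact nhdsWithin_le_nhds (hc.continuousAt.eventually_ne (by simp))
  have hg : ∀ i, (A - B * L * A) *ᵥ ((L * A) ^ i *ᵥ z) = 0 := fun i => by
    refine mulVec_pow_eq_zero i z ?_
    filter_upwards [hdet, self_mem_nhdsWithin] with s hs hs0
    set w := adjugate (1 + s • (L * A)) *ᵥ z
    have hM : B * L * (B + s • A) = B * (1 + s • (L * A)) := by
      rw [Matrix.mul_add, hL, Matrix.mul_add, Matrix.mul_one, Matrix.mul_smul, Matrix.mul_smul,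
        Matrix.mul_assoc]
    have hr : (B + s • A).rank ≤ (B * L * (B + s • A)).rank := by
      rw [hM, rank_mul_eq_left_of_isUnit_det _ _ (isUnit_iff_ne_zero.2 hs)]
      exact h s
    have hw : (B * L * (B + s • A)) *ᵥ w = 0 := by
      rw [hM, ← mulVec_mulVec, mulVec_mulVec _ (1 + s • (L * A)), mul_adjugate, smul_mulVec,
        one_mulVec, mulVec_smul, hz, smul_zero]
    have h1 := mulVec_eq_zero_of_rank_le hr hw
    rw [hM, Matrix.mul_add, Matrix.mul_one, add_mulVec, Matrix.mul_smul, smul_mulVec,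
      ← Matrix.mul_assoc] at hw
    rw [add_mulVec, smul_mulVec] at h1
    have h2 : s • ((A - B * L * A) *ᵥ w) = 0 := by
      rw [sub_mulVec, smul_sub, ← add_sub_add_left_eq_sub _ _ (B *ᵥ w), h1, hw, sub_zero]
    exact (smul_eq_zero.1 h2).resolve_left hs0
  refine ⟨fun i => (L * A) ^ i *ᵥ z, by simp, fun i => ?_⟩
  have := hg i
  rw [sub_mulVec, sub_eq_zero] at this
  dsimp only
  rw [this, pow_succ', mulVec_mulVec, mulVec_mulVec, ← Matrix.mul_assoc, ← Matrix.mul_assoc]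

/-- The bilinear form of a matrix. -/
def form {n : ℕ} (M : Matrix (Fin n) (Fin n) ℂ) : (Fin n → ℂ) →ₗ[ℂ] (Fin n → ℂ) →ₗ[ℂ] ℂ :=
  Matrix.toLinearMap₂' ℂ M

theorem form_apply {n : ℕ} (M : Matrix (Fin n) (Fin n) ℂ) (x y : Fin n → ℂ) :
    form M x y = x ⬝ᵥ M *ᵥ y :=
  Matrix.toLinearMap₂'_apply' M x y

theorem form_swap {n : ℕ} {M : Matrix (Fin n) (Fin n) ℂ} (hM : Mᵀ = -M) (x y : Fin n → ℂ) :
    form M x y = -(y ⬝ᵥ M *ᵥ x) := by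
  rw [form_apply, dotProduct_mulVec, ← mulVec_transpose, hM, dotProduct_comm, neg_mulVec,
    dotProduct_neg]

theorem form_self {n : ℕ} {M : Matrix (Fin n) (Fin n) ℂ} (hM : Mᵀ = -M) (x : Fin n → ℂ) :
    form M x x = 0 := by
  have h1 := form_swap hM x x
  rw [← form_apply] at h1
  linear_combination h1 / 2

theorem exists_canon {n : ℕ} (P : Pen (Fin n) (Fin n)) (hA : P.1ᵀ = -P.1) (hB : P.2ᵀ = -P.2)
    (h : ∀ s : ℂ, (P.2 + s • P.1).rank ≤ P.2.rank) :
    ∃ (K : Multiset ℕ) (E : Multiset (ℂ × ℕ)) (l : List Blk), (l : Multiset Blk) = blocks K E ∧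
      size K E = n ∧ Deg P (canon l) ∧ Deg (canon l) P := by
  have hC : Chains (form P.1) (form P.2) := fun z hz => by
    obtain ⟨v, hv0, hv⟩ := exists_chain_of_rank_le P.1 P.2 h z (by
      refine dotProduct_eq _ _ fun w => ?_
      have := LinearMap.congr_fun hz w
      rw [form_swap hB] at this
      rw [dotProduct_comm, zero_dotProduct]
      exact neg_eq_zero.1 this)
    refine ⟨v, hv0, fun i => LinearMap.ext fun w => ?_⟩
    rw [form_swap hA, form_swap hB, hv]
  obtain ⟨ι, _, _, k, u, v, R, F⟩ := exists_fam _ _ (form P.1) (form P.2) rfl (form_self hA)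
    (form_self hB) hC
  obtain ⟨K, E, l, vec, hl, hs, hG, hspan⟩ := F.exists_gram (form_self hA) (form_self hB)
  rw [Module.finrank_fin_fun] at hs
  let S : Matrix (Fin n) (Idx l) ℂ := Matrix.of fun i j => vec j i
  have hS : act Sᵀ S P = canon l := by
    rw [← hG]
    ext i j
    · simp only [act, Matrix.of_apply, form_apply, Matrix.mul_assoc]; rfl
    · simp only [act, Matrix.of_apply, form_apply, Matrix.mul_assoc]; rfl
  have hT : ∀ x : Fin n → ℂ, ∃ c : Idx l → ℂ, S *ᵥ c = x := fun x => by
    obtain ⟨c, hc⟩ := (Submodule.mem_span_range_iff_exists_fun ℂ).1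
      (hspan ▸ Submodule.mem_top : x ∈ Submodule.span ℂ (Set.range vec))
    refine ⟨c, ?_⟩
    rw [← hc]
    ext i
    simp [Matrix.mulVec, dotProduct, S, mul_comm]
  choose T hT using hT
  let T' : Matrix (Idx l) (Fin n) ℂ := Matrix.of fun i j => T (Pi.single j 1) i
  have hST : S * T' = 1 := by
    ext i j
    rw [show (S * T') i j = (S *ᵥ T (Pi.single j 1)) i from rfl, hT, Matrix.one_apply,
      Pi.single_apply]
  refine ⟨K, E, l, hl, hs, Deg.of_eq S hS, Deg.of_eq T' ?_⟩
  rw [← hS, act_act, ← Matrix.transpose_mul, hST]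
  simp [act]

end SkewPencil

namespace SkewPencil

open Filter Topology

theorem exists_linearIndependent_rows {K : Type*} [Field K] {m n r : ℕ}
    (M : Matrix (Fin m) (Fin n) K) (h : M.rank = r) :
    ∃ f : Fin r → Fin m, LinearIndependent K fun i => M (f i) := by
  obtain ⟨κ, a, ha, hspan, hli⟩ := exists_linearIndependent' K M.row
  have : Finite κ := Finite.of_injective a ha
  have : Fintype κ := Fintype.ofFinite κ
  have hc : Fintype.card κ = r := by
    rw [← h, ← Matrix.rank_transpose, Matrix.rank_eq_finrank_span_cols, ← finrank_span_eq_card hli,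
      hspan]
    rfl
  let e : Fin r ≃ κ := (Fintype.equivFinOfCardEq hc).symm
  exact ⟨a ∘ e, hli.comp e e.injective⟩

theorem exists_det_submatrix_ne_zero {K : Type*} [Field K] {m n r : ℕ}
    (M : Matrix (Fin m) (Fin n) K) (h : M.rank = r) :
    ∃ (f : Fin r → Fin m) (g : Fin r → Fin n), (M.submatrix f g).det ≠ 0 := by
  obtain ⟨f, hf⟩ := exists_linearIndependent_rows M h
  have h' : (M.submatrix f id)ᵀ.rank = r := by
    rw [Matrix.rank_transpose]
    have : LinearIndependent K (M.submatrix f id).row := hf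
    simpa using this.rank_matrix
  obtain ⟨g, hg⟩ := exists_linearIndependent_rows _ h'
  refine ⟨f, g, ?_⟩
  have : IsUnit ((M.submatrix f g)ᵀ) := Matrix.linearIndependent_rows_iff_isUnit.1 hg
  rw [Matrix.isUnit_iff_isUnit_det, Matrix.det_transpose] at this
  exact this.ne_zero

theorem le_rank_of_det_submatrix_ne_zero {K : Type*} [Field K] {m n r : ℕ}
    (M : Matrix (Fin m) (Fin n) K) (f : Fin r → Fin m) (g : Fin r → Fin n)
    (h : (M.submatrix f g).det ≠ 0) : r ≤ M.rank := by
  have hu : IsUnit (M.submatrix f g) := by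
    rw [Matrix.isUnit_iff_isUnit_det]
    exact h.isUnit
  have := Matrix.rank_submatrix_le M f g
  rwa [Matrix.rank_of_isUnit _ hu, Fintype.card_fin] at this

/-- The polynomial matrix of a pencil. -/
def polyMatrix {m n : ℕ} (P : Pencil m n) : Matrix (Fin m) (Fin n) (Polynomial ℂ) :=
  Matrix.of fun i j => Polynomial.C (P.1 i j) - Polynomial.X * Polynomial.C (P.2 i j)

theorem toRatFuncMatrix_eq {m n : ℕ} (P : Pencil m n) :
    toRatFuncMatrix P = (polyMatrix P).map (algebraMap (Polynomial ℂ) (RatFunc ℂ)) := by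
  ext i j
  simp [toRatFuncMatrix, polyMatrix]
  exact mul_comm _ _

theorem polyMatrix_map_eval {m n : ℕ} (P : Pencil m n) (c : ℂ) :
    (polyMatrix P).map (Polynomial.evalRingHom c) = P.1 - c • P.2 := by
  ext i j
  simp [polyMatrix]
  exact mul_comm _ _

theorem det_sub_smul {m n r : ℕ} (P : Pencil m n) (c : ℂ) (f : Fin r → Fin m) (g : Fin r → Fin n) :
    ((P.1 - c • P.2).submatrix f g).det = ((polyMatrix P).submatrix f g).det.eval c := by
  rw [← polyMatrix_map_eval, Matrix.submatrix_map, ← RingHom.mapMatrix_apply, ← RingHom.map_det]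
  rfl

theorem det_toRatFuncMatrix_ne_zero {m n r : ℕ} (P : Pencil m n) (f : Fin r → Fin m)
    (g : Fin r → Fin n) :
    ((toRatFuncMatrix P).submatrix f g).det ≠ 0 ↔ ((polyMatrix P).submatrix f g).det ≠ 0 := by
  rw [toRatFuncMatrix_eq, Matrix.submatrix_map, ← RingHom.mapMatrix_apply, ← RingHom.map_det]
  simp

theorem rank_le_nrk {m n : ℕ} (P : Pencil m n) (c : ℂ) : (P.1 - c • P.2).rank ≤ nrk P := by
  obtain ⟨f, g, h⟩ := exists_det_submatrix_ne_zero (P.1 - c • P.2) rfl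
  refine le_rank_of_det_submatrix_ne_zero _ f g ((det_toRatFuncMatrix_ne_zero P f g).2 fun h0 => h ?_)
  rw [det_sub_smul, h0, Polynomial.eval_zero]

theorem eventually_rank_eq_nrk {m n : ℕ} (P : Pencil m n) :
    ∀ᶠ c : ℂ in cofinite, (P.1 - c • P.2).rank = nrk P := by
  obtain ⟨f, g, h⟩ := exists_det_submatrix_ne_zero (r := nrk P) (toRatFuncMatrix P) rfl
  rw [det_toRatFuncMatrix_ne_zero] at h
  have hfin := Polynomial.finite_setOfPred_isRoot h
  filter_upwards [hfin.compl_mem_cofinite] with c hc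
  refine (rank_le_nrk P c).antisymm (le_rank_of_det_submatrix_ne_zero _ f g ?_)
  rw [det_sub_smul]
  exact hc

theorem nul_one_one_add_rank {n : ℕ} (X : Pen (Fin n) (Fin n)) : nul 1 1 X + X.1.rank = n := by
  let e : (Fin n → ℂ) ≃ₗ[ℂ] Matrix (Fin n) (Fin 1) ℂ :=
    LinearEquiv.piCongrRight fun _ => (LinearEquiv.funUnique (Fin 1) ℂ ℂ).symm
  have h1 : (shiftPen 1 1).1 = 0 := by
    ext i j
    fin_cases i; fin_cases j
    simp [shiftPen, nm]
  have hk : LinearMap.ker X.1.mulVecLin = (LinearMap.ker (tmap 1 1 X)).comap e.toLinearMap := by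
    ext v
    simp only [LinearMap.mem_ker, Submodule.mem_comap, Matrix.mulVecLin_apply]
    have : ∀ i, tmap 1 1 X (e v) i 0 = (X.1 *ᵥ v) i := fun i => by
      simp only [tmap, LinearMap.coe_mk, AddHom.coe_mk, h1, shiftPen_snd_self, Matrix.mul_zero,
        Matrix.mul_one, sub_zero]
      rfl
    constructor
    · intro h
      ext i j
      fin_cases j
      exact (this i).trans (congrFun h i)
    · intro h
      ext i
      exact (this i).symm.trans (congrFun (congrFun h i) 0)
  have h2 := LinearMap.finrank_range_add_finrank_ker X.1.mulVecLin
  rw [Module.finrank_fin_fun, hk] at h2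
  have h3 := (e.ofSubmodule' (LinearMap.ker (tmap 1 1 X))).finrank_eq
  change _ = nul 1 1 X at h3
  rw [← h3, add_comm]
  exact h2

end SkewPencil

namespace SkewPencil

open Filter Topology

variable {n : ℕ}

/-- The pencil `B - λ (A - c B)`. -/
def shiftAt (c : ℂ) (P : Pencil n n) : Pencil n n := mob 0 1 1 (-c) P

theorem shiftAt_eq (c : ℂ) (P : Pencil n n) : shiftAt c P = (P.2, P.1 - c • P.2) := by
  simp [shiftAt, mob, sub_eq_add_neg]

theorem mob_shiftAt (c : ℂ) (P : Pencil n n) : mob c 1 1 0 (shiftAt c P) = P := by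
  simp [shiftAt, mob_mob, mob_id]

theorem shiftAt_mob (c : ℂ) (P : Pencil n n) : shiftAt c (mob c 1 1 0 P) = P := by
  simp [shiftAt, mob_mob, mob_id]

theorem nrk_add_card {P : Pencil n n} {c : ℂ} {K : Multiset ℕ} {E : Multiset (ℂ × ℕ)} {l : List Blk}
    (hl : (l : Multiset Blk) = blocks K E) (hs : size K E = n)
    (h : Deg (shiftAt c P) (canon l)) (h' : Deg (canon l) (shiftAt c P)) :
    nrk P + K.card = n := by
  have hinj : Function.Injective fun t : ℂ => (t - c)⁻¹ :=
    inv_injective.comp (sub_left_injective)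
  obtain ⟨t, ⟨ht, htE⟩, htc⟩ := (((eventually_rank_eq_nrk P).and
    (hinj.tendsto_cofinite.eventually
      ((E.map Prod.fst).toFinset.finite_toSet.compl_mem_cofinite))).and
    ((Set.finite_singleton c).compl_mem_cofinite)).exists
  have htc : t - c ≠ 0 := sub_ne_zero.2 htc
  set ν := (t - c)⁻¹ with hν
  have hH : HH E ν 1 = 0 := by
    rw [HH, Multiset.sum_eq_zero]
    intro y hy
    obtain ⟨x, hx, rfl⟩ := Multiset.mem_map.1 hy
    refine if_neg fun hxν => htE ?_
    simp only [Finset.mem_coe, Multiset.mem_toFinset, Multiset.mem_map]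
    exact ⟨x, hx, hxν⟩
  have hX : (mob 1 (-ν) 0 1 (shiftAt c P)).1 = (-ν) • (P.1 - t • P.2) := by
    rw [shiftAt_eq]
    ext i j
    simp only [mob, Matrix.add_apply, Matrix.smul_apply, Matrix.sub_apply, smul_eq_mul, hν]
    field_simp
    ring
  have hr := nul_one_one_add_rank (mob 1 (-ν) 0 1 (shiftAt c P))
  rw [hX, Matrix.rank_smul_of_mem_nonZeroDivisors _
    (mem_nonZeroDivisors_of_ne_zero (neg_ne_zero.2 (inv_ne_zero htc))), ht] at hr
  have hc : Fintype.card (Idx l) = Fintype.card (Fin n) := by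
    rw [card_idx hl, hs, Fintype.card_fin]
  have h1 := ((h.mob 1 (-ν) 0 1).kdeg).nul_le hc.symm 1 1
  have h2 := ((h'.mob 1 (-ν) 0 1).kdeg).nul_le hc 1 1
  rw [nul_mob_canon_blocks hl, hH] at h1 h2
  omega

theorem act_mem_closure_orbC (P : Pencil n n) (S : Matrix (Fin n) (Fin n) ℂ) :
    act Sᵀ S P ∈ closure (Pencil.orbC P) := by
  have hne : ∀ᶠ ε in 𝓝[≠] (0 : ℂ), IsUnit (S + ε • 1) := by
    have hfin := Polynomial.finite_setOfPred_isRoot (-S).charpoly_monic.ne_zero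
    filter_upwards [nhdsNE_le_cofinite 0 hfin.compl_mem_cofinite] with ε hε
    rw [Matrix.isUnit_iff_isUnit_det, isUnit_iff_ne_zero]
    intro h
    refine hε ?_
    change Polynomial.eval ε _ = 0
    rw [Matrix.eval_charpoly, ← h, sub_neg_eq_add, add_comm, Matrix.scalar_apply,
      Matrix.smul_one_eq_diagonal]
  have hcont : Continuous fun ε : ℂ => act (S + ε • 1)ᵀ (S + ε • 1) P := by
    unfold act
    fun_prop
  have ht := (hcont.tendsto 0).mono_left (nhdsWithin_le_nhds (s := {0}ᶜ))
  rw [zero_smul, add_zero] at ht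
  refine mem_closure_of_tendsto ht ?_
  filter_upwards [hne] with ε hε
  exact ⟨_, hε, rfl, rfl⟩

theorem deg_of_mem_orbC {P Q : Pencil n n} (h : Q ∈ Pencil.orbC P) : Deg P Q := by
  obtain ⟨S, -, h1, h2⟩ := h
  exact Deg.of_eq S (Prod.ext h1 h2)

theorem deg_iff_orbC_subset {P Q : Pencil n n} :
    Deg P Q ↔ Pencil.orbC Q ⊆ closure (Pencil.orbC P) := by
  constructor
  · intro h R hR
    refine closure_minimal ?_ isClosed_closure (h.trans (deg_of_mem_orbC hR))
    rintro _ ⟨S, rfl⟩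
    exact act_mem_closure_orbC P S
  · intro h
    have hQ : Q ∈ Pencil.orbC Q := ⟨1, isUnit_one, by simp, by simp⟩
    refine closure_mono ?_ (h hQ)
    rintro _ ⟨S, -, h1, h2⟩
    exact ⟨S, Prod.ext h1 h2⟩

theorem nrk_eq_of_congruent {P Q : Pencil n n} (h : Pencil.Congruent P Q) : nrk P = nrk Q := by
  obtain ⟨S, hS, h1, h2⟩ := h
  obtain ⟨c, hP, hQ⟩ := ((eventually_rank_eq_nrk P).and (eventually_rank_eq_nrk Q)).exists
  rw [Matrix.isUnit_iff_isUnit_det] at hS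
  rw [← hP, ← hQ, ← h1, ← h2]
  have : Sᵀ * P.1 * S - c • (Sᵀ * P.2 * S) = Sᵀ * (P.1 - c • P.2) * S := by
    simp [Matrix.mul_sub, Matrix.sub_mul]
  rw [this, Matrix.rank_mul_eq_left_of_isUnit_det _ _ hS,
    Matrix.rank_mul_eq_right_of_isUnit_det _ _ (by rwa [Matrix.det_transpose])]

theorem skew_oplus_hyp {p q κ : Type} (X : Matrix p q ℂ) (Y : Matrix κ κ ℂ) (hY : Yᵀ = -Y) :
    (fromBlocks (fromBlocks 0 X (-Xᵀ) 0) 0 0 Y)ᵀ = -fromBlocks (fromBlocks 0 X (-Xᵀ) 0) 0 0 Y := by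
  simp [Matrix.fromBlocks_transpose, Matrix.fromBlocks_neg, hY]

theorem canon_skew (l : List Blk) : (canon l).1ᵀ = -(canon l).1 ∧ (canon l).2ᵀ = -(canon l).2 := by
  induction l with
  | nil => exact ⟨by simp [canon], by simp [canon]⟩
  | cons b l ih =>
    exact ⟨skew_oplus_hyp _ _ ih.1, skew_oplus_hyp _ _ ih.2⟩

theorem size_mod_two (K : Multiset ℕ) (E : Multiset (ℂ × ℕ)) : size K E % 2 = K.card % 2 := by
  rw [size, Multiset.sum_map_add, Multiset.sum_map_mul_left, Multiset.sum_map_mul_left]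
  simp

theorem exists_canon_shiftAt {P : Pencil n n} (hP : Pencil.IsSkew P) {c : ℂ}
    (hc : (P.1 - c • P.2).rank = nrk P) :
    ∃ (K : Multiset ℕ) (E : Multiset (ℂ × ℕ)) (l : List Blk),
      (l : Multiset Blk) = blocks K E ∧ size K E = n ∧ Deg (shiftAt c P) (canon l) ∧
      Deg (canon l) (shiftAt c P) ∧ nrk P + K.card = n := by
  obtain ⟨K, E, l, hl, hs, h, h'⟩ := exists_canon (shiftAt c P)
    (by rw [shiftAt_eq]; exact hP.2)
    (by rw [shiftAt_eq]; simp [hP.1, hP.2, sub_eq_add_neg, add_comm])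
    (fun s => by
      rw [shiftAt_eq]
      have : P.1 - c • P.2 + s • P.2 = P.1 - (c - s) • P.2 := by rw [sub_smul]; abel
      simp only [this, hc]
      exact rank_le_nrk P _)
  exact ⟨K, E, l, hl, hs, h, h', nrk_add_card hl hs h h'⟩

theorem exists_pencil (c : ℂ) {K : Multiset ℕ} {E : Multiset (ℂ × ℕ)} (hs : size K E = n) :
    ∃ (P : Pencil n n) (l : List Blk), (l : Multiset Blk) = blocks K E ∧ Pencil.IsSkew P ∧
      Deg (shiftAt c P) (canon l) ∧ Deg (canon l) (shiftAt c P) := by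
  have hl : (((blocks K E).toList : List Blk) : Multiset Blk) = blocks K E := by simp
  generalize (blocks K E).toList = l at hl
  let e : Fin n ≃ Idx l := Fintype.equivOfCardEq (by rw [card_idx hl, hs, Fintype.card_fin])
  obtain ⟨k1, k2⟩ := canon_skew l
  refine ⟨mob c 1 1 0 (sub e e (canon l)), l, hl, ?_, ?_, ?_⟩
  · have e1 : ((canon l).1.submatrix e e)ᵀ = -(canon l).1.submatrix e e := by
      rw [Matrix.transpose_submatrix, k1, Matrix.submatrix_neg]; rfl
    have e2 : ((canon l).2.submatrix e e)ᵀ = -(canon l).2.submatrix e e := by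
      rw [Matrix.transpose_submatrix, k2, Matrix.submatrix_neg]; rfl
    constructor
    · simp [mob, sub, e1, e2, add_comm]
    · simp [mob, sub, e1]
  · rw [shiftAt_mob]
    have := Deg.sub (sub e e (canon l)) e.symm
    simpa [sub] using this
  · rw [shiftAt_mob]
    exact Deg.sub _ _

theorem deg_of_deg_shiftAt {P Q : Pencil n n} {c : ℂ} (h : Deg (shiftAt c P) (shiftAt c Q)) :
    Deg P Q := by
  simpa only [mob_shiftAt] using h.mob c 1 1 0

end SkewPencil

open SkewPencil

/-- **Remark 3.3**: if `orbᶜ P1` covers `orbᶜ P2` for `n × n` skew-symmetric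
pencils, then `r_0(P2) - r_0(P1)` equals `0` or `2`, where `r_0(P) = n - nrk P`;
equivalently, `nrk P1 - nrk P2` equals `0` or `2`. -/
theorem nrk_drop_of_coversC {n : ℕ} (P1 P2 : Pencil n n)
    (h1 : Pencil.IsSkew P1) (h2 : Pencil.IsSkew P2)
    (hcov : Pencil.CoversC P1 P2) :
    ((n - nrk P2 = n - nrk P1) ∨ (n - nrk P2 = (n - nrk P1) + 2)) ∧
    ((nrk P1 = nrk P2) ∨ (nrk P1 = nrk P2 + 2)) := by
  obtain ⟨-, hsub, hbet⟩ := hcov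
  obtain ⟨c, hc1, hc2⟩ := ((eventually_rank_eq_nrk P1).and (eventually_rank_eq_nrk P2)).exists
  obtain ⟨K₁, E₁, l₁, hl₁, hs₁, d₁, d₁', hn₁⟩ := exists_canon_shiftAt h1 hc1
  obtain ⟨K₂, E₂, l₂, hl₂, hs₂, d₂, d₂', hn₂⟩ := exists_canon_shiftAt h2 hc2
  have hD := MDeg.mk (d₁'.trans (((deg_iff_orbC_subset.2 hsub).mob 0 1 1 (-c)).trans d₂))
  rw [hl₁, hl₂] at hD
  obtain ⟨hle, hex⟩ := exists_between (hs₁.trans hs₂.symm) hD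
  have hp₁ := size_mod_two K₁ E₁
  have hp₂ := size_mod_two K₂ E₂
  suffices ¬ K₁.card + 2 < K₂.card by omega
  intro hlt
  obtain ⟨K, E, hK, hs, m₁, m₂⟩ := hex (by omega)
  obtain ⟨P, l, hl, hP, d, d'⟩ := exists_pencil c (hs.trans hs₂)
  have hn := nrk_add_card hl (hs.trans hs₂) d d'
  refine hbet ⟨P, hP, fun h => ?_, fun h => ?_, deg_iff_orbC_subset.1 ?_, deg_iff_orbC_subset.1 ?_⟩
  · have := nrk_eq_of_congruent h
    omega
  · have := nrk_eq_of_congruent h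
    omega
  · exact deg_of_deg_shiftAt (d₁.trans ((m₁ _ _ hl₁ hl).trans d'))
  · exact deg_of_deg_shiftAt (d.trans ((m₂ _ _ hl hl₂).trans d₂'))
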